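/- Assume the uniform ellipticity condition (D3) and the regularity condition (R2), that the probability measure m on ℝ has a finite first moment, and that its cumulative distribution function H*m is C³ on ℝ, bounded together with its derivatives up to order three, with third derivative β-Hölder continuous (i.e., H*m belongs to the Hölder space H^{3+β}(ℝ)). Then for every finite T > 0, the unique weak solution F in 𝓕 of the Cauchy problem with initial condition H*m is C^{1,2} on [0,T]×ℝ and bounded together with its derivatives ∂_t F, ∂_x F, ∂²_x F; in particular F solves the Cauchy problem in the classical (pointwise) sense. -/

import Mathlib

open MeasureTheory Set Filter Topology Function
open scoped ENNReal

noncomputable section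

/-- `primitive f u = ∫₀^u f(v) dv`. -/
def primitive (f : ℝ → ℝ) : ℝ → ℝ := fun u => ∫ v in (0:ℝ)..u, f v

/-- The cumulative distribution function `H * μ` of a measure `μ` on `ℝ`. -/
def cdfOf (μ : MeasureTheory.Measure ℝ) : ℝ → ℝ := fun x => (μ (Set.Iic x)).toReal

/-- Pseudo-inverse of a cdf: `F⁻¹(u) = inf {x | F x > u}`. -/
def pinv (F : ℝ → ℝ) (u : ℝ) : ℝ := sInf {x : ℝ | u < F x}

/-- Wasserstein distance of order `p` between two cdfs, as an element of `[0,∞]`: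
`W_p(F,G) = (∫₀¹ |F⁻¹(u) - G⁻¹(u)|^p du)^(1/p)`. -/
def Wdist (p : ℝ) (F G : ℝ → ℝ) : ℝ≥0∞ :=
  (∫⁻ u in Set.Ioo (0:ℝ) 1, ENNReal.ofReal (|pinv F u - pinv G u| ^ p)) ^ (1/p)

/-- `F` is a weak solution of `∂ₜ F = (1/2) ∂ₓₓ (A (F)) - ∂ₓ (B (F))` with
initial condition `F₀`. -/
def IsWeakSolution (A B : ℝ → ℝ) (F₀ : ℝ → ℝ) (F : ℝ → ℝ → ℝ) : Prop :=
  ∀ g : ℝ → ℝ → ℝ, ContDiff ℝ (⊤ : ℕ∞) (Function.uncurry g) →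
    HasCompactSupport (Function.uncurry g) →
    ∀ t : ℝ, 0 ≤ t →
      ((∫ x : ℝ, g t x * F t x) - ∫ x : ℝ, g 0 x * F₀ x) =
        ∫ x : ℝ, ∫ s in (0:ℝ)..t,
          ((1/2) * A (F s x) * deriv (deriv (fun y => g s y)) x
            + B (F s x) * deriv (fun y => g s y) x
            + F s x * deriv (fun r => g r x) s)

/-- Membership in the class `𝓕`. -/
def MemF (F : ℝ → ℝ → ℝ) : Prop :=
  ∃ P : ℝ → ProbabilityMeasure ℝ,
    ContinuousOn P (Set.Ici 0) ∧
    (∀ t : ℝ, 0 ≤ t → Integrable (fun x => |x|) (P t : Measure ℝ)) ∧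
    (∀ T : ℝ, 0 < T → IntegrableOn (fun t => ∫ x, |x| ∂(P t : Measure ℝ)) (Set.Icc 0 T)) ∧
    (∀ t : ℝ, 0 ≤ t → ∀ x : ℝ, F t x = ((P t : Measure ℝ) (Set.Iic x)).toReal)

theorem int_lip_of_adj {v : ℤ → ℝ} {L : ℝ} (hv : ∀ i, |v (i+1) - v i| ≤ L) (i : ℤ) (k : ℕ) :
    |v (i + k) - v i| ≤ L * k := by
  induction k with
  | zero => simp
  | succ k ih =>
    have h1 := hv (i + k)
    have : v (i + ((k+1 : ℕ) : ℤ)) - v i = (v (i + k + 1) - v (i + k)) + (v (i + k) - v i) := by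
      push_cast; rw [← add_assoc]; ring
    rw [this]
    calc _ ≤ _ := abs_add_le _ _
      _ ≤ L + L * k := add_le_add h1 ih
      _ = _ := by push_cast; ring

theorem int_lip {v : ℤ → ℝ} {L : ℝ} (hv : ∀ i, |v (i+1) - v i| ≤ L) (i j : ℤ) :
    |v j - v i| ≤ L * |(j:ℝ) - i| := by
  rcases le_total i j with h | h
  · obtain ⟨k, rfl⟩ := Int.le.dest h
    have := int_lip_of_adj hv i k
    simpa using this
  · obtain ⟨k, rfl⟩ := Int.le.dest h
    have := int_lip_of_adj hv j k
    rw [abs_sub_comm]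
    simpa using this

/-- algebraic heart of the coupling, distance at least two -/
theorem coupling_alg {PI MI Pi Mi θ τ h C C1 K M z : ℝ} (hτ : 0 < τ) (hh : 0 < h)
    (hPI : θ ≤ PI) (hMI : θ ≤ MI) (hPi : θ ≤ Pi) (hMi : θ ≤ Mi)
    (hdI : |PI - MI| ≤ C * τ / h) (hdi : |Pi - Mi| ≤ C * τ / h)
    (hK : 0 ≤ K) (hz0 : 0 ≤ z) (hz : 2 * K * z ≤ M)
    (hcond : (2 * C * M + 2 * C1) * τ ≤ 6 * θ * K * h ^ 2) :
    (PI + Mi - 2 * θ) * (M * h - 2 * K * z * h - K * h ^ 2)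
      - (MI + Pi - 2 * θ) * (M * h - 2 * K * z * h + K * h ^ 2)
      + 2 * C1 * τ ≤ 6 * θ * K * h^2 := by
  have e1 : (PI + Mi - 2 * θ) * (M * h - 2 * K * z * h - K * h ^ 2)
      - (MI + Pi - 2 * θ) * (M * h - 2 * K * z * h + K * h ^ 2)
      = ((PI - MI) - (Pi - Mi)) * h * (M - 2 * K * z)
        - (PI + Mi + MI + Pi - 4 * θ) * (K * h^2) := by ring
  have h2 : 0 ≤ (PI + Mi + MI + Pi - 4 * θ) * (K * h^2) := by
    apply mul_nonneg (by linarith) (by positivity)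
  have h3 : ((PI - MI) - (Pi - Mi)) * h ≤ 2 * C * τ := by
    have : ((PI - MI) - (Pi - Mi)) ≤ 2 * (C * τ / h) := by
      have := abs_le.1 hdI; have := abs_le.1 hdi; linarith [this.1]
    calc _ ≤ 2 * (C * τ / h) * h := by gcongr
      _ = _ := by field_simp
  have hCτ : 0 ≤ C * τ := by
    have := (abs_nonneg _).trans hdI
    have : 0 ≤ C * τ / h * h := by positivity
    rwa [div_mul_cancel₀ _ hh.ne'] at this
  have h4 : ((PI - MI) - (Pi - Mi)) * h * (M - 2 * K * z) ≤ 2 * C * τ * M := by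
    calc _ ≤ 2 * C * τ * (M - 2 * K * z) := by
          apply mul_le_mul_of_nonneg_right h3 (by linarith)
      _ ≤ 2 * C * τ * M := by
          apply mul_le_mul_of_nonneg_left _ (by linarith)
          have : 0 ≤ K * z := by positivity
          linarith
  rw [e1]; nlinarith

theorem doubling_aux {h τ θ C C1 K0 L0 δ M K : ℝ} (hh : 0 < h) (hτ : 0 < τ)
    (hθ : 0 ≤ θ) (hδ : 0 < δ) (h2 : 2 * h ≤ δ) (hM : 0 ≤ M) (hKM : 4 * δ * K = M)
    (hcond : (2 * C * M + 2 * C1) * τ ≤ 6 * θ * K * h ^ 2)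
    (hML : 2 * L0 ≤ M) (hMK : 4 * K0 ≤ M * δ)
    {u P Q f : ℕ → ℤ → ℝ}
    (hu : ∀ n i, u (n+1) i = u n i + P n i * (u n (i+1) - u n i)
      + Q n i * (u n (i-1) - u n i) + τ * f n i)
    (hP : ∀ n i, θ ≤ P n i) (hQ : ∀ n i, θ ≤ Q n i) (hPQ : ∀ n i, P n i + Q n i ≤ 1/2)
    (hd : ∀ n i, |P n i - Q n i| ≤ C * τ / h) (hf : ∀ n i, |f n i| ≤ C1)
    (hK0 : ∀ n i, |u n i| ≤ K0) (hL0 : ∀ i, |u 0 (i+1) - u 0 i| ≤ L0 * h) :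
    ∀ n : ℕ, ∀ k : ℕ, (k:ℝ) * h ≤ 2 * δ → ∀ i : ℤ,
      u n (i + k) - u n i ≤ M * (k * h) - K * (k * h)^2 := by
  have hK : 0 ≤ K := by
    by_contra hc; push Not at hc; nlinarith
  have hlow : ∀ z : ℝ, 0 ≤ z → z ≤ 2 * δ → M * z / 2 ≤ M * z - K * z^2 := by
    intro z hz0 hz
    have : K * z * z ≤ K * z * (2 * δ) := by gcongr
    nlinarith
  intro n
  induction n with
  | zero =>
    intro k hk i
    have h1 := (le_abs_self _).trans (int_lip_of_adj hL0 i k)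
    have h3 := hlow (k*h) (by positivity) hk
    have : 2 * L0 * (k * h) ≤ M * (k*h) := by gcongr
    linarith
  | succ n ih =>
    intro k hk i
    have hz0 : (0:ℝ) ≤ k * h := by positivity
    by_cases hkδ : δ ≤ k * h
    · have h3 := hlow (k*h) (by positivity) hk
      have h4 := abs_le.1 (hK0 (n+1) (i+k))
      have h5 := abs_le.1 (hK0 (n+1) i)
      have : M * δ ≤ M * (k*h) := by gcongr
      linarith
    · push Not at hkδ
      have hz : 2 * K * (k*h) ≤ M := by
        rw [← hKM]
        have : K * (k * h) ≤ K * (2 * δ) := by gcongr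
        linarith
      set I : ℤ := i + k with hI
      have key := coupling_alg hτ hh (hP n I) (hQ n I) (hP n i) (hQ n i) (hd n I) (hd n i)
        hK hz0 hz hcond
      have hfd : τ * (f n I - f n i) ≤ 2 * C1 * τ := by
        have := abs_le.1 (hf n I)
        have := abs_le.1 (hf n i)
        nlinarith
      have a1 := hP n I
      have a2 := hQ n I
      have a3 := hP n i
      have a4 := hQ n i
      have a5 := hPQ n I
      have a6 := hPQ n i
      have hexp : u (n+1) I - u (n+1) i =
          (1 - (P n I + Q n I + P n i + Q n i - 2 * θ)) * (u n I - u n i)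
          + θ * (u n (I+1) - u n (i-1)) + θ * (u n (I-1) - u n (i+1))
          + (P n I - θ) * (u n (I+1) - u n i) + (Q n I - θ) * (u n (I-1) - u n i)
          + (P n i - θ) * (u n I - u n (i+1)) + (Q n i - θ) * (u n I - u n (i-1))
          + τ * (f n I - f n i) := by
        rw [hu, hu]; ring
      rw [hexp]
      rcases Nat.lt_or_ge k 2 with hk2 | hk2
      · rcases Nat.lt_or_ge k 1 with hk1 | hk1
        · have : k = 0 := by omega
          subst this
          have hIi : I = i := by simp [hI]
          rw [hIi]
          simp only [Nat.cast_zero]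
          nlinarith
        · have : k = 1 := by omega
          subst this
          have hIi : I = i + 1 := by simp [hI]
          have b0 : u n I - u n i ≤ M * h - K * h^2 := by
            have := ih 1 (by simpa using hk) i
            rw [hIi]
            simpa using this
          have b1 : u n (I+1) - u n (i-1) ≤ M * (3*h) - K * (3*h)^2 := by
            have := ih 3 (by push_cast at *; linarith) (i-1)
            rw [show i - 1 + ((3:ℕ):ℤ) = I + 1 by rw [hIi]; push_cast; ring] at this
            simpa using this
          have b3 : u n (I+1) - u n i ≤ M * (2*h) - K * (2*h)^2 := by
            have := ih 2 (by push_cast at *; linarith) i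
            rw [show i + ((2:ℕ):ℤ) = I + 1 by rw [hIi]; push_cast; ring] at this
            simpa using this
          have b6 : u n I - u n (i-1) ≤ M * (2*h) - K * (2*h)^2 := by
            have := ih 2 (by push_cast at *; linarith) (i-1)
            rw [show i - 1 + ((2:ℕ):ℤ) = I by rw [hIi]; push_cast; ring] at this
            simpa using this
          have e1 : u n (I-1) = u n i := by rw [hIi]; simp
          have e2 : u n (i+1) = u n I := by rw [hIi]
          rw [e1, e2]
          have c0 := mul_le_mul_of_nonneg_left b0
            (show 0 ≤ 1 - (P n I + Q n I + P n i + Q n i - 2 * θ) - θ by linarith)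
          have c1 := mul_le_mul_of_nonneg_left b1 hθ
          have c3 := mul_le_mul_of_nonneg_left b3 (sub_nonneg.2 a1)
          have c6 := mul_le_mul_of_nonneg_left b6 (sub_nonneg.2 a4)
          simp only [Nat.cast_one, one_mul] at *
          nlinarith
      · obtain ⟨k, rfl⟩ : ∃ k', k = k' + 2 := ⟨k - 2, by omega⟩
        have ihk : ∀ (l : ℕ) (p q : ℤ), p = q + l → (l:ℝ) * h ≤ 2 * δ →
            u n p - u n q ≤ M * (l * h) - K * (l * h)^2 := by
          rintro l p q rfl hl
          exact ih l hl q
        have b0 := ih (k+2) hk i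
        rw [← hI] at b0
        have b1 := ihk (k+4) (I+1) (i-1) (by rw [hI]; push_cast; ring) (by push_cast at *; linarith)
        have b2 := ihk k (I-1) (i+1) (by rw [hI]; push_cast; ring) (by push_cast at *; linarith)
        have b3 := ihk (k+3) (I+1) i (by rw [hI]; push_cast; ring) (by push_cast at *; linarith)
        have b4 := ihk (k+1) (I-1) i (by rw [hI]; push_cast; ring) (by push_cast at *; linarith)
        have b5 := ihk (k+1) I (i+1) (by rw [hI]; push_cast; ring) (by push_cast at *; linarith)
        have b6 := ihk (k+3) I (i-1) (by rw [hI]; push_cast; ring) (by push_cast at *; linarith)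
        have c0 := mul_le_mul_of_nonneg_left b0
            (show 0 ≤ 1 - (P n I + Q n I + P n i + Q n i - 2 * θ) by linarith)
        have c1 := mul_le_mul_of_nonneg_left b1 hθ
        have c2 := mul_le_mul_of_nonneg_left b2 hθ
        have c3 := mul_le_mul_of_nonneg_left b3 (sub_nonneg.2 a1)
        have c4 := mul_le_mul_of_nonneg_left b4 (sub_nonneg.2 a2)
        have c5 := mul_le_mul_of_nonneg_left b5 (sub_nonneg.2 a3)
        have c6 := mul_le_mul_of_nonneg_left b6 (sub_nonneg.2 a4)
        have hθK : 0 ≤ θ * K * h^2 := by positivity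
        push_cast at c0 c1 c2 c3 c4 c5 c6 key ⊢
        linarith

/-- Lipschitz estimate by discrete reflection coupling, with uniform constants. -/
theorem doubling {θ0 C C1 K0 L0 : ℝ} (hθ0 : 0 < θ0) (hC : 0 ≤ C) (hC1 : 0 ≤ C1)
    (hK00 : 0 ≤ K0) (hL00 : 0 ≤ L0) :
    ∃ M δ : ℝ, 0 ≤ M ∧ 0 < δ ∧ ∀ (h τ : ℝ) (u P Q f : ℕ → ℤ → ℝ), 0 < h → h ≤ δ → 0 < τ →
    (∀ n i, u (n+1) i = u n i + P n i * (u n (i+1) - u n i)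
      + Q n i * (u n (i-1) - u n i) + τ * f n i) →
    (∀ n i, θ0 * τ / h^2 ≤ P n i) → (∀ n i, θ0 * τ / h^2 ≤ Q n i) →
    (∀ n i, P n i + Q n i ≤ 1/2) →
    (∀ n i, |P n i - Q n i| ≤ C * τ / h) → (∀ n i, |f n i| ≤ C1) →
    (∀ n i, |u n i| ≤ K0) → (∀ i, |u 0 (i+1) - u 0 i| ≤ L0 * h) →
    ∀ n i, |u n (i+1) - u n i| ≤ M * h := by
  set δ : ℝ := 3 * θ0 / (4 * (C+1)) with hδ
  have hδ0 : 0 < δ := by positivity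
  set M : ℝ := C1 + 2 * L0 + 4 * K0 / δ with hM
  have hM0 : 0 ≤ M := by positivity
  refine ⟨M, δ/2, hM0, by positivity, ?_⟩
  intro h τ u P Q f hh hhδ hτ hu hP hQ hPQ hd hf hK0 hL0 n i
  have hcond : (2 * C * M + 2 * C1) * τ ≤ 6 * (θ0 * τ / h^2) * (M / (4*δ)) * h ^ 2 := by
    have : 6 * (θ0 * τ / h^2) * (M / (4*δ)) * h ^ 2 = 2 * (C+1) * M * τ := by
      rw [hδ]; field_simp; ring
    rw [this]
    have : C1 ≤ M := by
      have : 0 ≤ 4 * K0 / δ := by positivity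
      linarith
    nlinarith
  have hML : 2 * L0 ≤ M := by
    have : 0 ≤ 4 * K0 / δ := by positivity
    linarith
  have hMK : 4 * K0 ≤ M * δ := by
    have : 4 * K0 = 4 * K0 / δ * δ := by field_simp
    rw [this]; gcongr; linarith
  have main := fun (u f : ℕ → ℤ → ℝ) hu hf hK0 hL0 =>
    doubling_aux (u := u) (f := f) (K0 := K0) (L0 := L0) (K := M / (4*δ)) hh hτ (by positivity)
    hδ0 (by linarith) hM0 (by field_simp) hcond hML hMK hu hP hQ hPQ hd hf hK0 hL0 n 1
      (by push_cast; linarith) i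
  have m1 := main u f hu hf hK0 hL0
  have m2 := main (fun n i => - u n i) (fun n i => - f n i)
    (by intro n i; rw [hu]; ring) (by intro n i; rw [abs_neg]; exact hf n i)
    (by intro n i; rw [abs_neg]; exact hK0 n i)
    (by intro i; rw [show -u 0 (i+1) - -u 0 i = -(u 0 (i+1) - u 0 i) by ring, abs_neg]; exact hL0 i)
  have hp : 0 ≤ M / (4*δ) * ((1:ℕ) * h)^2 := by positivity
  push_cast at m1 m2 hp
  rw [abs_le]; constructor <;> linarith

/-- explicit finite difference scheme for `w_t = (1/2) α(w) w_xx - β(w) w_x` -/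
def sch (α β : ℝ → ℝ) (h τ : ℝ) (v : ℤ → ℝ) : ℕ → ℤ → ℝ
  | 0 => v
  | n+1 => fun i => sch α β h τ v n i + τ *
      (1/2 * α (sch α β h τ v n i) * ((sch α β h τ v n (i+1) - 2 * sch α β h τ v n i
          + sch α β h τ v n (i-1)) / h^2)
        - β (sch α β h τ v n i) * ((sch α β h τ v n (i+1) - sch α β h τ v n (i-1)) / (2*h)))

/-- hypotheses on the coefficients -/
structure CoefHyp (α β : ℝ → ℝ) (c Ab Bb Λ : ℝ) : Prop where
  hc : 0 < c
  hαl : ∀ u, c ≤ α u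
  hαu : ∀ u, α u ≤ Ab
  hβ : ∀ u, |β u| ≤ Bb
  hΛ : 0 ≤ Λ
  hαL : ∀ u v, |α u - α v| ≤ Λ * |u - v|
  hβL : ∀ u v, |β u - β v| ≤ Λ * |u - v|

theorem abs_mul_le' {x y a b : ℝ} (hx : |x| ≤ a) (hy : |y| ≤ b) : |x * y| ≤ a * b := by
  rw [abs_mul]
  exact mul_le_mul hx hy (abs_nonneg _) ((abs_nonneg _).trans hx)

/-- bounds on initial grid data -/
structure InitHyp (v : ℤ → ℝ) (h K0 L0 : ℝ) : Prop where
  h0 : ∀ i, 0 ≤ v i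
  hK : ∀ i, v i ≤ K0
  h1 : ∀ i, |v (i+1) - v i| ≤ L0 * h
  h2 : ∀ i, |v (i+1) - 2 * v i + v (i-1)| ≤ L0 * h^2
  h3 : ∀ i, |(v (i+2) - 2 * v (i+1) + v i) - (v (i+1) - 2 * v i + v (i-1))| ≤ L0 * h^3

structure EstHyp (w : ℕ → ℤ → ℝ) (h τ K0 C : ℝ) : Prop where
  h0 : ∀ n i, 0 ≤ w n i
  hK : ∀ n i, w n i ≤ K0
  h1 : ∀ n i, |w n (i+1) - w n i| ≤ C * h
  h2 : ∀ n i, |w n (i+1) - 2 * w n i + w n (i-1)| ≤ C * h^2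
  h3 : ∀ n i, |(w n (i+2) - 2 * w n (i+1) + w n i) - (w n (i+1) - 2 * w n i + w n (i-1))| ≤ C * h^3
  ht : ∀ n i, |w (n+1) i - w n i| ≤ C * τ

section
variable {α β : ℝ → ℝ} {c Ab Bb Λ : ℝ}

theorem sch_range (H : CoefHyp α β c Ab Bb Λ) {lam h : ℝ} (hl : 0 < lam) (hlA : lam * Ab ≤ 1/4)
    (hh : 0 < h) (hhB : h * Bb ≤ c / 2) {v : ℤ → ℝ} {K0 : ℝ} (h0 : ∀ i, 0 ≤ v i)
    (hK : ∀ i, v i ≤ K0) : ∀ n i, 0 ≤ sch α β h (lam * h^2) v n i ∧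
      sch α β h (lam * h^2) v n i ≤ K0 := by
  intro n
  induction n with
  | zero => exact fun i => ⟨h0 i, hK i⟩
  | succ n ih =>
    intro i
    set w := sch α β h (lam * h^2) v n with hw
    have e : sch α β h (lam * h^2) v (n+1) i =
        (1 - lam * α (w i)) * w i + (lam / 2 * α (w i) - lam * h / 2 * β (w i)) * w (i+1)
        + (lam / 2 * α (w i) + lam * h / 2 * β (w i)) * w (i-1) := by
      simp only [sch, ← hw]; field_simp; ring
    have hb := abs_le.1 (H.hβ (w i))
    have ha := H.hαl (w i)
    have ha' := H.hαu (w i)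
    have hc := H.hc
    have b1 : h * β (w i) ≤ c / 2 := by nlinarith
    have b2 : -(c/2) ≤ h * β (w i) := by nlinarith
    have hp : 0 ≤ lam / 2 * α (w i) - lam * h / 2 * β (w i) := by nlinarith
    have hq : 0 ≤ lam / 2 * α (w i) + lam * h / 2 * β (w i) := by nlinarith
    have hs : 0 ≤ 1 - lam * α (w i) := by nlinarith
    have := ih i; have := ih (i+1); have := ih (i-1)
    rw [e]
    constructor
    · have := mul_nonneg hs (ih i).1
      have := mul_nonneg hp (ih (i+1)).1
      have := mul_nonneg hq (ih (i-1)).1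
      linarith
    · have := mul_le_mul_of_nonneg_left (ih i).2 hs
      have := mul_le_mul_of_nonneg_left (ih (i+1)).2 hp
      have := mul_le_mul_of_nonneg_left (ih (i-1)).2 hq
      linarith

theorem sch_lip1 (H : CoefHyp α β c Ab Bb Λ) {lam K0 L0 : ℝ} (hl : 0 < lam)
    (hlA : lam * Ab ≤ 1/4) (hL0 : 0 ≤ L0) (hK0 : 0 ≤ K0) :
    ∃ M δ : ℝ, 0 ≤ M ∧ 0 < δ ∧ ∀ h, 0 < h → h ≤ δ → h * Bb ≤ c/2 → ∀ v, InitHyp v h K0 L0 →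
      ∀ n i, |sch α β h (lam * h^2) v n (i+1) - sch α β h (lam * h^2) v n i| ≤ M * h := by
  have hc := H.hc
  have hBb : 0 ≤ Bb := (abs_nonneg _).trans (H.hβ 0)
  obtain ⟨M, δ, hM, hδ, D⟩ := doubling (θ0 := c/4) (C := Bb) (C1 := 0) (K0 := K0) (L0 := L0)
    (by positivity) hBb le_rfl hK0 hL0
  refine ⟨M, δ, hM, hδ, fun h hh hhδ hhB v hv => ?_⟩
  have hr := sch_range H hl hlA hh hhB hv.h0 hv.hK
  set w := sch α β h (lam * h^2) v with hw
  refine D h (lam * h^2) w (fun n i => lam / 2 * α (w n i) - lam * h / 2 * β (w n i))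
    (fun n i => lam / 2 * α (w n i) + lam * h / 2 * β (w n i)) (fun _ _ => 0) hh hhδ (by positivity)
    ?_ ?_ ?_ ?_ ?_ ?_ ?_ ?_
  · intro n i
    rw [hw]; simp only [sch, ← hw]; field_simp; ring
  · intro n i
    have : c / 4 * (lam * h^2) / h^2 = c/4 * lam := by field_simp
    rw [this]
    have hb := abs_le.1 (H.hβ (w n i))
    have ha := H.hαl (w n i)
    have b1 : h * β (w n i) ≤ c / 2 := by nlinarith
    nlinarith
  · intro n i
    have : c / 4 * (lam * h^2) / h^2 = c/4 * lam := by field_simp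
    rw [this]
    have hb := abs_le.1 (H.hβ (w n i))
    have ha := H.hαl (w n i)
    have b1 : -(c/2) ≤ h * β (w n i) := by nlinarith
    nlinarith
  · intro n i
    have ha' := H.hαu (w n i)
    nlinarith
  · intro n i
    have : Bb * (lam * h^2) / h = lam * h * Bb := by field_simp
    rw [this, show lam / 2 * α (w n i) - lam * h / 2 * β (w n i)
      - (lam / 2 * α (w n i) + lam * h / 2 * β (w n i)) = - (lam * h * β (w n i)) by ring, abs_neg,
      abs_mul, abs_of_pos (by positivity : 0 < lam * h)]
    exact mul_le_mul_of_nonneg_left (H.hβ _) (by positivity)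
  · intro n i; simp
  · intro n i; rw [abs_of_nonneg (hr n i).1]; exact (hr n i).2
  · intro i; exact hv.h1 i

theorem sch_lip2 (H : CoefHyp α β c Ab Bb Λ) {lam K0 L0 M1 : ℝ} (hl : 0 < lam)
    (hlA : lam * Ab ≤ 1/8) (hL0 : 0 ≤ L0) (hM1 : 0 ≤ M1) :
    ∃ M δ : ℝ, 0 ≤ M ∧ 0 < δ ∧ ∀ h, 0 < h → h ≤ δ → h * Bb ≤ c/2 → ∀ v, InitHyp v h K0 L0 →
      (∀ n i, |sch α β h (lam * h^2) v n (i+1) - sch α β h (lam * h^2) v n i| ≤ M1 * h) →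
      ∀ n i, |sch α β h (lam * h^2) v n (i+1) - 2 * sch α β h (lam * h^2) v n i
        + sch α β h (lam * h^2) v n (i-1)| ≤ M * h^2 := by
  have hc := H.hc
  have hΛ := H.hΛ
  have hBb : 0 ≤ Bb := (abs_nonneg _).trans (H.hβ 0)
  have hcA : c ≤ Ab := (H.hαl 0).trans (H.hαu 0)
  obtain ⟨M, δ, hM, hδ, D⟩ := doubling (θ0 := c/4) (C := 1/2 * Λ * M1 + Bb) (C1 := Λ * M1 * M1)
    (K0 := M1) (L0 := L0) (by positivity) (by positivity) (by positivity) hM1 hL0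
  refine ⟨M, δ, hM, hδ, fun h hh hhδ hhB v hv hq1 => ?_⟩
  set w := sch α β h (lam * h^2) v with hw
  have hst : ∀ n i, w (n+1) i = w n i + lam * h^2 *
      (1/2 * α (w n i) * ((w n (i+1) - 2 * w n i + w n (i-1)) / h^2)
        - β (w n i) * ((w n (i+1) - w n (i-1)) / (2*h))) := by
    intro n i; rw [hw]; simp only [sch]
  have hq1' : ∀ n i, |(w n (i+1) - w n i)/h| ≤ M1 := by
    intro n i; rw [abs_div, abs_of_pos hh, div_le_iff₀ hh]; exact hq1 n i
  have key := D h (lam * h^2) (fun n i => (w n (i+1) - w n i)/h)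
    (fun n i => lam / 2 * α (w n (i+1)) - lam * h / 2 * β (w n (i+1)))
    (fun n i => lam / 2 * α (w n i) + lam * h / 2 * β (w n i))
    (fun n i => - ((β (w n (i+1)) - β (w n i))/h) * ((w n (i+1) - w n i)/h)) hh hhδ (by positivity)
    ?_ ?_ ?_ ?_ ?_ ?_ ?_ ?_
  · intro n i
    have := key n (i-1)
    simp only [sub_add_cancel] at this
    rw [← sub_div, abs_div, abs_of_pos hh, div_le_iff₀ hh] at this
    calc _ = |w n (i+1) - w n i - (w n i - w n (i-1))| := by congr 1; ring
      _ ≤ _ := this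
      _ = _ := by ring
  · intro n i
    simp only [hst, add_sub_cancel_right, sub_add_cancel]
    field_simp; ring
  · intro n i
    have : c / 4 * (lam * h^2) / h^2 = c/4 * lam := by field_simp
    rw [this]
    have hb := abs_le.1 (H.hβ (w n (i+1)))
    have ha := H.hαl (w n (i+1))
    have b1 : h * β (w n (i+1)) ≤ c / 2 := by nlinarith
    nlinarith
  · intro n i
    have : c / 4 * (lam * h^2) / h^2 = c/4 * lam := by field_simp
    rw [this]
    have hb := abs_le.1 (H.hβ (w n i))
    have ha := H.hαl (w n i)
    have b1 : -(c/2) ≤ h * β (w n i) := by nlinarith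
    nlinarith
  · intro n i
    have ha' := H.hαu (w n i)
    have ha'' := H.hαu (w n (i+1))
    have hb := abs_le.1 (H.hβ (w n (i+1)))
    have hb' := abs_le.1 (H.hβ (w n i))
    have b1 : h * β (w n i) ≤ c / 2 := by nlinarith
    have b2 : -(c/2) ≤ h * β (w n (i+1)) := by nlinarith
    have : lam * c ≤ lam * Ab := by gcongr
    nlinarith
  · intro n i
    have : (1/2 * Λ * M1 + Bb) * (lam * h^2) / h = lam / 2 * (Λ * (M1 * h)) + lam * h / 2 * (Bb + Bb) := by
      field_simp; ring
    rw [this, show lam / 2 * α (w n (i+1)) - lam * h / 2 * β (w n (i+1))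
      - (lam / 2 * α (w n i) + lam * h / 2 * β (w n i)) =
      lam / 2 * (α (w n (i+1)) - α (w n i)) - lam * h / 2 * (β (w n (i+1)) + β (w n i)) by ring]
    refine (abs_sub _ _).trans (add_le_add ?_ ?_)
    · rw [abs_mul, abs_of_pos (by positivity : 0 < lam/2)]
      refine mul_le_mul_of_nonneg_left ?_ (by positivity)
      exact (H.hαL _ _).trans (mul_le_mul_of_nonneg_left (hq1 n i) hΛ)
    · rw [abs_mul, abs_of_pos (by positivity : 0 < lam*h/2)]
      refine mul_le_mul_of_nonneg_left ?_ (by positivity)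
      exact (abs_add_le _ _).trans (add_le_add (H.hβ _) (H.hβ _))
  · intro n i
    refine abs_mul_le' ?_ (hq1' n i)
    rw [abs_neg, abs_div, abs_of_pos hh, div_le_iff₀ hh]
    refine (H.hβL _ _).trans ?_
    rw [mul_assoc]
    exact mul_le_mul_of_nonneg_left (hq1 n i) hΛ
  · exact hq1'
  · intro i
    have := hv.h2 (i+1)
    rw [← sub_div, abs_div, abs_of_pos hh, div_le_iff₀ hh]
    simp only [add_sub_cancel_right] at this
    calc _ = |v (i+1+1) - 2 * v (i+1) + v i| := by congr 1; simp only [hw, sch]; ring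
      _ ≤ _ := this
      _ = _ := by ring

end

section
variable {α β : ℝ → ℝ} {c Ab Bb Λ : ℝ}

theorem sch_step (α β : ℝ → ℝ) {h τ : ℝ} (hτ : 0 < τ) (v : ℤ → ℝ) (n : ℕ) (i : ℤ) :
    (sch α β h τ v (n+1) i - sch α β h τ v n i) / τ =
      1/2 * α (sch α β h τ v n i) * ((sch α β h τ v n (i+1) - 2 * sch α β h τ v n i
          + sch α β h τ v n (i-1)) / h^2)
        - β (sch α β h τ v n i) * ((sch α β h τ v n (i+1) - sch α β h τ v n (i-1)) / (2*h)) := by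
  rw [div_eq_iff hτ.ne']
  simp only [sch]; ring

theorem E_bound {w : ℤ → ℝ} {M1 h : ℝ} (hh : 0 < h) (h1 : ∀ i, |w (i+1) - w i| ≤ M1 * h) (i : ℤ) :
    |(w (i+1) - w (i-1)) / (2*h)| ≤ M1 := by
  rw [abs_div, abs_of_pos (by positivity : 0 < 2*h), div_le_iff₀ (by positivity)]
  have a := h1 i
  have b := h1 (i-1)
  simp only [sub_add_cancel] at b
  calc _ = |(w (i+1) - w i) + (w i - w (i-1))| := by congr 1; ring
    _ ≤ _ := (abs_add_le _ _).trans (add_le_add a b)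
    _ = _ := by ring

theorem D_bound {w : ℤ → ℝ} {M2 h : ℝ} (hh : 0 < h)
    (h2 : ∀ i, |w (i+1) - 2 * w i + w (i-1)| ≤ M2 * h^2) (i : ℤ) :
    |(w (i+1) - 2 * w i + w (i-1)) / h^2| ≤ M2 := by
  rw [abs_div, abs_of_pos (by positivity : 0 < h^2), div_le_iff₀ (by positivity)]
  exact h2 i

/-- Lipschitz property of the first difference quotient -/
theorem E_lip {w : ℤ → ℝ} {M2 h : ℝ} (hh : 0 < h)
    (h2 : ∀ i, |w (i+1) - 2 * w i + w (i-1)| ≤ M2 * h^2) (i : ℤ) :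
    |(w (i+1+1) - w (i+1-1)) / (2*h) - (w (i+1) - w (i-1)) / (2*h)| ≤ M2 * h := by
  rw [← sub_div, abs_div, abs_of_pos (by positivity : 0 < 2*h), div_le_iff₀ (by positivity)]
  have a := h2 i
  have b := h2 (i+1)
  simp only [add_sub_cancel_right] at b ⊢
  calc _ = |(w (i+1+1) - 2 * w (i+1) + w i) + (w (i+1) - 2 * w i + w (i-1))| := by congr 1; ring
    _ ≤ _ := (abs_add_le _ _).trans (add_le_add b a)
    _ = _ := by ring

theorem sch_lip3 (H : CoefHyp α β c Ab Bb Λ) {lam K0 L0 M1 M2 : ℝ} (hl : 0 < lam)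
    (hlA : lam * Ab ≤ 1/8) (hL0 : 0 ≤ L0) (hM1 : 0 ≤ M1) (hM2 : 0 ≤ M2) :
    ∃ M δ : ℝ, 0 ≤ M ∧ 0 < δ ∧ ∀ h, 0 < h → h ≤ δ → h * Bb ≤ c/2 → ∀ v, InitHyp v h K0 L0 →
      (∀ n i, |sch α β h (lam * h^2) v n (i+1) - sch α β h (lam * h^2) v n i| ≤ M1 * h) →
      (∀ n i, |sch α β h (lam * h^2) v n (i+1) - 2 * sch α β h (lam * h^2) v n i
        + sch α β h (lam * h^2) v n (i-1)| ≤ M2 * h^2) →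
      ∀ n i, |(sch α β h (lam * h^2) v (n+1) (i+1) - sch α β h (lam * h^2) v n (i+1)) / (lam * h^2)
        - (sch α β h (lam * h^2) v (n+1) i - sch α β h (lam * h^2) v n i) / (lam * h^2)| ≤ M * h := by
  have hc := H.hc
  have hΛ := H.hΛ
  have hBb : 0 ≤ Bb := (abs_nonneg _).trans (H.hβ 0)
  have hcA : c ≤ Ab := (H.hαl 0).trans (H.hαu 0)
  have hAb : 0 ≤ Ab := hc.le.trans hcA
  have hαabs : ∀ u, |α u| ≤ Ab := fun u => by
    rw [abs_of_nonneg (hc.le.trans (H.hαl u))]; exact H.hαu u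
  set R := 1/2 * Ab * M2 + Bb * M1 with hR
  have hR0 : 0 ≤ R := by positivity
  obtain ⟨M, δ, hM, hδ, D⟩ := doubling (θ0 := c/4) (C := Bb)
    (C1 := 1/2 * (Λ * R) * M2 + Λ * R * M1)
    (K0 := R) (L0 := 1/2 * (Λ * L0 * L0) + 1/2 * (Ab * L0) + (Λ * L0 * L0 + Bb * L0))
    (by positivity) hBb (by positivity) (by positivity) (by positivity)
  refine ⟨M, δ, hM, hδ, fun h hh hhδ hhB v hv hq1 hq2 => ?_⟩
  have hτ : 0 < lam * h^2 := by positivity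
  have hst := fun n i => sch_step α β hτ v n i (h := h)
  set w := sch α β h (lam * h^2) v with hw
  have hw0 : w 0 = v := by rw [hw]; rfl
  have hrb : ∀ n i, |(w (n+1) i - w n i) / (lam * h^2)| ≤ R := by
    intro n i
    rw [hst]
    refine (abs_sub _ _).trans (add_le_add ?_ ?_)
    · rw [mul_assoc, abs_mul, abs_of_pos (by norm_num : (0:ℝ) < 1/2), mul_assoc]
      exact mul_le_mul_of_nonneg_left (abs_mul_le' (hαabs _) (D_bound hh (hq2 n) i)) (by norm_num)
    · exact abs_mul_le' (H.hβ _) (E_bound hh (hq1 n) i)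
  have hrb' : ∀ n i, |w (n+1) i - w n i| ≤ R * (lam * h^2) := by
    intro n i
    have := hrb n i
    rwa [abs_div, abs_of_pos hτ, div_le_iff₀ hτ] at this
  refine D h (lam * h^2) (fun n i => (w (n+1) i - w n i)/(lam * h^2))
    (fun n i => lam / 2 * α (w (n+1) i) - lam * h / 2 * β (w (n+1) i))
    (fun n i => lam / 2 * α (w (n+1) i) + lam * h / 2 * β (w (n+1) i))
    (fun n i => 1/2 * ((α (w (n+1) i) - α (w n i))/(lam * h^2))
        * ((w n (i+1) - 2 * w n i + w n (i-1)) / h^2)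
      - ((β (w (n+1) i) - β (w n i))/(lam * h^2)) * ((w n (i+1) - w n (i-1)) / (2*h)))
      hh hhδ hτ ?_ ?_ ?_ ?_ ?_ ?_ ?_ ?_
  · intro n i
    have e1 := hst (n+1) i
    have e2 := hst n i
    rw [e1]
    have e3 : 1/2 * α (w (n+1) i) * ((w (n+1) (i+1) - 2 * w (n+1) i + w (n+1) (i-1)) / h^2)
        - β (w (n+1) i) * ((w (n+1) (i+1) - w (n+1) (i-1)) / (2*h)) =
        (1/2 * α (w n i) * ((w n (i+1) - 2 * w n i + w n (i-1)) / h^2)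
        - β (w n i) * ((w n (i+1) - w n (i-1)) / (2*h)))
        + (lam / 2 * α (w (n+1) i) - lam * h / 2 * β (w (n+1) i)) *
          ((w (n+1) (i+1) - w n (i+1))/(lam * h^2) - (w (n+1) i - w n i)/(lam * h^2))
        + (lam / 2 * α (w (n+1) i) + lam * h / 2 * β (w (n+1) i)) *
          ((w (n+1) (i-1) - w n (i-1))/(lam * h^2) - (w (n+1) i - w n i)/(lam * h^2))
        + lam * h^2 * (1/2 * ((α (w (n+1) i) - α (w n i))/(lam * h^2))
        * ((w n (i+1) - 2 * w n i + w n (i-1)) / h^2)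
      - ((β (w (n+1) i) - β (w n i))/(lam * h^2)) * ((w n (i+1) - w n (i-1)) / (2*h))) := by
      field_simp; ring
    rw [e3, ← e2]
  · intro n i
    have : c / 4 * (lam * h^2) / h^2 = c/4 * lam := by field_simp
    rw [this]
    have hb := abs_le.1 (H.hβ (w (n+1) i))
    have ha := H.hαl (w (n+1) i)
    have b1 : h * β (w (n+1) i) ≤ c / 2 := by nlinarith
    nlinarith
  · intro n i
    have : c / 4 * (lam * h^2) / h^2 = c/4 * lam := by field_simp
    rw [this]
    have hb := abs_le.1 (H.hβ (w (n+1) i))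
    have ha := H.hαl (w (n+1) i)
    have b1 : -(c/2) ≤ h * β (w (n+1) i) := by nlinarith
    nlinarith
  · intro n i
    have ha' := H.hαu (w (n+1) i)
    nlinarith
  · intro n i
    have : Bb * (lam * h^2) / h = lam * h * Bb := by field_simp
    rw [this, show lam / 2 * α (w (n+1) i) - lam * h / 2 * β (w (n+1) i)
      - (lam / 2 * α (w (n+1) i) + lam * h / 2 * β (w (n+1) i)) = - (lam * h * β (w (n+1) i)) by ring,
      abs_neg, abs_mul, abs_of_pos (by positivity : 0 < lam * h)]
    exact mul_le_mul_of_nonneg_left (H.hβ _) (by positivity)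
  · intro n i
    refine (abs_sub _ _).trans (add_le_add ?_ ?_)
    · refine abs_mul_le' ?_ (D_bound hh (hq2 n) i)
      rw [abs_mul, abs_of_pos (by norm_num : (0:ℝ) < 1/2)]
      refine mul_le_mul_of_nonneg_left ?_ (by norm_num)
      rw [abs_div, abs_of_pos hτ, div_le_iff₀ hτ, mul_assoc]
      exact (H.hαL _ _).trans (mul_le_mul_of_nonneg_left (hrb' n i) hΛ)
    · refine abs_mul_le' ?_ (E_bound hh (hq1 n) i)
      rw [abs_div, abs_of_pos hτ, div_le_iff₀ hτ, mul_assoc]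
      exact (H.hβL _ _).trans (mul_le_mul_of_nonneg_left (hrb' n i) hΛ)
  · exact hrb
  · intro i
    rw [hst 0 (i+1), hst 0 i, hw0]
    set z := fun i => (v (i+1) - 2 * v i + v (i-1)) / h^2 with hz
    set e := fun i => (v (i+1) - v (i-1)) / (2*h) with he
    have hzl : |z (i+1) - z i| ≤ L0 * h := by
      have := hv.h3 i
      simp only [hz]
      rw [← sub_div, abs_div, abs_of_pos (by positivity : 0 < h^2), div_le_iff₀ (by positivity)]
      simp only [add_sub_cancel_right, add_assoc, one_add_one_eq_two] at this ⊢
      calc _ ≤ _ := this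
        _ = _ := by ring
    have hzb : |z i| ≤ L0 := D_bound hh hv.h2 i
    have heb : |e i| ≤ L0 := E_bound hh hv.h1 i
    have hel : |e (i+1) - e i| ≤ L0 * h := E_lip hh hv.h2 i
    have hal : |α (v (i+1)) - α (v i)| ≤ Λ * L0 * h := by
      rw [mul_assoc]; exact (H.hαL _ _).trans (mul_le_mul_of_nonneg_left (hv.h1 i) hΛ)
    have hbl : |β (v (i+1)) - β (v i)| ≤ Λ * L0 * h := by
      rw [mul_assoc]; exact (H.hβL _ _).trans (mul_le_mul_of_nonneg_left (hv.h1 i) hΛ)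
    have t1 := abs_mul_le' hal hzb
    have t2 := abs_mul_le' (hαabs (v (i+1))) hzl
    have t3 := abs_mul_le' hbl heb
    have t4 := abs_mul_le' (H.hβ (v (i+1))) hel
    change |1/2 * α (v (i+1)) * z (i+1) - β (v (i+1)) * e (i+1)
      - (1/2 * α (v i) * z i - β (v i) * e i)| ≤ _
    have e0 : 1/2 * α (v (i+1)) * z (i+1) - β (v (i+1)) * e (i+1)
      - (1/2 * α (v i) * z i - β (v i) * e i)
      = 1/2 * ((α (v (i+1)) - α (v i)) * z i) + 1/2 * (α (v (i+1)) * (z (i+1) - z i))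
      - (β (v (i+1)) - β (v i)) * e i - β (v (i+1)) * (e (i+1) - e i) := by ring
    rw [e0]
    rw [abs_le] at t1 t2 t3 t4 ⊢
    constructor <;> linarith

theorem sch_estimates (H : CoefHyp α β c Ab Bb Λ) {lam K0 L0 : ℝ} (hl : 0 < lam)
    (hlA : lam * Ab ≤ 1/8) (hL0 : 0 ≤ L0) (hK0 : 0 ≤ K0) :
    ∃ C δ : ℝ, 0 ≤ C ∧ 0 < δ ∧ ∀ h, 0 < h → h ≤ δ → ∀ v, InitHyp v h K0 L0 →
      EstHyp (sch α β h (lam * h^2) v) h (lam * h^2) K0 C := by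
  have hc := H.hc
  have hΛ := H.hΛ
  have hBb : 0 ≤ Bb := (abs_nonneg _).trans (H.hβ 0)
  have hcA : c ≤ Ab := (H.hαl 0).trans (H.hαu 0)
  have hAb : 0 ≤ Ab := hc.le.trans hcA
  have hαabs : ∀ u, |α u| ≤ Ab := fun u => by
    rw [abs_of_nonneg (hc.le.trans (H.hαl u))]; exact H.hαu u
  obtain ⟨M1, δ1, hM1, hδ1, D1⟩ := sch_lip1 H hl (by linarith) hL0 hK0
  obtain ⟨M2, δ2, hM2, hδ2, D2⟩ := sch_lip2 H hl hlA hL0 hM1 (K0 := K0)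
  obtain ⟨M3, δ3, hM3, hδ3, D3⟩ := sch_lip3 H hl hlA hL0 hM1 hM2 (K0 := K0)
  set R := 1/2 * Ab * M2 + Bb * M1 with hR
  set M4 := (Λ * M1 * M2 + 2 * M3 + 2 * (Λ * M1 * M1 + Bb * M2)) / c with hM4
  have hM40 : 0 ≤ M4 := by positivity
  have hR0 : 0 ≤ R := by positivity
  refine ⟨M1 + M2 + R + M4, min (min δ1 δ2) (min δ3 (c / (2 * (Bb+1)))), by positivity,
    by positivity, ?_⟩
  intro h hh hhδ v hv
  simp only [le_min_iff] at hhδ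
  obtain ⟨⟨hh1, hh2⟩, hh3, hh4⟩ := hhδ
  have hhB : h * Bb ≤ c/2 := by
    rw [le_div_iff₀ (by positivity)] at hh4
    nlinarith
  have q1 := D1 h hh hh1 hhB v hv
  have q2 := D2 h hh hh2 hhB v hv q1
  have q3 := D3 h hh hh3 hhB v hv q1 q2
  have hr := sch_range H hl (by linarith) hh hhB hv.h0 hv.hK
  have hτ : 0 < lam * h^2 := by positivity
  have hst := fun n i => sch_step α β hτ v n i (h := h)
  set w := sch α β h (lam * h^2) v with hw
  refine ⟨fun n i => (hr n i).1, fun n i => (hr n i).2, ?_, ?_, ?_, ?_⟩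
  · intro n i
    refine (q1 n i).trans ?_
    gcongr; linarith
  · intro n i
    refine (q2 n i).trans ?_
    gcongr; linarith
  · intro n i
    set z := fun i => (w n (i+1) - 2 * w n i + w n (i-1)) / h^2 with hz
    set e := fun i => (w n (i+1) - w n (i-1)) / (2*h) with he
    have hzb : |z i| ≤ M2 := D_bound hh (q2 n) i
    have heb : |e i| ≤ M1 := E_bound hh (q1 n) i
    have hel : |e (i+1) - e i| ≤ M2 * h := E_lip hh (q2 n) i
    have hal : |α (w n (i+1)) - α (w n i)| ≤ Λ * M1 * h := by
      rw [mul_assoc]; exact (H.hαL _ _).trans (mul_le_mul_of_nonneg_left (q1 n i) hΛ)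
    have hbl : |β (w n (i+1)) - β (w n i)| ≤ Λ * M1 * h := by
      rw [mul_assoc]; exact (H.hβL _ _).trans (mul_le_mul_of_nonneg_left (q1 n i) hΛ)
    have t1 := abs_mul_le' hal hzb
    have t3 := abs_mul_le' hbl heb
    have t4 := abs_mul_le' (H.hβ (w n (i+1))) hel
    have t5 := q3 n i
    rw [hst, hst] at t5
    change |1/2 * α (w n (i+1)) * z (i+1) - β (w n (i+1)) * e (i+1)
      - (1/2 * α (w n i) * z i - β (w n i) * e i)| ≤ _ at t5
    have t6 : |α (w n (i+1)) * (z (i+1) - z i)| ≤ M4 * c * h := by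
      have : M4 * c = (Λ * M1 * M2 + 2 * M3 + 2 * (Λ * M1 * M1 + Bb * M2)) := by
        rw [hM4]; field_simp
      rw [this]
      rw [abs_le] at t1 t3 t4 t5 ⊢
      constructor <;> linarith
    have t7 : |z (i+1) - z i| ≤ M4 * h := by
      rw [abs_mul, abs_of_pos (hc.trans_le (H.hαl _))] at t6
      have := mul_le_mul_of_nonneg_right (H.hαl (w n (i+1))) (abs_nonneg (z (i+1) - z i))
      have t8 : c * |z (i+1) - z i| ≤ c * (M4 * h) := by linarith
      exact le_of_mul_le_mul_left t8 hc
    simp only [hz] at t7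
    rw [← sub_div, abs_div, abs_of_pos (by positivity : 0 < h^2), div_le_iff₀ (by positivity)] at t7
    simp only [add_sub_cancel_right, add_assoc, one_add_one_eq_two] at t7 ⊢
    calc _ ≤ _ := t7
      _ = M4 * h^3 := by ring
      _ ≤ _ := by gcongr; linarith
  · intro n i
    have hrb : |(w (n+1) i - w n i) / (lam * h^2)| ≤ R := by
      rw [hst]
      refine (abs_sub _ _).trans (add_le_add ?_ ?_)
      · rw [mul_assoc, abs_mul, abs_of_pos (by norm_num : (0:ℝ) < 1/2), mul_assoc]
        exact mul_le_mul_of_nonneg_left (abs_mul_le' (hαabs _) (D_bound hh (q2 n) i)) (by norm_num)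
      · exact abs_mul_le' (H.hβ _) (E_bound hh (q1 n) i)
    rw [abs_div, abs_of_pos hτ, div_le_iff₀ hτ] at hrb
    refine hrb.trans ?_
    gcongr; linarith
end

/-- central difference and second difference quotients -/
def dE (h : ℝ) (v : ℤ → ℝ) (i : ℤ) : ℝ := (v (i+1) - v (i-1)) / (2*h)
def dZ (h : ℝ) (v : ℤ → ℝ) (i : ℤ) : ℝ := (v (i+1) - 2 * v i + v (i-1)) / h^2

theorem dZ_adj {v : ℤ → ℝ} {h C : ℝ} (hh : 0 < h)
    (h3 : ∀ i, |(v (i+2) - 2 * v (i+1) + v i) - (v (i+1) - 2 * v i + v (i-1))| ≤ C * h^3) (i : ℤ) :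
    |dZ h v (i+1) - dZ h v i| ≤ C * h := by
  unfold dZ
  have := h3 i
  rw [← sub_div, abs_div, abs_of_pos (by positivity : 0 < h^2), div_le_iff₀ (by positivity)]
  simp only [add_sub_cancel_right, add_assoc, one_add_one_eq_two] at this ⊢
  calc _ ≤ _ := this
    _ = _ := by ring

theorem dE_adj (v : ℤ → ℝ) {h : ℝ} (hh : 0 < h) (i : ℤ) :
    dE h v (i+1) - dE h v i = h * ((dZ h v (i+1) + dZ h v i) / 2) := by
  unfold dE dZ
  simp only [add_sub_cancel_right]
  field_simp; ring

theorem dE_taylor_nat {v : ℤ → ℝ} {h C : ℝ} (hh : 0 < h) (hC : 0 ≤ C)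
    (hZ : ∀ i, |dZ h v (i+1) - dZ h v i| ≤ C * h) (i : ℤ) (k : ℕ) :
    |dE h v (i+k) - dE h v i - k * h * dZ h v i| ≤ C * (k*h)^2 := by
  induction k with
  | zero => simp
  | succ k ih =>
    have e1 := dE_adj v hh (i+k)
    have z1 := int_lip_of_adj hZ i k
    have z2 := int_lip_of_adj hZ i (k+1)
    have e2 : dE h v (i+((k+1:ℕ):ℤ)) - dE h v i - ((k+1:ℕ):ℝ) * h * dZ h v i
      = (dE h v (i+k) - dE h v i - k * h * dZ h v i) +
        (h/2 * (dZ h v (i+((k+1:ℕ):ℤ)) - dZ h v i) + h/2 * (dZ h v (i+k) - dZ h v i)) := by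
      push_cast
      rw [← add_assoc]
      linear_combination e1
    rw [e2]
    push_cast at *
    have z1' : |h/2 * (dZ h v (i+k) - dZ h v i)| ≤ h/2 * (C*h*k) := by
      rw [abs_mul, abs_of_pos (by positivity : 0 < h/2)]; gcongr
    have z2' : |h/2 * (dZ h v (i+(k+1)) - dZ h v i)| ≤ h/2 * (C*h*(k+1)) := by
      rw [abs_mul, abs_of_pos (by positivity : 0 < h/2)]; gcongr
    refine (abs_add_le _ _).trans ((add_le_add ih ((abs_add_le _ _).trans (add_le_add z2' z1'))).trans ?_)
    have : 0 ≤ C * h^2 * k := by positivity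
    have : 0 ≤ C * h^2 := by positivity
    nlinarith

theorem taylor_nat {v : ℤ → ℝ} {h C : ℝ} (hh : 0 < h) (hC : 0 ≤ C)
    (hZ : ∀ i, |dZ h v (i+1) - dZ h v i| ≤ C * h) (i : ℤ) (k : ℕ) :
    |v (i+k+1) - v (i+k) - h * dE h v i - (k + 1/2) * h^2 * dZ h v i| ≤ C * h * (k*h)^2 ∧
    |v (i+k) - v i - k * h * dE h v i - 1/2 * (k*h)^2 * dZ h v i| ≤ C * (k*h)^3 := by
  induction k with
  | zero =>
    constructor
    · have : v (i+(0:ℕ)+1) - v (i+(0:ℕ)) - h * dE h v i - ((0:ℕ) + 1/2) * h^2 * dZ h v i = 0 := by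
        unfold dE dZ; push_cast; simp only [add_zero]; field_simp; ring
      rw [this]; simp
    · simp
  | succ k ih =>
    obtain ⟨ih1, ih2⟩ := ih
    have z2 := int_lip_of_adj hZ i (k+1)
    push_cast at *
    constructor
    · have e : v (i+(k+1)+1) - v (i+(k+1)) - h * dE h v i - ((k:ℝ)+1 + 1/2) * h^2 * dZ h v i
        = (v (i+k+1) - v (i+k) - h * dE h v i - (k + 1/2) * h^2 * dZ h v i)
          + h^2 * (dZ h v (i+(k+1)) - dZ h v i) := by
        have : h^2 * dZ h v (i+(k+1)) = v (i+(k+1)+1) - 2 * v (i+(k+1)) + v (i+k) := by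
          unfold dZ
          rw [show i + ((k:ℤ)+1) - 1 = i + k by ring]
          field_simp
        rw [mul_sub, this, show i + (k:ℤ) + 1 = i + (k+1) by ring]
        ring
      rw [e]
      have z2' : |h^2 * (dZ h v (i+(k+1)) - dZ h v i)| ≤ h^2 * (C*h*(k+1)) := by
        rw [abs_mul, abs_of_pos (by positivity : 0 < h^2)]; gcongr
      refine (abs_add_le _ _).trans ((add_le_add ih1 z2').trans ?_)
      have : 0 ≤ C * h^3 * k := by positivity
      have : 0 ≤ C * h^3 := by positivity
      nlinarith
    · have e : v (i+(k+1)) - v i - ((k:ℝ)+1) * h * dE h v i - 1/2 * (((k:ℝ)+1)*h)^2 * dZ h v i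
        = (v (i+k+1) - v (i+k) - h * dE h v i - (k + 1/2) * h^2 * dZ h v i)
          + (v (i+k) - v i - k * h * dE h v i - 1/2 * (k*h)^2 * dZ h v i) := by
        rw [show i + (k:ℤ) + 1 = i + (k+1) by ring]
        ring
      rw [e]
      refine (abs_add_le _ _).trans ((add_le_add ih1 ih2).trans ?_)
      have h1 : 0 ≤ C * h^3 * k := by positivity
      have h2 : 0 ≤ C * h^3 := by positivity
      have h4 : 0 ≤ C * h^3 * k^2 := by positivity
      have : C * (((k:ℝ)+1)*h)^3 = C*h^3*k^3 + 3*(C*h^3*k^2) + 3*(C*h^3*k) + C*h^3 := by ring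
      rw [this]
      nlinarith

theorem dE_refl (h : ℝ) (v : ℤ → ℝ) (i : ℤ) : dE h (fun j => v (-j)) i = - dE h v (-i) := by
  unfold dE
  beta_reduce
  rw [show -(i+1) = -i-1 by ring, show -(i-1) = -i+1 by ring]
  ring
theorem dZ_refl (h : ℝ) (v : ℤ → ℝ) (i : ℤ) : dZ h (fun j => v (-j)) i = dZ h v (-i) := by
  unfold dZ
  beta_reduce
  rw [show -(i+1) = -i-1 by ring, show -(i-1) = -i+1 by ring]
  ring

theorem hZ_refl {v : ℤ → ℝ} {h C : ℝ} (hZ : ∀ i, |dZ h v (i+1) - dZ h v i| ≤ C * h) :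
    ∀ i, |dZ h (fun j => v (-j)) (i+1) - dZ h (fun j => v (-j)) i| ≤ C * h := by
  intro i
  rw [dZ_refl, dZ_refl, abs_sub_comm]
  have := hZ (-(i+1))
  rwa [show -(i+1) + 1 = -i by ring] at this

theorem taylor_int {v : ℤ → ℝ} {h C : ℝ} (hh : 0 < h) (hC : 0 ≤ C)
    (hZ : ∀ i, |dZ h v (i+1) - dZ h v i| ≤ C * h) (i j : ℤ) :
    |v j - v i - ((j:ℝ) - i) * h * dE h v i - 1/2 * (((j:ℝ)-i)*h)^2 * dZ h v i|
      ≤ C * (|(j:ℝ)-i| * h)^3 := by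
  rcases le_total i j with hij | hij
  · obtain ⟨k, rfl⟩ := Int.le.dest hij
    have := (taylor_nat hh hC hZ i k).2
    simpa using this
  · obtain ⟨k, rfl⟩ := Int.le.dest hij
    have := (taylor_nat hh hC (hZ_refl hZ) (-(j+k)) k).2
    simp only [dE_refl, dZ_refl] at this
    rw [show -(-(j+(k:ℤ)) + k) = j by ring, neg_neg] at this
    convert this using 2
    · push_cast; ring
    · push_cast; rw [show (j:ℝ) - (j + k) = -k by ring, abs_neg, Nat.abs_cast]

theorem dE_taylor_int {v : ℤ → ℝ} {h C : ℝ} (hh : 0 < h) (hC : 0 ≤ C)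
    (hZ : ∀ i, |dZ h v (i+1) - dZ h v i| ≤ C * h) (i j : ℤ) :
    |dE h v j - dE h v i - ((j:ℝ) - i) * h * dZ h v i| ≤ C * (((j:ℝ)-i)*h)^2 := by
  rcases le_total i j with hij | hij
  · obtain ⟨k, rfl⟩ := Int.le.dest hij
    have := (dE_taylor_nat hh hC hZ i k)
    simpa using this
  · obtain ⟨k, rfl⟩ := Int.le.dest hij
    have := (dE_taylor_nat hh hC (hZ_refl hZ) (-(j+k)) k)
    simp only [dE_refl, dZ_refl] at this
    rw [show -(-(j+(k:ℤ)) + k) = j by ring, neg_neg] at this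
    rw [← abs_neg]
    convert this using 2
    · push_cast; ring
    · push_cast; ring

/-- numeric interpolation lemma -/
theorem interp {w0 wp wm e z w0' wp' wm' e' z' l C T : ℝ} (hl : 0 ≤ l)
    (h1 : |wp - w0 - l * e - 1/2 * l^2 * z| ≤ C * l^3)
    (h2 : |wm - w0 + l * e - 1/2 * l^2 * z| ≤ C * l^3)
    (h1' : |wp' - w0' - l * e' - 1/2 * l^2 * z'| ≤ C * l^3)
    (h2' : |wm' - w0' + l * e' - 1/2 * l^2 * z'| ≤ C * l^3)
    (a0 : |w0 - w0'| ≤ C * T) (ap : |wp - wp'| ≤ C * T) (am : |wm - wm'| ≤ C * T) :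
    l^2 * |z - z'| ≤ 4 * C * T + 4 * C * l^3 ∧ l * |e - e'| ≤ C * T + 2 * C * l^3 := by
  rw [abs_le] at *
  constructor
  · rw [← abs_of_nonneg (by positivity : 0 ≤ l^2), ← abs_mul, abs_le]
    constructor <;> linarith
  · rw [← abs_of_nonneg hl, ← abs_mul, abs_le, abs_of_nonneg hl]
    constructor <;> linarith

section
variable {α β : ℝ → ℝ} {c Ab Bb Λ : ℝ}

theorem EstHyp.hZ {w : ℕ → ℤ → ℝ} {h τ K0 C : ℝ} (E : EstHyp w h τ K0 C) (hh : 0 < h) (n : ℕ) :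
    ∀ i, |dZ h (w n) (i+1) - dZ h (w n) i| ≤ C * h :=
  dZ_adj hh (E.h3 n)

theorem EstHyp.time_nat {w : ℕ → ℤ → ℝ} {h τ K0 C : ℝ} (E : EstHyp w h τ K0 C)
    (n k : ℕ) (i : ℤ) : |w (n+k) i - w n i| ≤ C * (k * τ) := by
  induction k with
  | zero => simp
  | succ k ih =>
    have := E.ht (n+k) i
    have e : w (n+(k+1)) i - w n i = (w (n+k+1) i - w (n+k) i) + (w (n+k) i - w n i) := by
      rw [← add_assoc]; ring
    rw [e]
    refine (abs_add_le _ _).trans ((add_le_add this ih).trans ?_)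
    push_cast; linarith

theorem EstHyp.time {w : ℕ → ℤ → ℝ} {h τ K0 C : ℝ} (E : EstHyp w h τ K0 C)
    (n m : ℕ) (i : ℤ) : |w m i - w n i| ≤ C * (|(m:ℝ) - n| * τ) := by
  rcases le_total n m with hnm | hnm
  · obtain ⟨k, rfl⟩ := Nat.exists_eq_add_of_le hnm
    have := E.time_nat n k i
    simpa using this
  · obtain ⟨k, rfl⟩ := Nat.exists_eq_add_of_le hnm
    have := E.time_nat m k i
    rw [abs_sub_comm]
    simpa using this

/-- the right-hand side -/
def rhsW (α β : ℝ → ℝ) (w e z : ℝ) : ℝ := 1/2 * α w * z - β w * e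

theorem rhs_diff (H : CoefHyp α β c Ab Bb Λ) {C : ℝ} (hC : 0 ≤ C) :
    ∃ K, 0 ≤ K ∧ ∀ w e z w' e' z' l T : ℝ, 0 ≤ l → l ≤ 1 → 0 ≤ T → |e| ≤ C → |z| ≤ C →
      |w - w'| ≤ C * T → l^2 * |z - z'| ≤ 4 * C * T + 4 * C * l^3 →
      l * |e - e'| ≤ C * T + 2 * C * l^3 →
      l^2 * |rhsW α β w e z - rhsW α β w' e' z'| ≤ K * (T + l^3) := by
  have hc := H.hc
  have hΛ := H.hΛ
  have hBb : 0 ≤ Bb := (abs_nonneg _).trans (H.hβ 0)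
  have hcA : c ≤ Ab := (H.hαl 0).trans (H.hαu 0)
  have hAb : 0 ≤ Ab := hc.le.trans hcA
  have hαabs : ∀ u, |α u| ≤ Ab := fun u => by
    rw [abs_of_nonneg (hc.le.trans (H.hαl u))]; exact H.hαu u
  refine ⟨1/2 * (Λ * C * C) + 1/2 * (Ab * (4 * C)) + Λ * C * C + Bb * (2 * C), by positivity, ?_⟩
  intro w e z w' e' z' l T hl hl1 hT he hz hw hz' he'
  have hl2 : l^2 ≤ 1 := by nlinarith
  have l3 : 0 ≤ l^3 := by positivity
  have hll : 0 ≤ l^2 := by positivity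
  have e1 : rhsW α β w e z - rhsW α β w' e' z' = 1/2 * ((α w - α w') * z) + 1/2 * (α w' * (z - z'))
      - (β w - β w') * e - β w' * (e - e') := by unfold rhsW; ring
  have ba : |α w - α w'| ≤ Λ * (C * T) := (H.hαL _ _).trans (mul_le_mul_of_nonneg_left hw hΛ)
  have bb : |β w - β w'| ≤ Λ * (C * T) := (H.hβL _ _).trans (mul_le_mul_of_nonneg_left hw hΛ)
  have t1 := abs_mul_le' ba hz
  have t2 := abs_mul_le' (hαabs w') (le_refl |z - z'|)
  have t3 := abs_mul_le' bb he
  have t4 := abs_mul_le' (H.hβ w') (le_refl |e - e'|)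
  have t5 : |rhsW α β w e z - rhsW α β w' e' z'| ≤ 1/2 * (Λ * (C * T) * C) + 1/2 * (Ab * |z - z'|)
      + Λ * (C * T) * C + Bb * |e - e'| := by
    rw [e1, abs_le]
    rw [abs_le] at t1 t2 t3 t4
    constructor <;> linarith
  have s0 := mul_le_mul_of_nonneg_left t5 hll
  have s1 : l^2 * (Λ * (C * T) * C) ≤ Λ * (C * T) * C := by
    have : 0 ≤ Λ * (C * T) * C := by positivity
    nlinarith
  have s2 : Ab * (l^2 * |z - z'|) ≤ Ab * (4 * C * T + 4 * C * l^3) := by gcongr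
  have s3 : Bb * (l * (l * |e - e'|)) ≤ Bb * (1 * (C * T + 2 * C * l^3)) := by
    gcongr
  have p1 : 0 ≤ Λ * C * C * l^3 := by positivity
  have p2 : 0 ≤ Bb * C * T := by positivity
  nlinarith

theorem sch_rhs (α β : ℝ → ℝ) {h τ : ℝ} (hτ : 0 < τ) (v : ℤ → ℝ) (n : ℕ) (i : ℤ) :
    sch α β h τ v (n+1) i - sch α β h τ v n i =
      τ * rhsW α β (sch α β h τ v n i) (dE h (sch α β h τ v n) i) (dZ h (sch α β h τ v n) i) := by
  have := sch_step α β hτ v n i (h := h)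
  rw [div_eq_iff hτ.ne'] at this
  rw [this]; unfold rhsW dE dZ; ring

theorem grid_interp {w : ℕ → ℤ → ℝ} {h τ K0 C : ℝ} (hh : 0 < h) (hC : 0 ≤ C)
    (E : EstHyp w h τ K0 C) (n m j : ℕ) (i : ℤ) :
    (j*h)^2 * |dZ h (w m) i - dZ h (w n) i| ≤ 4 * C * (|(m:ℝ) - n| * τ) + 4 * C * (j*h)^3 ∧
    (j*h) * |dE h (w m) i - dE h (w n) i| ≤ C * (|(m:ℝ) - n| * τ) + 2 * C * (j*h)^3 := by
  have T := fun n => taylor_int hh hC (E.hZ hh n) i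
  have tp : ∀ n, |w n (i+j) - w n i - (j*h) * dE h (w n) i - 1/2 * (j*h)^2 * dZ h (w n) i|
      ≤ C * (j*h)^3 := by
    intro n; simpa using T n (i+j)
  have tm : ∀ n, |w n (i-j) - w n i + (j*h) * dE h (w n) i - 1/2 * (j*h)^2 * dZ h (w n) i|
      ≤ C * (j*h)^3 := by
    intro n
    have := T n (i-j)
    push_cast at this
    rw [show (i:ℝ) - j - i = -j by ring, abs_neg, Nat.abs_cast] at this
    convert this using 2
    ring
  exact interp (by positivity) (tp m) (tm m) (tp n) (tm n) (E.time n m i) (E.time n m _) (E.time n m _)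

theorem sum_bound {w R : ℕ → ℝ} {τ B : ℝ} (hτ : 0 < τ) (n k : ℕ) (R0 : ℝ)
    (hs : ∀ m, w (m+1) - w m = τ * R m) (hR : ∀ m, n ≤ m → m ≤ n + k → |R m - R0| ≤ B) :
    |w (n+k) - w n - (k * τ) * R0| ≤ (k * τ) * B := by
  induction k with
  | zero => simp
  | succ k ih =>
    have i1 := ih (fun m h1 h2 => hR m h1 (by omega))
    have i2 := hR (n+k) (by omega) (by omega)
    have e : w (n+(k+1)) - w n - ((k+1:ℕ) * τ) * R0
      = (w (n+k) - w n - (k * τ) * R0) + τ * (R (n+k) - R0) := by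
      have := hs (n+k)
      rw [← add_assoc]; push_cast; linear_combination this
    rw [e]
    have : |τ * (R (n+k) - R0)| ≤ τ * B := by
      rw [abs_mul, abs_of_pos hτ]; gcongr
    refine (abs_add_le _ _).trans ((add_le_add i1 this).trans ?_)
    push_cast; linarith

theorem sch_time_deriv (H : CoefHyp α β c Ab Bb Λ) {C : ℝ} (hC : 0 ≤ C) :
    ∃ K, 0 ≤ K ∧ ∀ (h τ K0 : ℝ) (v : ℤ → ℝ), 0 < h → 0 < τ →
      EstHyp (sch α β h τ v) h τ K0 C → ∀ (n m j : ℕ) (i : ℤ), j * h ≤ 1 →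
      (j*h)^2 * |sch α β h τ v m i - sch α β h τ v n i - ((m:ℝ) - n) * τ *
        rhsW α β (sch α β h τ v n i) (dE h (sch α β h τ v n) i) (dZ h (sch α β h τ v n) i)|
      ≤ (|(m:ℝ) - n| * τ) * (K * (|(m:ℝ) - n| * τ + (j*h)^3)) := by
  obtain ⟨K, hK, D⟩ := rhs_diff H hC
  refine ⟨K, hK, fun h τ K0 v hh hτ E n m j i hj => ?_⟩
  have hs := fun m => sch_rhs α β hτ v m i (h := h)
  set w := sch α β h τ v with hw
  have hdiff : ∀ p : ℕ, |(p:ℝ) - n| ≤ |(m:ℝ) - n| → (j*h)^2 *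
    |rhsW α β (w p i) (dE h (w p) i) (dZ h (w p) i) - rhsW α β (w n i) (dE h (w n) i) (dZ h (w n) i)|
      ≤ K * (|(m:ℝ) - n| * τ + (j*h)^3) := by
    intro p hp
    have g := grid_interp hh hC E n p j i
    have := D (w p i) (dE h (w p) i) (dZ h (w p) i) (w n i) (dE h (w n) i) (dZ h (w n) i) (j*h)
      (|(p:ℝ) - n| * τ) (by positivity) hj (by positivity) (E_bound hh (E.h1 p) i)
      (D_bound hh (E.h2 p) i) (E.time n p i) g.1 g.2
    refine this.trans ?_
    gcongr
  rcases Nat.eq_zero_or_pos j with hj0 | hj0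
  · subst hj0
    simp only [CharP.cast_eq_zero, zero_mul]
    simp only [ne_eq, OfNat.ofNat_ne_zero, not_false_eq_true, zero_pow, zero_mul, add_zero]
    positivity
  have hjh : 0 < (j*h)^2 := by positivity
  have hd' : ∀ p : ℕ, |(p:ℝ) - n| ≤ |(m:ℝ) - n| → 
    |rhsW α β (w p i) (dE h (w p) i) (dZ h (w p) i) - rhsW α β (w n i) (dE h (w n) i) (dZ h (w n) i)|
      ≤ K * (|(m:ℝ) - n| * τ + (j*h)^3) / (j*h)^2 := by
    intro p hp
    rw [le_div_iff₀ hjh, mul_comm]; exact hdiff p hp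
  suffices hgoal : |w m i - w n i - ((m:ℝ) - n) * τ *
        rhsW α β (w n i) (dE h (w n) i) (dZ h (w n) i)|
      ≤ (|(m:ℝ) - n| * τ) * (K * (|(m:ℝ) - n| * τ + (j*h)^3) / (j*h)^2) by
    have := mul_le_mul_of_nonneg_left hgoal hjh.le
    refine this.trans (le_of_eq ?_)
    field_simp
  set B := K * (|(m:ℝ) - n| * τ + (j*h)^3) / (j*h)^2 with hB
  rcases le_total n m with hnm | hnm
  · obtain ⟨k, rfl⟩ := Nat.exists_eq_add_of_le hnm
    have := sum_bound (w := fun p => w p i)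
      (R := fun p => rhsW α β (w p i) (dE h (w p) i) (dZ h (w p) i)) hτ n k
      (rhsW α β (w n i) (dE h (w n) i) (dZ h (w n) i)) (B := B) hs (by
        intro p h1 h2
        apply hd'
        have h1' : (n:ℝ) ≤ p := by exact_mod_cast h1
        have h2' : (p:ℝ) ≤ (n+k:ℕ) := by exact_mod_cast h2
        rw [abs_of_nonneg (by linarith), abs_of_nonneg (by linarith)]; linarith)
    simpa using this
  · obtain ⟨k, rfl⟩ := Nat.exists_eq_add_of_le hnm
    have := sum_bound (w := fun p => w p i)
      (R := fun p => rhsW α β (w p i) (dE h (w p) i) (dZ h (w p) i)) hτ m k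
      (rhsW α β (w (m+k) i) (dE h (w (m+k)) i) (dZ h (w (m+k)) i)) (B := B) hs (by
        intro p h1 h2
        apply hd'
        have h1' : (m:ℝ) ≤ p := by exact_mod_cast h1
        have h2' : (p:ℝ) ≤ (m+k:ℕ) := by exact_mod_cast h2
        rw [abs_of_nonpos (by linarith), abs_of_nonpos (by linarith)]; linarith)
    have e : |(m:ℝ) - (m+k:ℕ)| = k := by
      push_cast; rw [show (m:ℝ) - (m+k) = -k by ring, abs_neg, Nat.abs_cast]
    rw [e, ← abs_neg]
    refine le_trans (le_of_eq ?_) this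
    congr 1; push_cast; ring
end

theorem ulim {f : ℕ → ℝ} {B : ℝ} (hf : ∀ N, |f N| ≤ B) :
    ∃ a, Tendsto f (hyperfilter ℕ : Filter ℕ) (𝓝 a) := by
  have := (isCompact_Icc (a := -B) (b := B)).ultrafilter_le_nhds ((hyperfilter ℕ).map f) (by
    rw [le_principal_iff]
    refine Filter.mem_map.2 (Filter.univ_mem' fun N => ?_)
    exact abs_le.1 (hf N))
  obtain ⟨a, _, ha⟩ := this
  exact ⟨a, ha⟩

theorem floor_tendsto {l : Filter ℕ} {h : ℕ → ℝ} (hh : ∀ N, 0 < h N) (hl : Tendsto h l (𝓝 0)) (x : ℝ) :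
    Tendsto (fun N => (⌊x / h N⌋ : ℝ) * h N) l (𝓝 x) := by
  have h1 : Tendsto (fun N => x - h N) l (𝓝 x) := by simpa using tendsto_const_nhds.sub hl
  refine tendsto_of_tendsto_of_tendsto_of_le_of_le h1 (tendsto_const_nhds (x := x)) ?_ ?_
  · intro N
    have := Int.sub_one_lt_floor (x / h N)
    have h2 := mul_le_mul_of_nonneg_right this.le (hh N).le
    have : (x / h N - 1) * h N = x - h N := by have := (hh N).ne'; field_simp
    simpa [this] using h2
  · intro N
    have := Int.floor_le (x / h N)
    have h2 := mul_le_mul_of_nonneg_right this (hh N).le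
    rwa [div_mul_cancel₀ _ (hh N).ne'] at h2

theorem nfloor_le' {h l : ℝ} (hh : 0 < h) (hl : 0 ≤ l) : (⌊l / h⌋₊ : ℝ) * h ≤ l := by
  have := Nat.floor_le (a := l / h) (by positivity)
  have h2 := mul_le_mul_of_nonneg_right this hh.le
  rwa [div_mul_cancel₀ _ hh.ne'] at h2

theorem nfloor_tendsto {l : Filter ℕ} {h : ℕ → ℝ} (hh : ∀ N, 0 < h N) (hl : Tendsto h l (𝓝 0))
    {x : ℝ} (hx : 0 ≤ x) :
    Tendsto (fun N => (⌊x / h N⌋₊ : ℝ) * h N) l (𝓝 x) := by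
  have h1 : Tendsto (fun N => x - h N) l (𝓝 x) := by simpa using tendsto_const_nhds.sub hl
  refine tendsto_of_tendsto_of_tendsto_of_le_of_le h1 (tendsto_const_nhds (x := x)) ?_ ?_
  · intro N
    have := Nat.sub_one_lt_floor (x / h N)
    have h2 := mul_le_mul_of_nonneg_right this.le (hh N).le
    have : (x / h N - 1) * h N = x - h N := by have := (hh N).ne'; field_simp
    simpa [this] using h2
  · intro N
    exact nfloor_le' (hh N) hx

section
variable {α β : ℝ → ℝ} {c Ab Bb Λ : ℝ}

/-- everything that survives in the limit of the scheme -/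
structure LimHyp (α β : ℝ → ℝ) (w0 : ℝ → ℝ) (K0 C K : ℝ) (W E Z : ℝ → ℝ → ℝ) : Prop where
  h0 : ∀ t x, 0 ≤ W t x
  hK : ∀ t x, W t x ≤ K0
  hE : ∀ t x, |E t x| ≤ C
  hZ : ∀ t x, |Z t x| ≤ C
  init : ∀ x, W 0 x = w0 x
  lW : ∀ t x y, |W t y - W t x| ≤ C * |y - x|
  lE : ∀ t x y, |E t y - E t x| ≤ C * |y - x|
  lZ : ∀ t x y, |Z t y - Z t x| ≤ C * |y - x|
  lt : ∀ t s x, 0 ≤ t → 0 ≤ s → |W t x - W s x| ≤ C * |t - s|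
  tE : ∀ t x y, |E t y - E t x - (y - x) * Z t x| ≤ C * (y - x)^2
  tW : ∀ t x y, |W t y - W t x - (y - x) * E t x - 1/2 * (y-x)^2 * Z t x| ≤ C * |y - x|^3
  tt : ∀ t s x l, 0 ≤ t → 0 ≤ s → 0 ≤ l → l ≤ 1 →
    l^2 * |W t x - W s x - (t - s) * rhsW α β (W s x) (E s x) (Z s x)| ≤ |t - s| * (K * (|t - s| + l^3))

theorem exists_limit (H : CoefHyp α β c Ab Bb Λ) {K0 L0 : ℝ} (hL0 : 0 ≤ L0) (hK0 : 0 ≤ K0)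
    {w0 : ℝ → ℝ} (hw0 : Continuous w0) (hinit : ∀ h : ℝ, 0 < h → InitHyp (fun i : ℤ => w0 (i * h)) h K0 L0) :
    ∃ (W E Z : ℝ → ℝ → ℝ) (C K : ℝ), 0 ≤ C ∧ 0 ≤ K ∧ LimHyp α β w0 K0 C K W E Z := by
  have hc := H.hc
  have hAb : 0 < Ab := hc.trans_le ((H.hαl 0).trans (H.hαu 0))
  set lam := 1 / (8 * Ab) with hlam
  have hl : 0 < lam := by positivity
  have hlA : lam * Ab ≤ 1/8 := by rw [hlam]; apply le_of_eq; field_simp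
  obtain ⟨C, δ, hC, hδ, D⟩ := sch_estimates H hl hlA hL0 hK0
  obtain ⟨K, hK, DT⟩ := sch_time_deriv H hC
  set h : ℕ → ℝ := fun N => δ / (N + 1) with hh
  have hpos : ∀ N, 0 < h N := fun N => by simp only [hh]; positivity
  have hleδ : ∀ N, h N ≤ δ := fun N => by
    simp only [hh]; apply div_le_self hδ.le; have : (0:ℝ) ≤ N := by positivity
    linarith
  set U : Filter ℕ := (hyperfilter ℕ : Filter ℕ) with hU
  have hUne : U.NeBot := by rw [hU]; infer_instance
  have hlim : Tendsto h U (𝓝 0) := by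
    refine Tendsto.mono_left ?_ Nat.hyperfilter_le_atTop
    have := (tendsto_one_div_add_atTop_nhds_zero_nat (𝕜 := ℝ)).const_mul δ
    rw [mul_zero] at this
    exact this.congr (fun n => by simp [hh, div_eq_mul_inv])
  set τ : ℕ → ℝ := fun N => lam * (h N)^2 with hτ
  have τpos : ∀ N, 0 < τ N := fun N => by
    have := hpos N
    simp only [hτ]; positivity
  have τlim : Tendsto τ U (𝓝 0) := by
    simpa using (hlim.pow 2).const_mul lam
  set w : ℕ → ℕ → ℤ → ℝ := fun N => sch α β (h N) (τ N) (fun i : ℤ => w0 (i * h N)) with hw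
  have hest : ∀ N, EstHyp (w N) (h N) (τ N) K0 C := fun N =>
    D (h N) (hpos N) (hleδ N) _ (hinit (h N) (hpos N))
  set ix : ℕ → ℝ → ℤ := fun N x => ⌊x / h N⌋ with hix
  set nt : ℕ → ℝ → ℕ := fun N t => ⌊t / τ N⌋₊ with hnt
  have ixl : ∀ x, Tendsto (fun N => (ix N x : ℝ) * h N) U (𝓝 x) := floor_tendsto hpos hlim
  have ntl : ∀ t, 0 ≤ t → Tendsto (fun N => (nt N t : ℝ) * τ N) U (𝓝 t) :=
    fun t ht => nfloor_tendsto τpos τlim ht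
  have LW : ∀ t x, ∃ a, Tendsto (fun N => w N (nt N t) (ix N x)) U (𝓝 a) := fun t x =>
    ulim (B := K0) fun N => by rw [abs_of_nonneg ((hest N).h0 _ _)]; exact (hest N).hK _ _
  have LE : ∀ t x, ∃ a, Tendsto (fun N => dE (h N) (w N (nt N t)) (ix N x)) U (𝓝 a) := fun t x =>
    ulim fun N => E_bound (hpos N) ((hest N).h1 _) _
  have LZ : ∀ t x, ∃ a, Tendsto (fun N => dZ (h N) (w N (nt N t)) (ix N x)) U (𝓝 a) := fun t x =>
    ulim fun N => D_bound (hpos N) ((hest N).h2 _) _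
  choose W hW using LW
  choose E hE using LE
  choose Z hZ using LZ
  have dix : ∀ x y, Tendsto (fun N => ((ix N y : ℝ) - ix N x) * h N) U (𝓝 (y - x)) := fun x y =>
    ((ixl y).sub (ixl x)).congr fun N => by ring
  have adix : ∀ x y, Tendsto (fun N => |(ix N y : ℝ) - ix N x| * h N) U (𝓝 |y - x|) := fun x y =>
    (dix x y).abs.congr fun N => by rw [abs_mul, abs_of_pos (hpos N)]
  have dnt : ∀ t s, 0 ≤ t → 0 ≤ s → Tendsto (fun N => ((nt N t : ℝ) - nt N s) * τ N) U (𝓝 (t - s)) :=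
    fun t s ht hs => ((ntl t ht).sub (ntl s hs)).congr fun N => by ring
  have adnt : ∀ t s, 0 ≤ t → 0 ≤ s → Tendsto (fun N => |(nt N t : ℝ) - nt N s| * τ N) U (𝓝 |t - s|) :=
    fun t s ht hs => (dnt t s ht hs).abs.congr fun N => by rw [abs_mul, abs_of_pos (τpos N)]
  have cα : Continuous α := by
    refine (LipschitzWith.of_dist_le_mul (K := ⟨Λ, H.hΛ⟩) fun x y => ?_).continuous
    rw [Real.dist_eq, Real.dist_eq]; exact H.hαL x y
  have cβ : Continuous β := by
    refine (LipschitzWith.of_dist_le_mul (K := ⟨Λ, H.hΛ⟩) fun x y => ?_).continuous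
    rw [Real.dist_eq, Real.dist_eq]; exact H.hβL x y
  refine ⟨W, E, Z, C, K, hC, hK, ?_⟩
  refine ⟨?_, ?_, ?_, ?_, ?_, ?_, ?_, ?_, ?_, ?_, ?_, ?_⟩
  · exact fun t x => ge_of_tendsto' (hW t x) fun N => (hest N).h0 _ _
  · exact fun t x => le_of_tendsto' (hW t x) fun N => (hest N).hK _ _
  · exact fun t x => le_of_tendsto' (hE t x).abs fun N => E_bound (hpos N) ((hest N).h1 _) _
  · exact fun t x => le_of_tendsto' (hZ t x).abs fun N => D_bound (hpos N) ((hest N).h2 _) _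
  · intro x
    refine tendsto_nhds_unique (hW 0 x) ?_
    have : ∀ N, w N (nt N 0) (ix N x) = w0 (ix N x * h N) := by
      intro N; simp only [hw, hnt, zero_div, Nat.floor_zero, sch]
    simp only [this]
    exact (hw0.tendsto x).comp (ixl x)
  · intro t x y
    refine le_of_tendsto_of_tendsto' ((hW t y).sub (hW t x)).abs ((adix x y).const_mul C) fun N => ?_
    have := int_lip ((hest N).h1 (nt N t)) (ix N x) (ix N y)
    calc _ ≤ _ := this
      _ = _ := by ring
  · intro t x y
    refine le_of_tendsto_of_tendsto' ((hE t y).sub (hE t x)).abs ((adix x y).const_mul C) fun N => ?_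
    have := int_lip (v := dE (h N) (w N (nt N t))) (L := C * h N)
      (fun i => E_lip (hpos N) ((hest N).h2 (nt N t)) i) (ix N x) (ix N y)
    calc _ ≤ _ := this
      _ = _ := by ring
  · intro t x y
    refine le_of_tendsto_of_tendsto' ((hZ t y).sub (hZ t x)).abs ((adix x y).const_mul C) fun N => ?_
    have := int_lip ((hest N).hZ (hpos N) (nt N t)) (ix N x) (ix N y)
    calc _ ≤ _ := this
      _ = _ := by ring
  · intro t s x ht hs
    refine le_of_tendsto_of_tendsto' ((hW t x).sub (hW s x)).abs ((adnt t s ht hs).const_mul C) fun N => ?_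
    exact (hest N).time (nt N s) (nt N t) (ix N x)
  · intro t x y
    refine le_of_tendsto_of_tendsto' (((hE t y).sub (hE t x)).sub ((dix x y).mul (hZ t x))).abs
      (((dix x y).pow 2).const_mul C) fun N => ?_
    exact dE_taylor_int (hpos N) hC ((hest N).hZ (hpos N) (nt N t)) (ix N x) (ix N y)
  · intro t x y
    refine le_of_tendsto_of_tendsto' ((((hW t y).sub (hW t x)).sub ((dix x y).mul (hE t x))).sub
      ((((dix x y).pow 2).const_mul (1/2)).mul (hZ t x))).abs
      (((adix x y).pow 3).const_mul C) fun N => ?_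
    exact taylor_int (hpos N) hC ((hest N).hZ (hpos N) (nt N t)) (ix N x) (ix N y)
  · intro t s x l ht hs hl0 hl1
    have hr : Tendsto (fun N => rhsW α β (w N (nt N s) (ix N x)) (dE (h N) (w N (nt N s)) (ix N x))
        (dZ (h N) (w N (nt N s)) (ix N x))) U (𝓝 (rhsW α β (W s x) (E s x) (Z s x))) := by
      unfold rhsW
      exact ((((cα.tendsto _).comp (hW s x)).const_mul (1/2)).mul (hZ s x)).sub
        (((cβ.tendsto _).comp (hW s x)).mul (hE s x))
    have hj := nfloor_tendsto hpos hlim hl0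
    refine le_of_tendsto_of_tendsto' ((hj.pow 2).mul
      (((hW t x).sub (hW s x)).sub ((dnt t s ht hs).mul hr)).abs)
      ((adnt t s ht hs).mul (((adnt t s ht hs).add (hj.pow 3)).const_mul K)) fun N => ?_
    exact DT (h N) (τ N) K0 _ (hpos N) (τpos N) (hest N) (nt N s) (nt N t) _ (ix N x)
      ((nfloor_le' (hpos N) hl0).trans hl1)

/-- Classical solution of `w_t = (1/2) α(w) w_xx - β(w) w_x`. -/
structure ClassSol (α β : ℝ → ℝ) (w0 : ℝ → ℝ) (K0 C : ℝ) (W E Z : ℝ → ℝ → ℝ) : Prop where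
  h0 : ∀ t x, 0 ≤ W t x
  hK : ∀ t x, W t x ≤ K0
  hE : ∀ t x, |E t x| ≤ C
  hZ : ∀ t x, |Z t x| ≤ C
  init : ∀ x, W 0 x = w0 x
  dx : ∀ t x, HasDerivAt (W t) (E t x) x
  dxx : ∀ t x, HasDerivAt (E t) (Z t x) x
  dt : ∀ t x, 0 ≤ t → HasDerivWithinAt (fun s => W s x) (rhsW α β (W t x) (E t x) (Z t x)) (Ici 0) t
  cW : ContinuousOn (fun q : ℝ × ℝ => W q.1 q.2) (Ici 0 ×ˢ univ)
  cE : ContinuousOn (fun q : ℝ × ℝ => E q.1 q.2) (Ici 0 ×ˢ univ)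
  cZ : ContinuousOn (fun q : ℝ × ℝ => Z q.1 q.2) (Ici 0 ×ˢ univ)

theorem hasDerivAt_of_quad {f : ℝ → ℝ} {f' x C : ℝ} (hC : 0 ≤ C)
    (h : ∀ y, |y - x| ≤ 1 → |f y - f x - (y - x) * f'| ≤ C * (y - x)^2) : HasDerivAt f f' x := by
  rw [hasDerivAt_iff_isLittleO, Asymptotics.isLittleO_iff]
  intro ε hε
  have : Metric.ball x (min 1 (ε / (C+1))) ∈ 𝓝 x := Metric.ball_mem_nhds _ (by positivity)
  filter_upwards [this] with y hy
  rw [Metric.mem_ball, Real.dist_eq, lt_min_iff] at hy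
  rw [Real.norm_eq_abs, Real.norm_eq_abs, smul_eq_mul]
  refine (h y hy.1.le).trans ?_
  rw [← sq_abs, sq, ← mul_assoc]
  gcongr
  have := hy.2.le
  rw [le_div_iff₀ (by positivity)] at this
  nlinarith [abs_nonneg (y - x)]

theorem contOn_of_interp {V : ℝ → ℝ → ℝ} {C : ℝ} (hC : 0 ≤ C)
    (hx : ∀ t x y, |V t y - V t x| ≤ C * |y - x|)
    (ht : ∀ t s x l, 0 ≤ t → 0 ≤ s → 0 < l → l ≤ 1 → l^2 * |V t x - V s x| ≤ C * (|t - s| + l^3)) :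
    ContinuousOn (fun q : ℝ × ℝ => V q.1 q.2) (Ici 0 ×ˢ univ) := by
  rintro ⟨s, x⟩ ⟨hs, -⟩
  simp only [mem_Ici] at hs
  rw [Metric.continuousWithinAt_iff]
  intro ε hε
  set l := min 1 (ε / (4 * (C+1))) with hl
  have hl0 : 0 < l := by positivity
  have hlε : l * (4 * (C+1)) ≤ ε := by
    have : l ≤ ε / (4 * (C+1)) := min_le_right _ _
    rwa [le_div_iff₀ (by positivity)] at this
  refine ⟨min l (l^3), by positivity, ?_⟩
  rintro ⟨t, y⟩ ⟨ht0, -⟩ hd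
  simp only [mem_Ici] at ht0
  simp only [Prod.dist_eq, max_lt_iff, lt_min_iff, Real.dist_eq] at hd
  obtain ⟨⟨hd1, hd2⟩, hd3, hd4⟩ := hd
  rw [Real.dist_eq]
  change |V t y - V s x| < ε
  have a1 := hx t x y
  have a2 := ht t s x l ht0 hs hl0 (min_le_left _ _)
  have a3 : |V t x - V s x| ≤ C * (2 * l) := by
    have : l^2 * |V t x - V s x| ≤ l^2 * (C * (2 * l)) := by
      calc _ ≤ _ := a2
        _ ≤ C * (l^3 + l^3) := by gcongr
        _ = _ := by ring
    exact le_of_mul_le_mul_left this (by positivity)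
  have a4 : C * |y - x| ≤ C * l := by gcongr
  have : |V t y - V s x| ≤ |V t y - V t x| + |V t x - V s x| := by
    have := abs_add_le (V t y - V t x) (V t x - V s x)
    simpa using this
  nlinarith

theorem LimHyp.classSol {w0 : ℝ → ℝ} {K0 C K : ℝ} {W E Z : ℝ → ℝ → ℝ} (hC : 0 ≤ C) (hK : 0 ≤ K)
    (L : LimHyp α β w0 K0 C K W E Z) : ClassSol α β w0 K0 C W E Z := by
  have hintg : ∀ t s x l, 0 ≤ t → 0 ≤ s → 0 < l → 
      l^2 * |Z t x - Z s x| ≤ 4 * C * |t - s| + 4 * C * l^3 ∧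
      l * |E t x - E s x| ≤ C * |t - s| + 2 * C * l^3 := by
    intro t s x l ht hs hl
    have tp : ∀ t, |W t (x+l) - W t x - l * E t x - 1/2 * l^2 * Z t x| ≤ C * l^3 := by
      intro t
      have := L.tW t x (x+l)
      rw [add_sub_cancel_left, abs_of_pos hl] at this
      exact this
    have tm : ∀ t, |W t (x-l) - W t x + l * E t x - 1/2 * l^2 * Z t x| ≤ C * l^3 := by
      intro t
      have := L.tW t x (x-l)
      rw [show x - l - x = -l by ring, abs_neg, abs_of_pos hl] at this
      convert this using 2; ring
    exact interp hl.le (tp t) (tm t) (tp s) (tm s) (L.lt t s _ ht hs) (L.lt t s _ ht hs) (L.lt t s _ ht hs)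
  refine ⟨L.h0, L.hK, L.hE, L.hZ, L.init, ?_, ?_, ?_, ?_, ?_, ?_⟩
  · intro t x
    refine hasDerivAt_of_quad (C := C + C) (by positivity) fun y hy => ?_
    have h1 := L.tW t x y
    have h2 := L.hZ t x
    have h3 : |1/2 * (y-x)^2 * Z t x| ≤ 1/2 * (y-x)^2 * C := by
      rw [abs_mul, abs_of_nonneg (by positivity : 0 ≤ 1/2 * (y-x)^2)]; gcongr
    have h4 : C * |y - x|^3 ≤ C * (y-x)^2 := by
      rw [pow_succ, sq_abs]
      gcongr
      nlinarith [sq_nonneg (y-x)]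
    have h5 : 0 ≤ C * (y-x)^2 := by positivity
    rw [abs_le] at *
    constructor <;> linarith
  · intro t x
    exact hasDerivAt_of_quad hC fun y _ => L.tE t x y
  · intro s x hs
    rw [hasDerivWithinAt_iff_isLittleO, Asymptotics.isLittleO_iff]
    intro ε hε
    set l := min 1 (ε / (2 * (K+1))) with hl
    have hl0 : 0 < l := by positivity
    have hlε : l * (2 * (K+1)) ≤ ε := by
      have : l ≤ ε / (2 * (K+1)) := min_le_right _ _
      rwa [le_div_iff₀ (by positivity)] at this
    have : Metric.ball s (l^3) ∈ 𝓝[Ici 0] s :=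
      mem_nhdsWithin_of_mem_nhds (Metric.ball_mem_nhds _ (by positivity))
    filter_upwards [this, self_mem_nhdsWithin] with t ht ht0
    rw [Metric.mem_ball, Real.dist_eq] at ht
    rw [Real.norm_eq_abs, Real.norm_eq_abs, smul_eq_mul]
    have a2 := L.tt t s x l ht0 hs hl0.le (min_le_left _ _)
    have : l^2 * |W t x - W s x - (t - s) * rhsW α β (W s x) (E s x) (Z s x)|
        ≤ l^2 * (|t - s| * (K * (2 * l))) := by
      calc _ ≤ _ := a2
        _ ≤ |t - s| * (K * (l^3 + l^3)) := by gcongr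
        _ = _ := by ring
    have := le_of_mul_le_mul_left this (by positivity)
    refine this.trans ?_
    rw [mul_comm]
    gcongr
    nlinarith
  · refine contOn_of_interp hC L.lW fun t s x l ht hs hl hl1 => ?_
    have := L.lt t s x ht hs
    have h2 : l^2 ≤ 1 := by nlinarith
    have h3 : 0 ≤ C * l^3 := by positivity
    have : l^2 * |W t x - W s x| ≤ 1 * (C * |t - s|) := by gcongr
    nlinarith
  · refine contOn_of_interp (C := 2 * C) (by positivity) ?_ ?_
    · intro t x y
      have := L.lE t x y
      have : 0 ≤ C * |y - x| := by positivity
      linarith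
    · intro t s x l ht hs hl hl1
      have := (hintg t s x l ht hs hl).2
      have h2 : l^2 * |E t x - E s x| ≤ 1 * (l * |E t x - E s x|) := by
        rw [sq, mul_assoc]; gcongr
      have : 0 ≤ C * |t - s| := by positivity
      linarith
  · refine contOn_of_interp (C := 4 * C) (by positivity) ?_ ?_
    · intro t x y
      have := L.lZ t x y
      have : 0 ≤ C * |y - x| := by positivity
      linarith
    · intro t s x l ht hs hl hl1
      have := (hintg t s x l ht hs hl).1
      linarith
end

theorem mvt_bound {f f' : ℝ → ℝ} {C : ℝ} (hf : ∀ x, HasDerivAt f (f' x) x) (hb : ∀ x, |f' x| ≤ C)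
    (x y : ℝ) : |f y - f x| ≤ C * |y - x| := by
  have := Convex.norm_image_sub_le_of_norm_hasDerivWithin_le (f := f) (f' := f') (s := univ)
    (fun x _ => (hf x).hasDerivWithinAt) (fun x _ => hb x) convex_univ (mem_univ x) (mem_univ y)
  simpa using this

theorem init_of_derivs {w w1 w2 : ℝ → ℝ} {K0 L : ℝ} (h0 : ∀ x, 0 ≤ w x) (hK : ∀ x, w x ≤ K0)
    (hw : ∀ x, HasDerivAt w (w1 x) x) (hw1 : ∀ x, HasDerivAt w1 (w2 x) x)
    (hb1 : ∀ x, |w1 x| ≤ L) (hb2 : ∀ x, |w2 x| ≤ L) (hL3 : ∀ x y, |w2 y - w2 x| ≤ L * |y - x|)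
    (h : ℝ) (hh : 0 < h) : InitHyp (fun i : ℤ => w (i * h)) h K0 L := by
  have sh : ∀ {f f' : ℝ → ℝ} (d : ℝ), (∀ x, HasDerivAt f (f' x) x) → 
      ∀ x, HasDerivAt (fun y => f (y + d)) (f' (x + d)) x := by
    intro f f' d hf x
    have := (hf (x + d)).comp_add_const x d
    simpa using this
  have e1 : ∀ x y, |w y - w x| ≤ L * |y - x| := mvt_bound hw hb1
  have e2 : ∀ x y, |w1 y - w1 x| ≤ L * |y - x| := mvt_bound hw1 hb2
  have d1 : ∀ x, HasDerivAt (fun y => w (y + h) - w y) (w1 (x + h) - w1 x) x :=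
    fun x => (sh h hw x).sub (hw x)
  have d2 : ∀ x, HasDerivAt (fun y => w1 (y + h) - w1 y) (w2 (x + h) - w2 x) x :=
    fun x => (sh h hw1 x).sub (hw1 x)
  have f1 : ∀ x y, |(w (y + h) - w y) - (w (x + h) - w x)| ≤ (L * h) * |y - x| :=
    mvt_bound d1 (fun x => by have := e2 x (x+h); rwa [add_sub_cancel_left, abs_of_pos hh] at this)
  have f2 : ∀ x y, |(w1 (y + h) - w1 y) - (w1 (x + h) - w1 x)| ≤ (L * h) * |y - x| :=
    mvt_bound d2 (fun x => by have := hL3 x (x+h); rwa [add_sub_cancel_left, abs_of_pos hh] at this)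
  have d3 : ∀ x, HasDerivAt (fun y => (w (y + h + h) - w (y + h)) - (w (y + h) - w y))
      ((w1 (x + h + h) - w1 (x + h)) - (w1 (x + h) - w1 x)) x := fun x => (sh h d1 x).sub (d1 x)
  have f3 := mvt_bound d3 (C := L * h * h) (fun x => by
    have := f2 x (x+h); rwa [add_sub_cancel_left, abs_of_pos hh] at this)
  refine ⟨fun i => h0 _, fun i => hK _, fun i => ?_, fun i => ?_, fun i => ?_⟩
  · have := e1 (i * h) (i * h + h)
    rw [add_sub_cancel_left, abs_of_pos hh] at this
    push_cast
    rwa [add_mul, one_mul]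
  · have := f1 (i * h - h) (i * h)
    rw [sub_sub_cancel, abs_of_pos hh, sub_add_cancel] at this
    push_cast
    rw [add_mul, sub_mul, one_mul]
    calc _ = _ := by congr 1; ring
      _ ≤ _ := this
      _ = _ := by ring
  · have := f3 (i * h - h) (i * h)
    rw [sub_sub_cancel, abs_of_pos hh, sub_add_cancel] at this
    push_cast
    rw [add_mul, sub_mul, one_mul, add_mul, show (i:ℝ) * h + 2 * h = i * h + h + h by ring]
    calc _ = _ := by congr 1; ring
      _ ≤ _ := this
      _ = _ := by ring

theorem lip_mul {f g : ℝ → ℝ} {M N P Q : ℝ} (hM : ∀ x, |f x| ≤ M) (hN : ∀ x, |g x| ≤ N)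
    (hf : ∀ x y, |f y - f x| ≤ P * |y - x|) (hg : ∀ x y, |g y - g x| ≤ Q * |y - x|) :
    ∀ x y, |f y * g y - f x * g x| ≤ (M * Q + P * N) * |y - x| := by
  intro x y
  have : f y * g y - f x * g x = f y * (g y - g x) + (f y - f x) * g x := by ring
  rw [this]
  refine (abs_add_le _ _).trans ?_
  have a1 := abs_mul_le' (hM y) (hg x y)
  have a2 := abs_mul_le' (hf x y) (hN x)
  nlinarith

theorem c1_lip {f : ℝ → ℝ} (hf : ContDiffOn ℝ 1 f (Icc 0 1)) :
    ∃ L : ℝ, 0 ≤ L ∧ ∀ u ∈ Icc (0:ℝ) 1, ∀ v ∈ Icc (0:ℝ) 1, |f u - f v| ≤ L * |u - v| := by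
  have hu : UniqueDiffOn ℝ (Icc (0:ℝ) 1) := uniqueDiffOn_Icc one_pos
  obtain ⟨C, hC⟩ := isCompact_Icc.exists_bound_of_continuousOn (hf.continuousOn_derivWithin hu le_rfl)
  refine ⟨C, (norm_nonneg _).trans (hC 0 (by simp)), fun u hu v hv => ?_⟩
  have := Convex.norm_image_sub_le_of_norm_derivWithin_le (f := f) (hf.differentiableOn one_ne_zero) hC
    (convex_Icc 0 1) hv hu
  simpa using this

theorem c1_bd {f : ℝ → ℝ} (hf : ContinuousOn f (Icc 0 1)) :
    ∃ M : ℝ, 0 ≤ M ∧ ∀ u ∈ Icc (0:ℝ) 1, |f u| ≤ M := by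
  obtain ⟨C, hC⟩ := isCompact_Icc.exists_bound_of_continuousOn hf
  exact ⟨C, (norm_nonneg _).trans (hC 0 (by simp)), hC⟩

def clp (u : ℝ) : ℝ := max 0 (min u 1)

theorem clp_mem (u : ℝ) : clp u ∈ Icc (0:ℝ) 1 := by
  simp [clp]

theorem clp_eq {u : ℝ} (hu : u ∈ Icc (0:ℝ) 1) : clp u = u := by
  simp [clp, hu.1, hu.2]

theorem clp_cont : Continuous clp := by unfold clp; fun_prop

theorem clp_lip (u v : ℝ) : |clp u - clp v| ≤ |u - v| := by
  unfold clp
  have h1 := abs_max_sub_max_le_max 0 (min u 1) 0 (min v 1)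
  have h2 := abs_min_sub_min_le_max u 1 v 1
  simp at h1 h2
  exact h1.trans h2

/-- primitive of continuous-on-[0,1] function: derivative within -/
theorem prim_eq_clp (f : ℝ → ℝ) {u : ℝ} (hu : u ∈ Icc (0:ℝ) 1) :
    primitive f u = primitive (fun v => f (clp v)) u := by
  unfold primitive
  apply intervalIntegral.integral_congr
  intro v hv
  rw [uIcc_of_le hu.1] at hv
  simp only
  rw [clp_eq ⟨hv.1, hv.2.trans hu.2⟩]

theorem clp_comp_cont {f : ℝ → ℝ} (hf : ContinuousOn f (Icc 0 1)) : Continuous (fun v => f (clp v)) :=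
  hf.comp_continuous clp_cont clp_mem

theorem prim_clp_deriv {f : ℝ → ℝ} (hf : ContinuousOn f (Icc 0 1)) (u : ℝ) :
    HasDerivAt (primitive (fun v => f (clp v))) (f (clp u)) u := by
  have hc := clp_comp_cont hf
  exact intervalIntegral.integral_hasDerivAt_right (hc.intervalIntegrable _ _)
    (hc.stronglyMeasurableAtFilter _ _) hc.continuousAt

theorem prim_deriv {f : ℝ → ℝ} (hf : ContinuousOn f (Icc 0 1)) {u : ℝ} (hu : u ∈ Icc (0:ℝ) 1) :
    HasDerivWithinAt (primitive f) (f u) (Icc 0 1) u := by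
  have := (prim_clp_deriv hf u).hasDerivWithinAt (s := Icc 0 1)
  rw [clp_eq hu] at this
  exact this.congr (fun v hv => prim_eq_clp f hv) (prim_eq_clp f hu)

/-- the inverse of the primitive -/
structure InvHyp (a J : ℝ → ℝ) (c : ℝ) : Prop where
  hc : 0 < c
  lo : ∀ u ∈ Icc (0:ℝ) 1, c ≤ a u
  left : ∀ u ∈ Icc (0:ℝ) 1, J (primitive a u) = u
  right : ∀ w ∈ Icc (0:ℝ) (primitive a 1), J w ∈ Icc (0:ℝ) 1 ∧ primitive a (J w) = w
  der : ∀ w, HasDerivAt J (1 / a (clp (J w))) w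
  lip : ∀ w v, |J w - J v| ≤ c⁻¹ * |w - v|

theorem exists_inv {a : ℝ → ℝ} (ha : ContinuousOn a (Icc 0 1)) {c : ℝ} (hc : 0 < c)
    (lo : ∀ u ∈ Icc (0:ℝ) 1, c ≤ a u) : ∃ J, InvHyp a J c := by
  set A := primitive (fun v => a (clp v)) with hA
  have hd : ∀ u, HasDerivAt A (a (clp u)) u := prim_clp_deriv ha
  have hlo : ∀ u, c ≤ a (clp u) := fun u => lo _ (clp_mem u)
  have hmono : Monotone (fun u => A u - c * u) := by
    apply monotone_of_hasDerivAt_nonneg (f' := fun u => a (clp u) - c * 1)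
    · intro u; exact (hd u).sub ((hasDerivAt_id u).const_mul c)
    · intro u; have := hlo u; simp; linarith
  have hs : StrictMono A := by
    intro u v huv
    have := hmono huv.le
    simp only at this
    nlinarith
  have hA0 : A 0 = 0 := by simp [hA, primitive]
  have hsurj : Surjective A := by
    have hcA : Continuous A := continuous_iff_continuousAt.2 fun u => (hd u).continuousAt
    apply hcA.surjective
    · refine tendsto_atTop_mono' atTop (f₁ := fun u => c * u) ?_ (tendsto_id.const_mul_atTop hc)
      filter_upwards [eventually_ge_atTop 0] with u hu
      have := hmono hu
      simp [hA0] at this; exact this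
    · refine tendsto_atBot_mono' atBot (f₂ := A) (f₁ := fun u => c * u) ?_ (tendsto_id.const_mul_atBot hc)
      filter_upwards [eventually_le_atBot 0] with u hu
      have := hmono hu
      simp [hA0] at this; exact this
  set e := hs.orderIsoOfSurjective A hsurj with he
  have heA : ∀ u, e u = A u := fun u => rfl
  have hAe : ∀ w, A (e.symm w) = w := fun w => by rw [← heA]; simp
  have h01 : ∀ u ∈ Icc (0:ℝ) 1, primitive a u = A u := fun u hu => prim_eq_clp a hu
  refine ⟨e.symm, hc, lo, ?_, ?_, ?_, ?_⟩
  · intro u hu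
    rw [h01 u hu, ← heA]; simp
  · intro w hw
    rw [h01 1 (by simp)] at hw
    have hm : e.symm w ∈ Icc (0:ℝ) 1 := by
      constructor
      · rw [← hs.le_iff_le, hAe, hA0]; exact hw.1
      · rw [← hs.le_iff_le, hAe]; exact hw.2
    exact ⟨hm, by rw [h01 _ hm, hAe]⟩
  · intro w
    rw [one_div]
    refine HasDerivAt.of_local_left_inverse e.symm.continuous.continuousAt (hd _)
      (hc.trans_le (hlo _)).ne' (Eventually.of_forall hAe)
  · have key : ∀ w v, v ≤ w → |e.symm w - e.symm v| ≤ c⁻¹ * |w - v| := by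
      intro w v h
      have h1 : e.symm v ≤ e.symm w := e.symm.monotone h
      rw [abs_of_nonneg (by linarith), abs_of_nonneg (by linarith)]
      have := hmono h1
      simp only [hAe] at this
      rw [inv_mul_eq_div, le_div_iff₀ hc]
      linarith
    intro w v
    rcases le_total v w with h | h
    · exact key w v h
    · rw [abs_sub_comm, abs_sub_comm w v]; exact key v w h

theorem coef_of_inv {a b J : ℝ → ℝ} {c : ℝ} (I : InvHyp a J c)
    (hR2a : ContDiffOn ℝ 2 a (Icc 0 1)) (hR2b : ContDiffOn ℝ 1 b (Icc 0 1)) :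
    ∃ Ab Bb Λ, CoefHyp (fun w => a (clp (J w))) (fun w => b (clp (J w))) c Ab Bb Λ := by
  obtain ⟨L, hL, hLip⟩ := c1_lip (hR2a.of_le one_le_two)
  obtain ⟨L', hL', hLip'⟩ := c1_lip hR2b
  obtain ⟨Ab, -, hAb⟩ := c1_bd hR2a.continuousOn
  obtain ⟨Bb, -, hBb⟩ := c1_bd hR2b.continuousOn
  have hc := I.hc
  have J2 : ∀ u v, |clp (J u) - clp (J v)| ≤ c⁻¹ * |u - v| :=
    fun u v => (clp_lip _ _).trans (I.lip _ _)
  refine ⟨Ab, Bb, (L + L') * c⁻¹, I.hc, fun u => I.lo _ (clp_mem _), 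
    fun u => (le_abs_self _).trans (hAb _ (clp_mem _)), fun u => hBb _ (clp_mem _), by positivity, 
    fun u v => ?_, fun u v => ?_⟩
  · refine (hLip _ (clp_mem _) _ (clp_mem _)).trans ?_
    calc _ ≤ L * (c⁻¹ * |u - v|) := by gcongr; exact J2 u v
      _ ≤ (L + L') * (c⁻¹ * |u - v|) := by gcongr; linarith
      _ = _ := by ring
  · refine (hLip' _ (clp_mem _) _ (clp_mem _)).trans ?_
    calc _ ≤ L' * (c⁻¹ * |u - v|) := by gcongr; exact J2 u v
      _ ≤ (L + L') * (c⁻¹ * |u - v|) := by gcongr; linarith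
      _ = _ := by ring

theorem prim_mono01 {a : ℝ → ℝ} (ha : ContinuousOn a (Icc 0 1)) (ha0 : ∀ u ∈ Icc (0:ℝ) 1, 0 ≤ a u)
    {u v : ℝ} (hu : u ∈ Icc (0:ℝ) 1) (hv : v ∈ Icc (0:ℝ) 1) (huv : u ≤ v) :
    primitive a u ≤ primitive a v := by
  rw [prim_eq_clp a hu, prim_eq_clp a hv]
  exact monotone_of_hasDerivAt_nonneg (prim_clp_deriv ha) (fun u => ha0 _ (clp_mem u)) huv

theorem init_data {a : ℝ → ℝ} (hR2a : ContDiffOn ℝ 2 a (Icc 0 1)) (ha0 : ∀ u ∈ Icc (0:ℝ) 1, 0 ≤ a u)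
    {F0 : ℝ → ℝ} (h01 : ∀ x, F0 x ∈ Icc (0:ℝ) 1)
    (hm3 : ContDiff ℝ 3 F0)
    (hmbd : ∀ k : ℕ, k ≤ 3 → ∃ M : ℝ, ∀ x : ℝ, |iteratedDeriv k F0 x| ≤ M) :
    ∃ L0, 0 ≤ L0 ∧ ∀ h > 0, InitHyp (fun i : ℤ => primitive a (F0 (i * h))) h (primitive a 1) L0 := by
  have hu : UniqueDiffOn ℝ (Icc (0:ℝ) 1) := uniqueDiffOn_Icc one_pos
  set p := derivWithin a (Icc 0 1) with hp
  have hp1 : ContDiffOn ℝ 1 p (Icc 0 1) := hR2a.derivWithin hu (by norm_num)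
  obtain ⟨La, hLa, hLipa⟩ := c1_lip (hR2a.of_le one_le_two)
  obtain ⟨Lp, hLp, hLipp⟩ := c1_lip hp1
  obtain ⟨Ma, hMa, hBa⟩ := c1_bd hR2a.continuousOn
  obtain ⟨Mp, hMp, hBp⟩ := c1_bd hp1.continuousOn
  obtain ⟨M1, hM1⟩ := hmbd 1 (by norm_num)
  obtain ⟨M2, hM2⟩ := hmbd 2 (by norm_num)
  obtain ⟨M3, hM3⟩ := hmbd 3 (by norm_num)
  set f1 := iteratedDeriv 1 F0 with hf1
  set f2 := iteratedDeriv 2 F0 with hf2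
  set f3 := iteratedDeriv 3 F0 with hf3
  have D0 : ∀ x, HasDerivAt F0 (f1 x) x := fun x => by
    have := (hm3.differentiable (by norm_num) x).hasDerivAt
    rwa [hf1, iteratedDeriv_one]
  have D1 : ∀ x, HasDerivAt f1 (f2 x) x := fun x => by
    have := (hm3.differentiable_iteratedDeriv 1 (by norm_num) x).hasDerivAt
    rwa [hf2, iteratedDeriv_succ]
  have D2 : ∀ x, HasDerivAt f2 (f3 x) x := fun x => by
    have := (hm3.differentiable_iteratedDeriv 2 (by norm_num) x).hasDerivAt
    rwa [hf3, iteratedDeriv_succ]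
  have l0 := mvt_bound D0 hM1
  have l1 := mvt_bound D1 hM2
  have l2 := mvt_bound D2 hM3
  have hM1' : 0 ≤ M1 := (abs_nonneg _).trans (hM1 0)
  have hM2' : 0 ≤ M2 := (abs_nonneg _).trans (hM2 0)
  have hM3' : 0 ≤ M3 := (abs_nonneg _).trans (hM3 0)
  have dA : ∀ x, HasDerivAt (fun x => a (F0 x)) (p (F0 x) * f1 x) x := fun x => 
    ((hR2a.differentiableOn (by norm_num) _ (h01 x)).hasDerivWithinAt).comp_hasDerivAt x (D0 x) 
      (Eventually.of_forall h01)
  have dw : ∀ x, HasDerivAt (fun x => primitive a (F0 x)) (a (F0 x) * f1 x) x := fun x => 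
    (prim_deriv hR2a.continuousOn (h01 x)).comp_hasDerivAt x (D0 x) (Eventually.of_forall h01)
  have dw1 : ∀ x, HasDerivAt (fun x => a (F0 x) * f1 x) 
      (p (F0 x) * f1 x * f1 x + a (F0 x) * f2 x) x := fun x => (dA x).mul (D1 x)
  have ba : ∀ x, |a (F0 x)| ≤ Ma := fun x => hBa _ (h01 x)
  have bp : ∀ x, |p (F0 x)| ≤ Mp := fun x => hBp _ (h01 x)
  have la : ∀ x y, |a (F0 y) - a (F0 x)| ≤ (La * M1) * |y - x| := fun x y => by
    refine (hLipa _ (h01 y) _ (h01 x)).trans ?_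
    rw [mul_assoc]; gcongr; exact l0 x y
  have lp : ∀ x y, |p (F0 y) - p (F0 x)| ≤ (Lp * M1) * |y - x| := fun x y => by
    refine (hLipp _ (h01 y) _ (h01 x)).trans ?_
    rw [mul_assoc]; gcongr; exact l0 x y
  have b1 : ∀ x, |a (F0 x) * f1 x| ≤ Ma * M1 := fun x => abs_mul_le' (ba x) (hM1 x)
  have b2a : ∀ x, |p (F0 x) * f1 x| ≤ Mp * M1 := fun x => abs_mul_le' (bp x) (hM1 x)
  have b2b : ∀ x, |p (F0 x) * f1 x * f1 x| ≤ Mp * M1 * M1 := fun x => abs_mul_le' (b2a x) (hM1 x)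
  have b2c : ∀ x, |a (F0 x) * f2 x| ≤ Ma * M2 := fun x => abs_mul_le' (ba x) (hM2 x)
  have q1 := lip_mul bp hM1 lp l1
  have q2 := lip_mul b2a hM1 q1 l1
  have q3 := lip_mul ba hM2 la l2
  set Q2 := Mp * M1 * M2 + (Mp * M2 + Lp * M1 * M1) * M1 with hQ2
  set Q3 := Ma * M3 + La * M1 * M2 with hQ3
  have hQ2' : 0 ≤ Q2 := by positivity
  have hQ3' : 0 ≤ Q3 := by positivity
  set L := Ma * M1 + (Mp * M1 * M1 + Ma * M2) + (Q2 + Q3) with hL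
  have i1 : 0 ≤ Ma * M1 := by positivity
  have i2 : 0 ≤ Mp * M1 * M1 + Ma * M2 := by positivity
  refine ⟨L, by positivity, fun h hh => ?_⟩
  refine init_of_derivs (w := fun x => primitive a (F0 x)) ?_ ?_ dw dw1 ?_ ?_ ?_ h hh
  · intro x
    have := prim_mono01 hR2a.continuousOn ha0 (by simp : (0:ℝ) ∈ Icc (0:ℝ) 1) (h01 x) (h01 x).1
    simpa [primitive] using this
  · intro x
    exact prim_mono01 hR2a.continuousOn ha0 (h01 x) (by simp) (h01 x).2
  · intro x; refine (b1 x).trans ?_; linarith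
  · intro x; refine ((abs_add_le _ _).trans (add_le_add (b2b x) (b2c x))).trans ?_; linarith
  · intro x y
    have : |(p (F0 y) * f1 y * f1 y - p (F0 x) * f1 x * f1 x) + (a (F0 y) * f2 y - a (F0 x) * f2 x)| 
       ≤ (Q2 + Q3) * |y - x| := by
      rw [add_mul]; exact (abs_add_le _ _).trans (add_le_add (q2 x y) (q3 x y))
    calc _ = _ := by congr 1; ring
      _ ≤ _ := this
      _ ≤ _ := by gcongr; linarith

def rho (x : ℝ) : ℝ := (1 + x^2)⁻¹

theorem rho_pos (x : ℝ) : 0 < rho x := by unfold rho; positivity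

theorem rho_cont : Continuous rho := by
  unfold rho
  exact Continuous.inv₀ (by fun_prop) (fun x => by positivity)

theorem rho_int : Integrable rho := integrable_inv_one_add_sq

def rho' (x : ℝ) : ℝ := -(2 * x) / (1 + x^2)^2

theorem rho_deriv (x : ℝ) : HasDerivAt rho (rho' x) x := by
  have h : HasDerivAt (fun x : ℝ => 1 + x^2) (2 * x) x := by
    simpa using ((hasDerivAt_id x).pow 2).const_add 1
  exact h.inv (by positivity)

theorem rho'_le (x : ℝ) : |rho' x| ≤ rho x := by
  unfold rho' rho
  rw [abs_div, abs_neg, abs_of_pos (by positivity : 0 < (1 + x^2)^2), div_le_iff₀ (by positivity)]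
  have : |2 * x| ≤ 1 + x^2 := by
    rw [abs_le]; constructor <;> nlinarith [sq_nonneg (x - 1), sq_nonneg (x + 1)]
  calc |2 * x| ≤ 1 + x^2 := this
    _ = _ := by field_simp

theorem rho'_cont : Continuous rho' := by
  unfold rho'
  exact Continuous.div (by fun_prop) (by fun_prop) (fun x => by positivity)

/-- locally bounded in time, uniformly in space -/
def LB (h : ℝ → ℝ → ℝ) : Prop := ∀ T : ℝ, ∃ N : ℝ, ∀ s, |s| ≤ T → ∀ x, |h s x| ≤ N

theorem LB.mul {f g : ℝ → ℝ → ℝ} (hf : LB f) (hg : LB g) : LB (fun s x => f s x * g s x) := by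
  intro T
  obtain ⟨N, hN⟩ := hf T
  obtain ⟨N', hN'⟩ := hg T
  exact ⟨N * N', fun s hs x => abs_mul_le' (hN s hs x) (hN' s hs x)⟩

theorem LB.add {f g : ℝ → ℝ → ℝ} (hf : LB f) (hg : LB g) : LB (fun s x => f s x + g s x) := by
  intro T
  obtain ⟨N, hN⟩ := hf T
  obtain ⟨N', hN'⟩ := hg T
  exact ⟨N + N', fun s hs x => (abs_add_le _ _).trans (add_le_add (hN s hs x) (hN' s hs x))⟩

theorem LB.const_mul {f : ℝ → ℝ → ℝ} (hf : LB f) (c : ℝ) : LB (fun s x => c * f s x) := by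
  intro T
  obtain ⟨N, hN⟩ := hf T
  exact ⟨|c| * N, fun s hs x => abs_mul_le' le_rfl (hN s hs x)⟩

theorem LB.of_bound {f : ℝ → ℝ → ℝ} {M : ℝ} (hf : ∀ s x, |f s x| ≤ M) : LB f :=
  fun _ => ⟨M, fun s _ x => hf s x⟩

theorem wint_int {h : ℝ → ℝ} (hc : AEStronglyMeasurable h) {N : ℝ} (hb : ∀ x, |h x| ≤ N) : 
    Integrable (fun x => rho x * h x) := by
  refine Integrable.mono' (rho_int.mul_const N) (rho_cont.aestronglyMeasurable.mul hc) 
    (Eventually.of_forall fun x => ?_)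
  rw [Real.norm_eq_abs, abs_mul, abs_of_pos (rho_pos x)]
  have := hb x
  have := rho_pos x
  gcongr

theorem LB.int {h : ℝ → ℝ → ℝ} (hb : LB h) (hc : Continuous (uncurry h)) (s : ℝ) :
    Integrable (fun x => rho x * h s x) := by
  obtain ⟨N, hN⟩ := hb |s|
  exact wint_int (hc.comp (by fun_prop : Continuous fun x : ℝ => (s, x))).aestronglyMeasurable (hN s le_rfl)

theorem LB.cont {h : ℝ → ℝ → ℝ} (hb : LB h) (hc : Continuous (uncurry h)) :
    Continuous (fun s => ∫ x, rho x * h s x) := by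
  rw [continuous_iff_continuousAt]
  intro s
  obtain ⟨N, hN⟩ := hb (|s| + 1)
  have hnear : ∀ᶠ r in 𝓝 s, |r| ≤ |s| + 1 := by
    have : Continuous (fun r : ℝ => |r|) := by fun_prop
    filter_upwards [this.continuousAt.eventually_lt (continuousAt_const (y := |s| + 1)) (by linarith)] with r hr using hr.le
  refine continuousAt_of_dominated (bound := fun x => rho x * N) ?_ ?_ (rho_int.mul_const N) ?_
  · exact Eventually.of_forall fun r => (hb.int hc r).aestronglyMeasurable
  · filter_upwards [hnear] with r hr
    refine Eventually.of_forall fun x => ?_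
    rw [Real.norm_eq_abs, abs_mul, abs_of_pos (rho_pos x)]
    have := hN r hr x
    have := rho_pos x
    gcongr
  · refine Eventually.of_forall fun x => ?_
    have : Continuous (fun r => rho x * h r x) := 
      continuous_const.mul (hc.comp (by fun_prop : Continuous fun r : ℝ => (r, x)))
    exact this.continuousAt

structure MollHyp (u p p' q : ℝ → ℝ → ℝ) (M N : ℝ) : Prop where
  cu : Continuous (uncurry u)
  cp : Continuous (uncurry p)
  cp' : Continuous (uncurry p')
  cq : Continuous (uncurry q)
  bu : ∀ s x, |u s x| ≤ M
  bp : ∀ s x, |p s x| ≤ M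
  bp' : ∀ s x, |p' s x| ≤ N
  bq : ∀ s x, |q s x| ≤ M
  dp : ∀ s x, HasDerivAt (p s) (p' s x) x
  dΨ : ∀ t, 0 ≤ t → ∀ x, HasDerivAt (fun y => ∫ s in (0:ℝ)..t, (1/2 * p' s y - q s y)) (u t x) x

def PsiOf (p' q : ℝ → ℝ → ℝ) (t x : ℝ) : ℝ := ∫ s in (0:ℝ)..t, (1/2 * p' s x - q s x)

def XOf (u p q : ℝ → ℝ → ℝ) (η s : ℝ) : ℝ :=
  ∫ x, rho x * (-(1/2) * (u s x * p s x) + η * (p s x * p s x + q s x * q s x))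

section
variable {u p p' q : ℝ → ℝ → ℝ} {M N : ℝ}

theorem MollHyp.cΦ (H : MollHyp u p p' q M N) : Continuous (uncurry fun s x => 1/2 * p' s x - q s x) := by
  have h1 := H.cp'
  have h2 := H.cq
  exact (continuous_const.mul h1).sub h2

theorem MollHyp.bΦ (H : MollHyp u p p' q M N) (s x : ℝ) : |1/2 * p' s x - q s x| ≤ N + M := by
  have h1 := abs_le.1 (H.bp' s x)
  have h2 := abs_le.1 (H.bq s x)
  have h3 := (abs_nonneg _).trans (H.bp' s x)
  rw [abs_le]; constructor <;> linarith

theorem MollHyp.cPsi (H : MollHyp u p p' q M N) : Continuous (uncurry (PsiOf p' q)) := by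
  have h : Continuous (uncurry fun (z : ℝ × ℝ) (s : ℝ) => 1/2 * p' s z.2 - q s z.2) :=
    H.cΦ.comp (by fun_prop : Continuous fun z : (ℝ × ℝ) × ℝ => (z.2, z.1.2))
  exact intervalIntegral.continuous_parametric_intervalIntegral_of_continuous h continuous_fst

theorem MollHyp.dtPsi (H : MollHyp u p p' q M N) (t x : ℝ) : 
    HasDerivAt (fun t => PsiOf p' q t x) (1/2 * p' t x - q t x) t := by
  have hc : Continuous fun s => 1/2 * p' s x - q s x := 
    H.cΦ.comp (by fun_prop : Continuous fun s : ℝ => (s, x))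
  exact intervalIntegral.integral_hasDerivAt_right (hc.intervalIntegrable _ _)
    (hc.stronglyMeasurableAtFilter _ _) hc.continuousAt

theorem MollHyp.bPsi (H : MollHyp u p p' q M N) : LB (PsiOf p' q) := by
  intro T
  refine ⟨(N + M) * T, fun s hs x => ?_⟩
  have := intervalIntegral.norm_integral_le_of_norm_le_const (a := 0) (b := s) (C := N + M)
    (f := fun s => 1/2 * p' s x - q s x) (fun r _ => H.bΦ r x)
  rw [sub_zero] at this
  refine this.trans ?_
  have := (abs_nonneg _).trans (H.bΦ 0 0)
  gcongr

theorem MollHyp.dE (H : MollHyp u p p' q M N) (t : ℝ) : 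
    HasDerivAt (fun t => ∫ x, rho x * (PsiOf p' q t x * PsiOf p' q t x))
      (∫ x, rho x * (2 * (PsiOf p' q t x * (1/2 * p' t x - q t x)))) t := by
  have hΨ2 := H.bPsi.mul H.bPsi
  have cΨ2 : Continuous (uncurry fun t x => PsiOf p' q t x * PsiOf p' q t x) := H.cPsi.mul H.cPsi
  have hb := (H.bPsi.mul (LB.of_bound H.bΦ)).const_mul 2
  have hc : Continuous (uncurry fun t x => 2 * (PsiOf p' q t x * (1/2 * p' t x - q t x))) := 
    continuous_const.mul (H.cPsi.mul H.cΦ)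
  obtain ⟨N', hN⟩ := hb (|t| + 1)
  refine (hasDerivAt_integral_of_dominated_loc_of_deriv_le
    (F' := fun t x => rho x * (2 * (PsiOf p' q t x * (1/2 * p' t x - q t x)))) (Metric.ball_mem_nhds t one_pos)
    (Eventually.of_forall fun r => (hΨ2.int cΨ2 r).aestronglyMeasurable) (hΨ2.int cΨ2 t)
    (hb.int hc t).aestronglyMeasurable (bound := fun x => rho x * N') ?_ (rho_int.mul_const N') ?_).2
  · refine Eventually.of_forall fun x r hr => ?_
    rw [Real.norm_eq_abs, abs_mul, abs_of_pos (rho_pos x)]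
    have h1 : |r| ≤ |t| + 1 := by
      rw [Metric.mem_ball, Real.dist_eq] at hr
      have := abs_add_le (r - t) t
      rw [sub_add_cancel] at this; linarith
    have := hN r h1 x
    have := rho_pos x
    gcongr
  · refine Eventually.of_forall fun x r hr => ?_
    have := ((H.dtPsi r x).mul (H.dtPsi r x)).const_mul (rho x)
    exact this.congr_deriv (by ring)

theorem MollHyp.ibp (H : MollHyp u p p' q M N) {t : ℝ} (ht : 0 ≤ t) :
    ∫ x, rho x * PsiOf p' q t x * p' t x = 
      - ∫ x, (rho' x * PsiOf p' q t x + rho x * u t x) * p t x := by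
  have sec : ∀ {f : ℝ → ℝ → ℝ}, Continuous (uncurry f) → Continuous (f t) := fun hf =>
    hf.comp (by fun_prop : Continuous fun x : ℝ => (t, x))
  obtain ⟨N', hN'⟩ := H.bPsi |t|
  have hN := hN' t le_rfl
  have cP : Continuous (PsiOf p' q t) := sec H.cPsi
  have cp := sec H.cp
  have cp' := sec H.cp'
  have cu := sec H.cu
  apply integral_mul_deriv_eq_deriv_mul_of_integrable (u := fun x => rho x * PsiOf p' q t x)
    (u' := fun x => rho' x * PsiOf p' q t x + rho x * u t x)
  · exact fun x _ => (rho_deriv x).mul (H.dΨ t ht x)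
  · exact fun x _ => H.dp t x
  · have := wint_int (h := fun x => PsiOf p' q t x * p' t x) (cP.mul cp').aestronglyMeasurable
      (fun x => abs_mul_le' (hN x) (H.bp' t x))
    refine this.congr (Eventually.of_forall fun x => ?_)
    simp [mul_assoc]
  · have i1 := wint_int (h := fun x => u t x * p t x) (cu.mul cp).aestronglyMeasurable
      (fun x => abs_mul_le' (H.bu t x) (H.bp t x))
    have i2 : Integrable (fun x => rho' x * (PsiOf p' q t x * p t x)) := by
      refine Integrable.mono' (rho_int.mul_const (N' * M)) (rho'_cont.mul (cP.mul cp)).aestronglyMeasurable 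
        (Eventually.of_forall fun x => ?_)
      exact abs_mul_le' (rho'_le x) (abs_mul_le' (hN x) (H.bp t x))
    refine (i2.add i1).congr (Eventually.of_forall fun x => ?_)
    simp; ring
  · have := wint_int (h := fun x => PsiOf p' q t x * p t x) (cP.mul cp).aestronglyMeasurable
      (fun x => abs_mul_le' (hN x) (H.bp t x))
    refine this.congr (Eventually.of_forall fun x => ?_)
    simp [mul_assoc]

theorem MollHyp.XLB (H : MollHyp u p p' q M N) (η : ℝ) : 
    LB (fun s x => -(1/2) * (u s x * p s x) + η * (p s x * p s x + q s x * q s x)) := by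
  have hu := LB.of_bound H.bu
  have hp := LB.of_bound H.bp
  have hq := LB.of_bound H.bq
  exact ((hu.mul hp).const_mul _).add (((hp.mul hp).add (hq.mul hq)).const_mul _)

theorem MollHyp.Xc (H : MollHyp u p p' q M N) (η : ℝ) : 
    Continuous (uncurry fun s x => -(1/2) * (u s x * p s x) + η * (p s x * p s x + q s x * q s x)) := 
  (continuous_const.mul (H.cu.mul H.cp)).add 
    (continuous_const.mul ((H.cp.mul H.cp).add (H.cq.mul H.cq)))

theorem MollHyp.Xcont (H : MollHyp u p p' q M N) (η : ℝ) : Continuous (XOf u p q η) :=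
  (H.XLB η).cont (H.Xc η)

theorem MollHyp.dE_le (H : MollHyp u p p' q M N) {η t : ℝ} (hη : 0 < η) (ht : 0 ≤ t) : 
    ∫ x, rho x * (2 * (PsiOf p' q t x * (1/2 * p' t x - q t x))) ≤ 
      2 * XOf u p q η t + η⁻¹ * ∫ x, rho x * (PsiOf p' q t x * PsiOf p' q t x) := by
  have hΨ2 := H.bPsi.mul H.bPsi
  have cΨ2 : Continuous (uncurry fun t x => PsiOf p' q t x * PsiOf p' q t x) := H.cPsi.mul H.cPsi
  have bq := LB.of_bound H.bq
  have bp' := LB.of_bound H.bp'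
  have bp := LB.of_bound H.bp
  have bu := LB.of_bound H.bu
  have cc : Continuous (uncurry fun t x => PsiOf p' q t x * p' t x) := H.cPsi.mul H.cp'
  have cd : Continuous (uncurry fun t x => PsiOf p' q t x * q t x) := H.cPsi.mul H.cq
  have ce : Continuous (uncurry fun t x => u t x * p t x) := H.cu.mul H.cp
  have i1 := (H.bPsi.mul bp').int cc t
  have i2 := ((H.bPsi.mul bq).int cd t).const_mul 2
  have i3 := (bu.mul bp).int ce t
  have sec : ∀ {f : ℝ → ℝ → ℝ}, Continuous (uncurry f) → Continuous (f t) := fun hf =>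
    hf.comp (by fun_prop : Continuous fun x : ℝ => (t, x))
  obtain ⟨N', hN'⟩ := H.bPsi |t|
  have hN := hN' t le_rfl
  have cP : Continuous (PsiOf p' q t) := sec H.cPsi
  have cp := sec H.cp
  have i4 : Integrable (fun x => rho' x * (PsiOf p' q t x * p t x)) := by
    refine Integrable.mono' (rho_int.mul_const (N' * M)) (rho'_cont.mul (cP.mul cp)).aestronglyMeasurable 
      (Eventually.of_forall fun x => ?_)
    exact abs_mul_le' (rho'_le x) (abs_mul_le' (hN x) (H.bp t x))
  have e1 : ∫ x, rho x * (2 * (PsiOf p' q t x * (1/2 * p' t x - q t x))) = 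
      ∫ x, (-((rho' x * PsiOf p' q t x + rho x * u t x) * p t x) - 2 * (rho x * (PsiOf p' q t x * q t x))) := by
    rw [integral_sub _ i2, integral_neg, ← H.ibp ht]
    · rw [← integral_sub _ i2]
      · congr 1; ext x; ring
      · refine i1.congr (Eventually.of_forall fun x => ?_); simp only; ring
    · refine (i4.add i3).neg.congr (Eventually.of_forall fun x => ?_); simp; ring
  rw [e1, XOf, ← integral_const_mul, ← integral_const_mul, 
    ← integral_add (((H.XLB η).int (H.Xc η) t).const_mul 2) ((hΨ2.int cΨ2 t).const_mul _)]
  apply integral_mono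
  · refine Integrable.sub ?_ i2
    refine (i4.add i3).neg.congr (Eventually.of_forall fun x => ?_); simp; ring
  · exact (((H.XLB η).int (H.Xc η) t).const_mul 2).add ((hΨ2.int cΨ2 t).const_mul _)
  · intro x
    simp only
    set ψ := PsiOf p' q t x
    have hr := rho_pos x
    have h1 : -(rho' x * ψ * p t x) ≤ rho x * (|ψ| * |p t x|) := by
      refine (neg_le_abs _).trans ?_
      rw [abs_mul, abs_mul, mul_assoc]
      have := rho'_le x
      gcongr
    have h2 : -(ψ * q t x) ≤ |ψ| * |q t x| := by
      rw [← abs_mul]; exact neg_le_abs _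
    have h3 : |ψ| * |p t x| ≤ 2 * η * (p t x * p t x) + η⁻¹ * (ψ * ψ) / 8 := by
      rw [← abs_mul_abs_self (p t x), ← abs_mul_abs_self ψ]
      have : 0 ≤ η⁻¹ * (|ψ| - 4 * η * |p t x|)^2 := by positivity
      have e : η⁻¹ * (|ψ| - 4 * η * |p t x|)^2 = η⁻¹ * (|ψ| * |ψ|) - 8 * (|ψ| * |p t x|) + 16 * η * (|p t x| * |p t x|) := by
        field_simp; ring
      linarith
    have h4 : 2 * (|ψ| * |q t x|) ≤ 2 * η * (q t x * q t x) + η⁻¹ * (ψ * ψ) / 2 := by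
      rw [← abs_mul_abs_self (q t x), ← abs_mul_abs_self ψ]
      have : 0 ≤ η⁻¹ * (|ψ| - 2 * η * |q t x|)^2 := by positivity
      have e : η⁻¹ * (|ψ| - 2 * η * |q t x|)^2 = η⁻¹ * (|ψ| * |ψ|) - 4 * (|ψ| * |q t x|) + 4 * η * (|q t x| * |q t x|) := by
        field_simp; ring
      linarith
    have h5 : 0 ≤ η⁻¹ * (ψ * ψ) := mul_nonneg (by positivity) (mul_self_nonneg ψ)
    have h6 : |ψ| * |p t x| + 2 * -(ψ * q t x) ≤ 
       2 * (η * (p t x * p t x + q t x * q t x)) + η⁻¹ * (ψ * ψ) := by linarith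
    have h7 := mul_le_mul_of_nonneg_left h6 hr.le
    nlinarith

theorem MollHyp.energy (H : MollHyp u p p' q M N) {η T : ℝ} (hη : 0 < η) (hT : 0 ≤ T) : 
    ∫ x, rho x * (PsiOf p' q T x * PsiOf p' q T x) ≤ 
      (∫ s in (0:ℝ)..T, 2 * max (XOf u p q η s) 0) * Real.exp (η⁻¹ * T) := by
  set E := fun t => ∫ x, rho x * (PsiOf p' q t x * PsiOf p' q t x) with hE
  set X := fun s => 2 * max (XOf u p q η s) 0 with hX
  have hXc : Continuous X := by
    have := H.Xcont η
    fun_prop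
  have hXn : ∀ s, 0 ≤ X s := fun s => by simp [hX]
  set δ := ∫ s in (0:ℝ)..T, X s with hδ
  have dX : ∀ t, HasDerivAt (fun t => ∫ s in (0:ℝ)..t, X s) (X t) t := fun t =>
    intervalIntegral.integral_hasDerivAt_right (hXc.intervalIntegrable _ _)
      (hXc.stronglyMeasurableAtFilter _ _) hXc.continuousAt
  have dd : ∀ t, HasDerivAt (fun t => E t - ∫ s in (0:ℝ)..t, X s) 
     ((∫ x, rho x * (2 * (PsiOf p' q t x * (1/2 * p' t x - q t x)))) - X t) t := fun t => (H.dE t).sub (dX t)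
  have hmonoX : ∀ t ∈ Ico 0 T, ∫ s in (0:ℝ)..t, X s ≤ δ := fun t ht => 
    intervalIntegral.integral_mono_interval le_rfl ht.1 ht.2.le (Eventually.of_forall hXn) 
      (hXc.intervalIntegrable _ _)
  have key := le_gronwallBound_of_liminf_deriv_right_le (f := fun t => E t - ∫ s in (0:ℝ)..t, X s)
    (f' := fun t => (∫ x, rho x * (2 * (PsiOf p' q t x * (1/2 * p' t x - q t x)))) - X t) 
    (δ := 0) (K := η⁻¹) (ε := η⁻¹ * δ) (a := 0) (b := T)
    (fun t _ => (dd t).continuousAt.continuousWithinAt)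
    (fun t _ r hr => (dd t).hasDerivWithinAt.liminf_right_slope_le hr) 
    (by simp [hE, PsiOf]) (by
      intro t ht
      have h1 := H.dE_le hη ht.1
      have h2 : 2 * XOf u p q η t ≤ X t := by simp [hX]
      have h3 := hmonoX t ht
      have h4 : η⁻¹ * ∫ s in (0:ℝ)..t, X s ≤ η⁻¹ * δ := by gcongr
      simp only [hE] at *
      linarith) T ⟨hT, le_rfl⟩
  rw [gronwallBound_of_K_ne_0 (by positivity)] at key
  have e : η⁻¹ * δ / η⁻¹ = δ := by field_simp
  rw [e, sub_zero] at key
  simp only [zero_mul, zero_add] at key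
  change E T ≤ _
  have : E T ≤ δ + δ * (Real.exp (η⁻¹ * T) - 1) := by linarith
  linarith
end

def cv (k f : ℝ → ℝ) (x : ℝ) : ℝ := ∫ y, k (x - y) * f y

theorem cv_eq (k f : ℝ → ℝ) : 
    MeasureTheory.convolution k f (ContinuousLinearMap.lsmul ℝ ℝ) volume = cv k f := by
  ext x
  rw [convolution_eq_swap]
  rfl

theorem loc_int_of_bdd {f : ℝ → ℝ} {M : ℝ} (hf : Measurable f) (hb : ∀ x, |f x| ≤ M) : 
    LocallyIntegrable f := by
  have : LocallyIntegrable (fun _ : ℝ => M) := continuous_const.locallyIntegrable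
  refine this.mono hf.aestronglyMeasurable (Eventually.of_forall fun x => ?_)
  rw [Real.norm_eq_abs, Real.norm_eq_abs]
  exact (hb x).trans (le_abs_self _)

theorem cv_deriv {k f : ℝ → ℝ} {M : ℝ} (hk : ContDiff ℝ 1 k) (hs : HasCompactSupport k)
    (hf : Measurable f) (hb : ∀ x, |f x| ≤ M) (x : ℝ) : 
    HasDerivAt (cv k f) (cv (deriv k) f x) x := by
  rw [← cv_eq, ← cv_eq]
  exact hs.hasDerivAt_convolution_left _ hk (loc_int_of_bdd hf hb) x

theorem cv_integrable {k f : ℝ → ℝ} {M : ℝ} (hk : Continuous k) (hs : HasCompactSupport k)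
    (hf : Measurable f) (hb : ∀ x, |f x| ≤ M) (x : ℝ) : Integrable (fun y => k (x - y) * f y) := by
  have hk1 : Integrable k := hk.integrable_of_hasCompactSupport hs
  have h2 : Integrable (fun y => k (x - y)) := hk1.comp_sub_left x
  exact h2.mul_bdd (c := M) hf.aestronglyMeasurable (Eventually.of_forall hb)

theorem cv_bound {k f : ℝ → ℝ} {M : ℝ} (hk : Continuous k) (hs : HasCompactSupport k)
    (hb : ∀ x, |f x| ≤ M) (x : ℝ) : |cv k f x| ≤ (∫ y, |k y|) * M := by
  have hk1 : Integrable k := hk.integrable_of_hasCompactSupport hs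
  have h2 : Integrable (fun y => |k (x - y)| * M) := ((hk1.comp_sub_left x).abs).mul_const M
  calc |cv k f x| ≤ ∫ y, |k (x - y)| * M := by
        refine norm_integral_le_of_norm_le (f := fun y => k (x - y) * f y) h2 (Eventually.of_forall fun y => ?_)
        exact abs_mul_le' le_rfl (hb y)
    _ = (∫ y, |k (x - y)|) * M := integral_mul_const _ _
    _ = _ := by rw [integral_sub_left_eq_self (fun y => |k y|) volume x]

theorem cv_cont {k : ℝ → ℝ} {f : ℝ → ℝ → ℝ} {M : ℝ} (hk : Continuous k) (hs : HasCompactSupport k)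
    (hf : ∀ s, Measurable (f s)) (hb : ∀ s x, |f s x| ≤ M) 
    (hc : ∀ s, ∀ᵐ y, ContinuousAt (fun r => f r y) s) : 
    Continuous (uncurry fun s x => cv k (f s) x) := by
  rw [continuous_iff_continuousAt]
  rintro ⟨s, x⟩
  obtain ⟨R, hR⟩ := hs.isBounded.subset_closedBall 0
  obtain ⟨C, hC⟩ := hk.bounded_above_of_compact_support hs
  have hM : 0 ≤ M := (abs_nonneg _).trans (hb 0 0)
  have hC0 : 0 ≤ C := (norm_nonneg _).trans (hC 0)
  have hz : ∀ z, R < |z| → k z = 0 := fun z hz => by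
    by_contra h
    have := hR (subset_tsupport _ h)
    rw [mem_closedBall_zero_iff, Real.norm_eq_abs] at this
    linarith
  refine continuousAt_of_dominated 
    (F := fun (z : ℝ × ℝ) y => k (z.2 - y) * f z.1 y)
    (bound := (Icc (x - R - 1) (x + R + 1)).indicator fun _ => C * M) ?_ ?_ ?_ ?_
  · refine Eventually.of_forall fun z => ?_
    exact (cv_integrable hk hs (hf z.1) (hb z.1) z.2).aestronglyMeasurable
  · have : ∀ᶠ z : ℝ × ℝ in 𝓝 (s, x), |z.2 - x| < 1 := by
      have : Continuous (fun z : ℝ × ℝ => |z.2 - x|) := by fun_prop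
      exact this.continuousAt.eventually_lt continuousAt_const (by simp)
    filter_upwards [this] with z hz1
    refine Eventually.of_forall fun y => ?_
    by_cases hy : y ∈ Icc (x - R - 1) (x + R + 1)
    · rw [indicator_of_mem hy]
      exact abs_mul_le' (hC _) (hb _ _)
    · rw [indicator_of_notMem hy, hz, zero_mul, norm_zero]
      by_contra h
      apply hy
      rw [not_lt, abs_le] at h
      rw [abs_lt] at hz1
      constructor <;> linarith
  · exact (integrable_indicator_iff measurableSet_Icc).2 continuous_const.integrableOn_Icc
  · filter_upwards [hc s] with y hy
    have h1 : Continuous (fun z : ℝ × ℝ => k (z.2 - y)) := by fun_prop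
    have h2 : ContinuousAt (fun z : ℝ × ℝ => f z.1 y) (s, x) := 
      ContinuousAt.comp (f := fun z : ℝ × ℝ => z.1) (g := fun r => f r y) hy continuousAt_fst
    exact h1.continuousAt.mul h2

structure UHyp (u p q : ℝ → ℝ → ℝ) (c M : ℝ) : Prop where
  hc : 0 < c
  hM : 0 < M
  mu : ∀ s, Measurable (u s)
  mp : ∀ s, Measurable (p s)
  mq : ∀ s, Measurable (q s)
  bu : ∀ s x, |u s x| ≤ M
  bp : ∀ s x, |p s x| ≤ M
  bq : ∀ s x, |q s x| ≤ M
  cu : ∀ s, ∀ᵐ y, ContinuousAt (fun r => u r y) s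
  cp : ∀ s, ∀ᵐ y, ContinuousAt (fun r => p r y) s
  cq : ∀ s, ∀ᵐ y, ContinuousAt (fun r => q r y) s
  ell : ∀ s x, c * (u s x * u s x) ≤ u s x * p s x
  lp : ∀ s x, |p s x| ≤ M * |u s x|
  lq : ∀ s x, |q s x| ≤ M * |u s x|
  ident : ∀ φ : ℝ → ℝ, ContDiff ℝ (⊤ : ℕ∞) φ → HasCompactSupport φ → ∀ t, 0 ≤ t → 
    ∫ x, φ x * u t x = ∫ s in (0:ℝ)..t, ((1/2) * (∫ x, deriv (deriv φ) x * p s x) + ∫ x, deriv φ x * q s x)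

section
variable {u p q : ℝ → ℝ → ℝ} {c M : ℝ}

theorem UHyp.moll (H : UHyp u p q c M) {k : ℝ → ℝ} (hk : ContDiff ℝ (⊤ : ℕ∞) k) (hs : HasCompactSupport k)
    (h0 : ∀ x, 0 ≤ k x) (h1 : ∫ x, k x = 1) : 
    MollHyp (fun s x => cv k (u s) x) (fun s x => cv k (p s) x) (fun s x => cv (deriv k) (p s) x)
      (fun s x => cv k (q s) x) M ((∫ y, |deriv k y|) * M) := by
  have hkc := hk.continuous
  have hk' : ContDiff ℝ (⊤ : ℕ∞) (deriv k) := (contDiff_infty_iff_deriv.1 hk).2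
  have hk'' : ContDiff ℝ (⊤ : ℕ∞) (deriv (deriv k)) := (contDiff_infty_iff_deriv.1 hk').2
  have hs' : HasCompactSupport (deriv k) := hs.deriv
  have hs'' : HasCompactSupport (deriv (deriv k)) := hs'.deriv
  have hdk : Differentiable ℝ k := (contDiff_infty_iff_deriv.1 hk).1
  have hdk' : Differentiable ℝ (deriv k) := (contDiff_infty_iff_deriv.1 hk').1
  have hk1 : ∀ {f : ℝ → ℝ}, (∀ x, |f x| ≤ M) → ∀ x, |cv k f x| ≤ M := by
    intro f hf x
    have := cv_bound hkc hs hf x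
    simp_rw [abs_of_nonneg (h0 _)] at this
    rwa [h1, one_mul] at this
  refine ⟨cv_cont hkc hs H.mu H.bu H.cu, cv_cont hkc hs H.mp H.bp H.cp, 
    cv_cont hk'.continuous hs' H.mp H.bp H.cp, cv_cont hkc hs H.mq H.bq H.cq, fun s x => hk1 (H.bu s) x,
    fun s x => hk1 (H.bp s) x, fun s x => cv_bound hk'.continuous hs' (H.bp s) x, fun s x => hk1 (H.bq s) x,
    fun s x => cv_deriv (hk.of_le (by simp)) hs (H.mp s) (H.bp s) x, ?_⟩
  intro t ht x
  have c1 := cv_cont hk'.continuous hs' H.mp H.bp H.cp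
  have c2 := cv_cont hkc hs H.mq H.bq H.cq
  have c3 := cv_cont hk''.continuous hs'' H.mp H.bp H.cp
  have c4 := cv_cont hk'.continuous hs' H.mq H.bq H.cq
  have sec : ∀ {f : ℝ → ℝ → ℝ}, Continuous (uncurry f) → ∀ y, Continuous (fun s => f s y) := fun hf y =>
    hf.comp (by fun_prop : Continuous fun s : ℝ => (s, y))
  have g1 : ∀ y, Continuous fun s => 1/2 * cv (deriv k) (p s) y - cv k (q s) y := fun y => 
    (continuous_const.mul (sec c1 y)).sub (sec c2 y)
  have g2 : Continuous fun s => 1/2 * cv (deriv (deriv k)) (p s) x - cv (deriv k) (q s) x := 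
    (continuous_const.mul (sec c3 x)).sub (sec c4 x)
  set B := 1/2 * ((∫ y, |deriv (deriv k) y|) * M) + (∫ y, |deriv k y|) * M with hB
  have key := (intervalIntegral.hasDerivAt_integral_of_dominated_loc_of_deriv_le (μ := volume) (a := 0) (b := t)
    (F := fun y s => 1/2 * cv (deriv k) (p s) y - cv k (q s) y)
    (F' := fun y s => 1/2 * cv (deriv (deriv k)) (p s) y - cv (deriv k) (q s) y) (x₀ := x) (s := univ)
    (bound := fun _ => B) univ_mem 
    (Eventually.of_forall fun y => (g1 y).aestronglyMeasurable) ((g1 x).intervalIntegrable _ _)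
    g2.aestronglyMeasurable (Eventually.of_forall fun s _ y _ => by
      have b1 := cv_bound hk''.continuous hs'' (H.bp s) y
      have b2 := cv_bound hk'.continuous hs' (H.bq s) y
      rw [Real.norm_eq_abs, abs_le]
      rw [abs_le] at b1 b2
      constructor <;> linarith [b1.1, b1.2, b2.1, b2.2]) (by simp) 
    (Eventually.of_forall fun s _ y _ => 
      ((cv_deriv (hk'.of_le (by simp)) hs' (H.mp s) (H.bp s) y).const_mul _).sub
        (cv_deriv (hk.of_le (by simp)) hs (H.mq s) (H.bq s) y))).2
  refine key.congr_deriv ?_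
  have d1 : deriv (fun y => k (x - y)) = fun y => - deriv k (x - y) := by
    ext y
    rw [deriv_comp_const_sub]
  have d2 : deriv (fun y => - deriv k (x - y)) = fun y => deriv (deriv k) (x - y) := by
    ext y
    rw [deriv.fun_neg, deriv_comp_const_sub, neg_neg]
  have id := H.ident (fun y => k (x - y)) (hk.comp (by fun_prop)) 
    (hs.comp_homeomorph (Homeomorph.subLeft x)) t ht
  rw [d1, d2] at id
  change _ = ∫ y, k (x - y) * u t y
  rw [id]
  congr 1
  ext s
  simp only [cv, neg_mul, integral_neg]
  ring

/-- weak uniqueness -/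
theorem UHyp.ae_zero (H : UHyp u p q c M) {t : ℝ} (ht : 0 ≤ t) : ∀ᵐ x, u t x = 0 := by
  have hc := H.hc
  have hM := H.hM
  set K : ℕ → ContDiffBump (0:ℝ) := fun n => 
    ⟨1 / ((n:ℝ) + 1), 2 * (1 / ((n:ℝ) + 1)), by positivity, by
      have : 0 < 1 / ((n:ℝ) + 1) := by positivity
      linarith⟩ with hK
  have hKlim : Tendsto (fun n => (K n).rOut) atTop (𝓝 0) := by
    have := (tendsto_one_div_add_atTop_nhds_zero_nat (𝕜 := ℝ)).const_mul 2
    rwa [mul_zero] at this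
  set k : ℕ → ℝ → ℝ := fun n => (K n).normed volume with hk
  have hkd : ∀ n, ContDiff ℝ (⊤ : ℕ∞) (k n) := fun n => (K n).contDiff_normed
  have hks : ∀ n, HasCompactSupport (k n) := fun n => (K n).hasCompactSupport_normed
  have hk0 : ∀ n x, 0 ≤ k n x := fun n x => (K n).nonneg_normed x
  have hk1 : ∀ n, ∫ x, k n x = 1 := fun n => (K n).integral_normed
  have lim : ∀ {f : ℝ → ℝ}, Measurable f → (∀ x, |f x| ≤ M) → 
      ∀ᵐ x, Tendsto (fun n => cv (k n) f x) atTop (𝓝 (f x)) := by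
    intro f hf hb
    have := ContDiffBump.ae_convolution_tendsto_right_of_locallyIntegrable (μ := volume) (g := f) 
      (φ := K) (l := atTop) (K := 2) hKlim (Eventually.of_forall fun n => le_rfl) (loc_int_of_bdd hf hb)
    filter_upwards [this] with x hx
    simp_rw [cv_eq] at hx
    exact hx
  have Mo := fun n => H.moll (hkd n) (hks n) (hk0 n) (hk1 n)
  set η := c / (4 * M^2) with hη
  have hη0 : 0 < η := by positivity
  set un := fun n s x => cv (k n) (u s) x with hun
  set pn := fun n s x => cv (k n) (p s) x with hpn
  set pn' := fun n s x => cv (deriv (k n)) (p s) x with hpn'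
  set qn := fun n s x => cv (k n) (q s) x with hqn
  have hbd : ∀ {u p q : ℝ}, |u| ≤ M → |p| ≤ M → |q| ≤ M → 
      |-(1/2) * (u * p) + η * (p * p + q * q)| ≤ (1/2) * (M * M) + η * (M * M + M * M) := by
    intro u p q hu hp hq
    have a1 := abs_le.1 (abs_mul_le' hu hp)
    have a2 := abs_le.1 (abs_mul_le' hp hp)
    have a3 := abs_le.1 (abs_mul_le' hq hq)
    have a4 : η * (p * p + q * q) ≤ η * (M * M + M * M) := by
      apply mul_le_mul_of_nonneg_left _ hη0.le; linarith [a2.2, a3.2]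
    have a5 : 0 ≤ η * (p * p + q * q) := by
      apply mul_nonneg hη0.le; nlinarith
    rw [abs_le]; constructor <;> linarith [a1.1, a1.2]
  set B := (1/2) * (M * M) + η * (M * M + M * M) with hB
  have hXlim : ∀ s, Tendsto (fun n => XOf (un n) (pn n) (qn n) η s) atTop (𝓝 (XOf u p q η s)) := by
    intro s
    unfold XOf
    refine tendsto_integral_of_dominated_convergence (fun x => rho x * B) ?_ (rho_int.mul_const B) ?_ ?_
    · intro n
      exact (((Mo n).XLB η).int ((Mo n).Xc η) s).aestronglyMeasurable
    · intro n
      refine Eventually.of_forall fun x => ?_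
      rw [Real.norm_eq_abs, abs_mul, abs_of_pos (rho_pos x)]
      refine mul_le_mul_of_nonneg_left ?_ (rho_pos x).le
      exact hbd ((Mo n).bu s x) ((Mo n).bp s x) ((Mo n).bq s x)
    · filter_upwards [lim (H.mu s) (H.bu s), lim (H.mp s) (H.bp s), lim (H.mq s) (H.bq s)] with x h1 h2 h3
      exact ((((h1.mul h2).const_mul _).add (((h2.mul h2).add (h3.mul h3)).const_mul _))).const_mul _
  have hXneg : ∀ s, XOf u p q η s ≤ 0 := by
    intro s
    unfold XOf
    apply integral_nonpos
    intro x
    simp only [Pi.zero_apply]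
    refine mul_nonpos_of_nonneg_of_nonpos (rho_pos x).le ?_
    have e1 := H.ell s x
    have e2 : p s x * p s x ≤ M^2 * (u s x * u s x) := by
      have := mul_self_le_mul_self (abs_nonneg _) (H.lp s x)
      rw [abs_mul_abs_self] at this
      calc _ ≤ _ := this
        _ = M^2 * (|u s x| * |u s x|) := by ring
        _ = _ := by rw [abs_mul_abs_self]
    have e3 : q s x * q s x ≤ M^2 * (u s x * u s x) := by
      have := mul_self_le_mul_self (abs_nonneg _) (H.lq s x)
      rw [abs_mul_abs_self] at this
      calc _ ≤ _ := this
        _ = M^2 * (|u s x| * |u s x|) := by ring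
        _ = _ := by rw [abs_mul_abs_self]
    have e4 : η * (p s x * p s x + q s x * q s x) ≤ η * (2 * (M^2 * (u s x * u s x))) := by
      apply mul_le_mul_of_nonneg_left _ hη0.le; linarith
    have e5 : η * (2 * (M^2 * (u s x * u s x))) = c / 2 * (u s x * u s x) := by
      rw [hη]; field_simp; ring
    linarith
  have hδ : Tendsto (fun n => ∫ s in (0:ℝ)..t, 2 * max (XOf (un n) (pn n) (qn n) η s) 0) atTop (𝓝 0) := by
    suffices hh : Tendsto (fun n => ∫ s in (0:ℝ)..t, 2 * max (XOf (un n) (pn n) (qn n) η s) 0) atTop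
        (𝓝 (∫ s in (0:ℝ)..t, (0:ℝ))) by rwa [intervalIntegral.integral_zero] at hh
    refine intervalIntegral.tendsto_integral_filter_of_dominated_convergence 
      (fun _ => 2 * ∫ x, rho x * B) ?_ ?_ intervalIntegrable_const ?_
    · refine Eventually.of_forall fun n => ?_
      have := (Mo n).Xcont η
      exact (by fun_prop : Continuous fun s => 2 * max (XOf (un n) (pn n) (qn n) η s) 0).aestronglyMeasurable
    · refine Eventually.of_forall fun n => Eventually.of_forall fun s _ => ?_
      rw [Real.norm_eq_abs, abs_of_nonneg (by positivity)]
      refine mul_le_mul_of_nonneg_left ?_ (by norm_num)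
      have hBn : 0 ≤ B := by positivity
      refine max_le ?_ (integral_nonneg fun x => mul_nonneg (rho_pos x).le hBn)
      unfold XOf
      refine integral_mono (((Mo n).XLB η).int ((Mo n).Xc η) s) (rho_int.mul_const B) fun x => ?_
      refine mul_le_mul_of_nonneg_left ?_ (rho_pos x).le
      exact (le_abs_self _).trans (hbd ((Mo n).bu s x) ((Mo n).bp s x) ((Mo n).bq s x))
    · refine Eventually.of_forall fun s _ => ?_
      have := ((hXlim s).max (tendsto_const_nhds (x := (0:ℝ)))).const_mul 2
      rwa [max_eq_right (hXneg s), mul_zero] at this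
  set En := fun n => ∫ x, rho x * (PsiOf (pn' n) (qn n) t x * PsiOf (pn' n) (qn n) t x) with hEn
  have hElim : Tendsto En atTop (𝓝 0) := by
    have h2 := hδ.mul_const (Real.exp (η⁻¹ * t))
    rw [zero_mul] at h2
    refine squeeze_zero (fun n => integral_nonneg fun x => 
      mul_nonneg (rho_pos x).le (mul_self_nonneg _)) (fun n => (Mo n).energy hη0 ht) h2
  refine ae_eq_zero_of_integral_contDiff_smul_eq_zero (loc_int_of_bdd (H.mu t) (H.bu t)) fun φ hφ hφs => ?_
  simp only [smul_eq_mul]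
  have hφc := hφ.continuous
  have hφ' : ContDiff ℝ (⊤ : ℕ∞) (deriv φ) := (contDiff_infty_iff_deriv.1 hφ).2
  have hφd : Differentiable ℝ φ := (contDiff_infty_iff_deriv.1 hφ).1
  have hφs' : HasCompactSupport (deriv φ) := hφs.deriv
  have hφi : Integrable φ := hφc.integrable_of_hasCompactSupport hφs
  have hlim : Tendsto (fun n => ∫ x, φ x * un n t x) atTop (𝓝 (∫ x, φ x * u t x)) := by
    have sec : ∀ n, Continuous (un n t) := fun n => 
      (Mo n).cu.comp (by fun_prop : Continuous fun x : ℝ => (t, x))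
    refine tendsto_integral_of_dominated_convergence (fun x => |φ x| * M) ?_ (hφi.abs.mul_const M) ?_ ?_
    · exact fun n => (hφc.mul (sec n)).aestronglyMeasurable
    · exact fun n => Eventually.of_forall fun x => abs_mul_le' le_rfl ((Mo n).bu t x)
    · filter_upwards [lim (H.mu t) (H.bu t)] with x h1 using h1.const_mul _
  set C := ∫ x, deriv φ x * deriv φ x * (1 + x^2) with hC
  have iC : Integrable fun x => deriv φ x * deriv φ x * (1 + x^2) := by
    refine Continuous.integrable_of_hasCompactSupport ?_ ?_
    · have := hφ'.continuous
      fun_prop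
    · have : HasCompactSupport (deriv φ * fun x => deriv φ x * (1 + x^2)) := hφs'.mul_right
      have e : (fun x => deriv φ x * deriv φ x * (1 + x^2)) = deriv φ * fun x => deriv φ x * (1 + x^2) := by
        ext x; simp [mul_assoc]
      rw [e]; exact this
  have hC0 : 0 ≤ C := integral_nonneg fun x => mul_nonneg (mul_self_nonneg _) (by positivity)
  have bd : ∀ n, ∀ l > 0, 2 * |∫ x, φ x * un n t x| ≤ l * C + l⁻¹ * En n := by
    intro n l hl
    have cP : Continuous (PsiOf (pn' n) (qn n) t) := 
      (Mo n).cPsi.comp (by fun_prop : Continuous fun x : ℝ => (t, x))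
    have sec : Continuous (un n t) := (Mo n).cu.comp (by fun_prop : Continuous fun x : ℝ => (t, x))
    have I1 : Integrable (φ * un n t) := (hφc.mul sec).integrable_of_hasCompactSupport hφs.mul_right
    have I2 : Integrable (deriv φ * PsiOf (pn' n) (qn n) t) := 
      (hφ'.continuous.mul cP).integrable_of_hasCompactSupport hφs'.mul_right
    have I3 : Integrable (φ * PsiOf (pn' n) (qn n) t) := 
      (hφc.mul cP).integrable_of_hasCompactSupport hφs.mul_right
    have ibp := integral_mul_deriv_eq_deriv_mul_of_integrable (u := φ) (u' := deriv φ) 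
      (v := PsiOf (pn' n) (qn n) t) (v' := un n t) (fun x _ => (hφd x).hasDerivAt) 
      (fun x _ => (Mo n).dΨ t ht x) I1 I2 I3
    rw [ibp, abs_neg]
    have J1 : Integrable fun x => rho x * (PsiOf (pn' n) (qn n) t x * PsiOf (pn' n) (qn n) t x) := 
      ((Mo n).bPsi.mul (Mo n).bPsi).int ((Mo n).cPsi.mul (Mo n).cPsi) t
    have : 2 * |∫ x, deriv φ x * PsiOf (pn' n) (qn n) t x| ≤ 
        ∫ x, (l * (deriv φ x * deriv φ x * (1 + x^2)) + l⁻¹ * (rho x * (PsiOf (pn' n) (qn n) t x * PsiOf (pn' n) (qn n) t x))) := by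
      rw [show (2:ℝ) * |∫ x, deriv φ x * PsiOf (pn' n) (qn n) t x| = ‖∫ x, 2 * (deriv φ x * PsiOf (pn' n) (qn n) t x)‖ by
        rw [integral_const_mul, Real.norm_eq_abs, abs_mul, abs_two]]
      refine norm_integral_le_of_norm_le ((iC.const_mul l).add (J1.const_mul _)) (Eventually.of_forall fun x => ?_)
      set ψ := PsiOf (pn' n) (qn n) t x
      set d := deriv φ x
      have hx : 0 < 1 + x^2 := by positivity
      have e1 : l⁻¹ * rho x * (l * d * (1 + x^2) - ψ)^2 = 
         l * (d * d * (1 + x^2)) + l⁻¹ * (rho x * (ψ * ψ)) - 2 * (d * ψ) := by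
        unfold rho; field_simp; ring
      have e2 : l⁻¹ * rho x * (l * d * (1 + x^2) + ψ)^2 = 
         l * (d * d * (1 + x^2)) + l⁻¹ * (rho x * (ψ * ψ)) + 2 * (d * ψ) := by
        unfold rho; field_simp; ring
      have r := rho_pos x
      have p1 : 0 ≤ l⁻¹ * rho x * (l * d * (1 + x^2) - ψ)^2 := by positivity
      have p2 : 0 ≤ l⁻¹ * rho x * (l * d * (1 + x^2) + ψ)^2 := by positivity
      rw [Real.norm_eq_abs, abs_le]
      constructor <;> linarith
    rw [integral_add (iC.const_mul l) (J1.const_mul _), integral_const_mul, integral_const_mul] at this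
    exact this
  have bd2 : ∀ l > 0, 2 * |∫ x, φ x * u t x| ≤ l * C := by
    intro l hl
    have h1 := (hlim.abs).const_mul 2
    have h2 := (hElim.const_mul l⁻¹).const_add (l * C)
    rw [mul_zero, add_zero] at h2
    exact le_of_tendsto_of_tendsto' h1 h2 (fun n => bd n l hl)
  by_contra hne
  have hpos : 0 < |∫ x, φ x * u t x| := abs_pos.2 hne
  have := bd2 (|∫ x, φ x * u t x| / (C + 1)) (by positivity)
  have h3 : |∫ x, φ x * u t x| / (C + 1) * C ≤ |∫ x, φ x * u t x| := by
    rw [div_mul_eq_mul_div, div_le_iff₀ (by positivity)]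
    nlinarith
  linarith
end

structure FHyp (f : ℝ → ℝ → ℝ) : Prop where
  mem : ∀ s x, f s x ∈ Icc (0:ℝ) 1
  mono : ∀ s, Monotone (f s)
  rc : ∀ s x, ContinuousWithinAt (f s) (Ici x) x
  ca : ∀ s, ∀ᵐ y, ContinuousAt (fun r => f r y) s
  jm : Measurable (uncurry f)

theorem cdfOf_eq (μ : Measure ℝ) [IsProbabilityMeasure μ] : cdfOf μ = ProbabilityTheory.cdf μ := by
  ext x
  rw [ProbabilityTheory.cdf_eq_real]
  rfl

theorem jm_aux {f : ℝ → ℝ → ℝ} (mem : ∀ s x, f s x ∈ Icc (0:ℝ) 1) (mono : ∀ s, Monotone (f s))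
    (rc : ∀ s x, ContinuousWithinAt (f s) (Ici x) x)
    (ca : ∀ s, ∀ᵐ y, ContinuousAt (fun r => f r y) s) : Measurable (uncurry f) := by
  have hb : ∀ s x, |f s x| ≤ 1 := fun s x => abs_le.2 ⟨by linarith [(mem s x).1], (mem s x).2⟩
  have hm : ∀ s, Measurable (f s) := fun s => (mono s).measurable
  have key : ∀ n : ℕ, ∃ g : ℝ × ℝ → ℝ, Continuous g ∧ ∀ s x, f s x ≤ g (s, x) ∧ g (s, x) ≤ f s (x + 2 / ((n:ℝ)+1)) := by
    intro n
    have hn : (0:ℝ) < 1 / ((n:ℝ)+1) := by positivity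
    set r : ℝ := 1 / ((n:ℝ)+1) with hr
    let B : ContDiffBump (0:ℝ) := ⟨r/2, r, by positivity, by linarith⟩
    set k : ℝ → ℝ := fun z => B.normed volume (z + r) with hk
    have hkc : Continuous k := B.continuous_normed.comp (by fun_prop)
    have hks : HasCompactSupport k := by
      have := (B.hasCompactSupport_normed (μ := volume)).comp_homeomorph (Homeomorph.addRight r)
      exact this
    have hk0 : ∀ z, 0 ≤ k z := fun z => B.nonneg_normed _
    have hk1 : ∫ z, k z = 1 := by
      rw [hk, integral_add_right_eq_self (fun z => B.normed volume z) r]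
      exact B.integral_normed
    have hsup : ∀ z, k z ≠ 0 → -(2*r) ≤ z ∧ z ≤ 0 := by
      intro z hz
      have : z + r ∈ Function.support (B.normed volume) := hz
      rw [B.support_normed_eq, mem_ball_zero_iff, Real.norm_eq_abs, abs_lt] at this
      have h2 : B.rOut = r := rfl
      rw [h2] at this
      constructor <;> linarith
    refine ⟨uncurry fun s x => cv k (f s) x, cv_cont hkc hks hm hb ca, fun s x => ?_⟩
    have hk1x : ∫ y, k (x - y) = 1 := by rw [integral_sub_left_eq_self (fun y => k y) volume x, hk1]
    have hki : Integrable (fun y => k (x - y)) := 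
      (hkc.integrable_of_hasCompactSupport hks).comp_sub_left x
    have hintg := cv_integrable hkc hks (hm s) (hb s) x
    have e2 : 2 / ((n:ℝ)+1) = 2 * r := by rw [hr]; ring
    rw [e2]
    constructor
    · calc f s x = ∫ y, k (x - y) * f s x := by rw [integral_mul_const, hk1x, one_mul]
        _ ≤ ∫ y, k (x - y) * f s y := by
          refine integral_mono (hki.mul_const _) hintg fun y => ?_
          by_cases h : k (x - y) = 0
          · simp [h]
          · exact mul_le_mul_of_nonneg_left (mono s (by linarith [(hsup _ h).2])) (hk0 _)
    · calc ∫ y, k (x - y) * f s y ≤ ∫ y, k (x - y) * f s (x + 2 * r) := by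
            refine integral_mono hintg (hki.mul_const _) fun y => ?_
            by_cases h : k (x - y) = 0
            · simp [h]
            · exact mul_le_mul_of_nonneg_left (mono s (by linarith [(hsup _ h).1])) (hk0 _)
        _ = _ := by rw [integral_mul_const, hk1x, one_mul]
  choose g hg hg2 using key
  refine measurable_of_tendsto_metrizable (fun n => (hg n).measurable) (tendsto_pi_nhds.2 fun z => ?_)
  obtain ⟨s, x⟩ := z
  refine tendsto_of_tendsto_of_tendsto_of_le_of_le tendsto_const_nhds (h := fun n : ℕ => f s (x + 2 / ((n:ℝ)+1))) ?_
    (fun n => (hg2 n s x).1) (fun n => (hg2 n s x).2)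
  have h1 : Tendsto (fun n : ℕ => x + 2 / ((n:ℝ)+1)) atTop (𝓝[Ici x] x) := by
    refine tendsto_nhdsWithin_iff.2 ⟨?_, Eventually.of_forall fun n => ?_⟩
    · have := (tendsto_one_div_add_atTop_nhds_zero_nat (𝕜 := ℝ)).const_mul 2
      have := this.const_add x
      simp only [mul_zero, add_zero] at this
      exact this.congr fun n => by ring
    · have : (0:ℝ) ≤ 2 / ((n:ℝ)+1) := by positivity
      simp only [mem_Ici]; linarith
  exact (rc s x).tendsto.comp h1

theorem fhyp_of_memF {F : ℝ → ℝ → ℝ} (h : MemF F) : FHyp (fun s x => F (max s 0) x) := by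
  obtain ⟨P, hP, -, -, hF⟩ := h
  have e : ∀ s : ℝ, (fun x => F (max s 0) x) = ProbabilityTheory.cdf (P (max s 0) : Measure ℝ) := by
    intro s
    rw [← cdfOf_eq]
    ext x
    exact hF _ (le_max_right _ _) x
  have e' : ∀ s x : ℝ, F (max s 0) x = ProbabilityTheory.cdf (P (max s 0) : Measure ℝ) x := 
    fun s x => congrFun (e s) x
  have mem : ∀ s x : ℝ, F (max s 0) x ∈ Icc (0:ℝ) 1 := fun s x => by
    rw [e']
    exact ⟨ProbabilityTheory.cdf_nonneg _ _, ProbabilityTheory.cdf_le_one _ _⟩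
  have mono : ∀ s : ℝ, Monotone (fun x => F (max s 0) x) := fun s => by
    rw [e]; exact (ProbabilityTheory.cdf _).mono
  have rc : ∀ s x : ℝ, ContinuousWithinAt (fun x => F (max s 0) x) (Ici x) x := fun s x => by
    rw [e]; exact (ProbabilityTheory.cdf _).right_continuous x
  have hPc : Continuous (fun s : ℝ => P (max s 0)) := 
    hP.comp_continuous (by fun_prop) (fun s => mem_Ici.2 (le_max_right _ _))
  have ca : ∀ s : ℝ, ∀ᵐ y, ContinuousAt (fun r => F (max r 0) y) s := by
    intro s
    have hc : Set.Countable {y : ℝ | (0:ℝ≥0∞) < (P (max s 0) : Measure ℝ) {a : ℝ | id a = y}} := 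
      Measure.countable_meas_level_set_pos (g := id) measurable_id
    have hc0 : (volume : Measure ℝ) {y : ℝ | (0:ℝ≥0∞) < (P (max s 0) : Measure ℝ) {a : ℝ | id a = y}} = 0 := hc.measure_zero _
    filter_upwards [compl_mem_ae_iff.2 hc0] with y hy
    simp only [mem_compl_iff, mem_ofPred_eq, not_lt, nonpos_iff_eq_zero, id, ofPred_eq_eq_singleton] at hy
    have h1 := ProbabilityMeasure.tendsto_measure_of_null_frontier_of_tendsto' (hPc.tendsto s) (E := Iic y) 
      (by rw [frontier_Iic]; exact hy)
    have h2 := (ENNReal.tendsto_toReal (measure_ne_top _ _)).comp h1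
    have h3 : (fun r => F (max r 0) y) = fun r => ((P (max r 0) : Measure ℝ) (Iic y)).toReal := by
      ext r; exact hF _ (le_max_right _ _) y
    rw [ContinuousAt, hF _ (le_max_right _ _) y, h3]
    exact h2
  exact ⟨mem, mono, rc, ca, jm_aux mem mono rc ca⟩

/-- swap and integrability -/
theorem swap_int {ψ : ℝ → ℝ} {h : ℝ → ℝ → ℝ} {M : ℝ} (hψ : Integrable ψ) (hh : Measurable (uncurry h))
    (hb : ∀ s x, |h s x| ≤ M) (t : ℝ) : 
    IntervalIntegrable (fun s => ∫ x, ψ x * h s x) volume 0 t ∧ 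
    Integrable (fun x => ∫ s in (0:ℝ)..t, ψ x * h s x) ∧ 
    ∫ x, ∫ s in (0:ℝ)..t, ψ x * h s x = ∫ s in (0:ℝ)..t, ∫ x, ψ x * h s x := by
  have : IsFiniteMeasure ((volume : Measure ℝ).restrict (uIoc 0 t)) := ⟨by simp [uIoc]⟩
  have hi : Integrable (uncurry fun s x => ψ x * h s x) ((volume.restrict (uIoc 0 t)).prod volume) := by
    have h1 : Integrable (fun z : ℝ × ℝ => (1:ℝ) * ψ z.2) ((volume.restrict (uIoc 0 t)).prod volume) := 
      Integrable.mul_prod (integrable_const _) hψ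
    simp only [one_mul] at h1
    exact h1.mul_bdd (c := M) hh.aestronglyMeasurable (Eventually.of_forall fun z => hb z.1 z.2)
  refine ⟨?_, ?_, ?_⟩
  · rw [intervalIntegrable_iff]
    exact hi.integral_prod_left
  · have := hi.integral_prod_right
    by_cases ht : 0 ≤ t
    · simpa [intervalIntegral.integral_of_le ht, uIoc_of_le ht] using this
    · have ht := (not_le.1 ht).le
      simp only [intervalIntegral.integral_of_ge ht]
      simp only [uIoc_of_ge ht] at this
      exact this.neg
  · exact (intervalIntegral_integral_swap hi).symm

/-- extended primitive -/
def PC (a : ℝ → ℝ) : ℝ → ℝ := primitive (fun v => a (clp v))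

theorem PC_deriv {a : ℝ → ℝ} (ha : ContinuousOn a (Icc 0 1)) (u : ℝ) : HasDerivAt (PC a) (a (clp u)) u :=
  prim_clp_deriv ha u

theorem PC_cont {a : ℝ → ℝ} (ha : ContinuousOn a (Icc 0 1)) : Continuous (PC a) := 
  continuous_iff_continuousAt.2 fun u => (PC_deriv ha u).continuousAt

theorem PC_eq (a : ℝ → ℝ) {u : ℝ} (hu : u ∈ Icc (0:ℝ) 1) : primitive a u = PC a u := prim_eq_clp a hu

theorem PC_bd {a : ℝ → ℝ} (ha : ContinuousOn a (Icc 0 1)) : ∃ M, ∀ u ∈ Icc (0:ℝ) 1, |PC a u| ≤ M := by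
  obtain ⟨M, -, h⟩ := c1_bd (PC_cont ha).continuousOn (f := PC a)
  exact ⟨M, h⟩

/-- swap for the two-term expression -/
theorem swap2 {φ : ℝ → ℝ} (hφ : ContDiff ℝ (⊤ : ℕ∞) φ) (hs : HasCompactSupport φ) {P Q : ℝ → ℝ → ℝ} {M : ℝ}
    (hP : Measurable (uncurry P)) (hQ : Measurable (uncurry Q)) (bP : ∀ s x, |P s x| ≤ M) 
    (bQ : ∀ s x, |Q s x| ≤ M) (t : ℝ) : 
    IntervalIntegrable (fun s => (1/2) * (∫ x, deriv (deriv φ) x * P s x) + ∫ x, deriv φ x * Q s x) volume 0 t ∧ 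
    ∫ x, ∫ s in (0:ℝ)..t, ((1/2) * (deriv (deriv φ) x * P s x) + deriv φ x * Q s x) = 
      ∫ s in (0:ℝ)..t, ((1/2) * (∫ x, deriv (deriv φ) x * P s x) + ∫ x, deriv φ x * Q s x) := by
  have hφ' : ContDiff ℝ (⊤ : ℕ∞) (deriv φ) := (contDiff_infty_iff_deriv.1 hφ).2
  have hφ'' : ContDiff ℝ (⊤ : ℕ∞) (deriv (deriv φ)) := (contDiff_infty_iff_deriv.1 hφ').2
  obtain ⟨i1, j1, e1⟩ := swap_int (hφ''.continuous.integrable_of_hasCompactSupport hs.deriv.deriv) hP bP t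
  obtain ⟨i2, j2, e2⟩ := swap_int (hφ'.continuous.integrable_of_hasCompactSupport hs.deriv) hQ bQ t
  refine ⟨(i1.const_mul _).add i2, ?_⟩
  rw [intervalIntegral.integral_add (i1.const_mul _) i2, intervalIntegral.integral_const_mul, ← e1, ← e2,
    ← integral_const_mul, ← integral_add (j1.const_mul _) j2]
  congr 1
  ext x
  have k : ∀ (c : ℝ) {h : ℝ → ℝ → ℝ}, Measurable (uncurry h) → (∀ s x, |h s x| ≤ M) → 
      IntervalIntegrable (fun s => c * h s x) volume 0 t := by
    intro c h hh hb
    refine IntervalIntegrable.const_mul ?_ _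
    refine (intervalIntegrable_const (c := M)).mono_fun (hh.comp measurable_prodMk_right).aestronglyMeasurable
      (Eventually.of_forall fun s => ?_)
    exact (hb s x).trans (le_abs_self _)
  rw [intervalIntegral.integral_add ((k _ hP bP).const_mul _) (k _ hQ bQ), intervalIntegral.integral_const_mul]

theorem identF {a b F0 : ℝ → ℝ} {F : ℝ → ℝ → ℝ} (ha : ContinuousOn a (Icc 0 1)) (hb : ContinuousOn b (Icc 0 1))
    (hF : IsWeakSolution (primitive a) (primitive b) F0 F) (H : FHyp (fun s x => F (max s 0) x))
    {φ : ℝ → ℝ} (hφ : ContDiff ℝ (⊤ : ℕ∞) φ) (hs : HasCompactSupport φ) {t : ℝ} (ht : 0 ≤ t) : 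
    IntervalIntegrable (fun s => (1/2) * (∫ x, deriv (deriv φ) x * PC a (F (max s 0) x)) 
      + ∫ x, deriv φ x * PC b (F (max s 0) x)) volume 0 t ∧ 
    (∫ x, φ x * F (max t 0) x) - ∫ x, φ x * F0 x = 
      ∫ s in (0:ℝ)..t, ((1/2) * (∫ x, deriv (deriv φ) x * PC a (F (max s 0) x)) 
      + ∫ x, deriv φ x * PC b (F (max s 0) x)) := by
  obtain ⟨Ma, hMa⟩ := PC_bd ha
  obtain ⟨Mb, hMb⟩ := PC_bd hb
  have key := swap2 hφ hs (P := fun s x => PC a (F (max s 0) x)) (Q := fun s x => PC b (F (max s 0) x)) 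
    (M := max Ma Mb) ((PC_cont ha).measurable.comp H.jm) ((PC_cont hb).measurable.comp H.jm) 
    (fun s x => (hMa _ (H.mem s x)).trans (le_max_left _ _)) (fun s x => (hMb _ (H.mem s x)).trans (le_max_right _ _)) t
  refine ⟨key.1, ?_⟩
  rw [← key.2]
  let η : ContDiffBump (0:ℝ) := ⟨t+1, t+2, by linarith, by linarith⟩
  have hη1 : ∀ s ∈ Icc 0 t, η s = 1 := fun s hs => η.one_of_mem_closedBall (by
    rw [mem_closedBall_zero_iff, Real.norm_eq_abs, abs_of_nonneg hs.1]
    show s ≤ t + 1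
    linarith [hs.2])
  have hη2 : ∀ s ∈ Icc 0 t, (η : ℝ → ℝ) =ᶠ[𝓝 s] 1 := fun s hs => η.eventuallyEq_one_of_mem_ball (by
    rw [mem_ball_zero_iff, Real.norm_eq_abs, abs_of_nonneg hs.1]
    show s < t + 1
    linarith [hs.2])
  have hg1 : ContDiff ℝ (⊤ : ℕ∞) (uncurry fun s x => η s * φ x) := 
    (η.contDiff.comp contDiff_fst).mul (hφ.comp contDiff_snd)
  have hg2 : HasCompactSupport (uncurry fun s x => η s * φ x) := by
    refine HasCompactSupport.intro (η.hasCompactSupport.isCompact.prod hs.isCompact) ?_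
    rintro ⟨s, x⟩ hsx
    simp only [uncurry]
    rw [mem_prod, not_and_or] at hsx
    rcases hsx with h | h
    · rw [image_eq_zero_of_notMem_tsupport h, zero_mul]
    · rw [image_eq_zero_of_notMem_tsupport h, mul_zero]
  have h := hF _ hg1 hg2 t ht
  rw [hη1 t ⟨ht, le_rfl⟩, hη1 0 ⟨le_rfl, ht⟩] at h
  simp only [one_mul] at h
  rw [max_eq_left ht, h]
  congr 1
  ext x
  apply intervalIntegral.integral_congr
  intro s hs'
  rw [uIcc_of_le ht] at hs'
  simp only
  have hd : deriv (fun r => η r * φ x) s = 0 := by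
    have : (fun r => η r * φ x) =ᶠ[𝓝 s] fun _ => φ x := by
      filter_upwards [hη2 s hs'] with r hr
      rw [hr]; simp
    rw [this.deriv_eq]; simp
  have hm := H.mem s x
  simp only [max_eq_left hs'.1] at hm ⊢
  rw [hd, hη1 s hs', PC_eq a hm, PC_eq b hm]
  simp only [one_mul]
  ring

theorem ibp {φ g g' : ℝ → ℝ} (hφ : ContDiff ℝ (⊤ : ℕ∞) φ) (hs : HasCompactSupport φ) 
    (hg : ∀ x, HasDerivAt g (g' x) x) (hc : Continuous g') : ∫ x, φ x * g' x = - ∫ x, deriv φ x * g x := by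
  have hφ' : ContDiff ℝ (⊤ : ℕ∞) (deriv φ) := (contDiff_infty_iff_deriv.1 hφ).2
  have hgc : Continuous g := continuous_iff_continuousAt.2 fun u => (hg u).continuousAt
  refine integral_mul_deriv_eq_deriv_mul_of_integrable 
    (fun x _ => ((contDiff_infty_iff_deriv.1 hφ).1 x).hasDerivAt) (fun x _ => hg x) ?_ ?_ ?_
  · exact (hφ.continuous.mul hc).integrable_of_hasCompactSupport hs.mul_right
  · exact (hφ'.continuous.mul hgc).integrable_of_hasCompactSupport hs.deriv.mul_right
  · exact (hφ.continuous.mul hgc).integrable_of_hasCompactSupport hs.mul_right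

section
variable {a b J w0 : ℝ → ℝ} {W E Z : ℝ → ℝ → ℝ} {c K0 C : ℝ}

theorem cont_ext {f : ℝ → ℝ → ℝ} (h : ContinuousOn (fun q : ℝ × ℝ => f q.1 q.2) (Ici 0 ×ˢ univ)) : 
    Continuous (fun q : ℝ × ℝ => f (max q.1 0) q.2) := 
  h.comp_continuous (f := fun q : ℝ × ℝ => (max q.1 0, q.2)) (by fun_prop) 
    (fun q => ⟨mem_Ici.2 (le_max_right _ _), mem_univ _⟩)

/-- time derivative of `J W` -/
def GtOf (a b J : ℝ → ℝ) (W E Z : ℝ → ℝ → ℝ) (t x : ℝ) : ℝ := 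
  1/2 * Z t x - b (clp (J (W t x))) * (E t x / a (clp (J (W t x))))

theorem G_dt (I : InvHyp a J c) 
    (S : ClassSol (fun w => a (clp (J w))) (fun w => b (clp (J w))) w0 K0 C W E Z) {t : ℝ} (x : ℝ) (ht : 0 ≤ t) :
    HasDerivWithinAt (fun s => J (W s x)) (GtOf a b J W E Z t x) (Ici 0) t := by
  have h := (I.der (W t x)).comp_hasDerivWithinAt t (S.dt t x ht)
  refine h.congr_deriv ?_
  have : a (clp (J (W t x))) ≠ 0 := (I.hc.trans_le (I.lo _ (clp_mem _))).ne'
  unfold GtOf rhsW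
  field_simp

theorem G_dx (I : InvHyp a J c) 
    (S : ClassSol (fun w => a (clp (J w))) (fun w => b (clp (J w))) w0 K0 C W E Z) (t x : ℝ) :
    HasDerivAt (fun y => J (W t y)) (E t x / a (clp (J (W t x)))) x := by
  have h := (I.der (W t x)).comp x (S.dx t x)
  exact h.congr_deriv (by ring)

theorem identG (ha : ContinuousOn a (Icc 0 1)) (hb : ContinuousOn b (Icc 0 1)) (I : InvHyp a J c) 
    (S : ClassSol (fun w => a (clp (J w))) (fun w => b (clp (J w))) w0 (primitive a 1) C W E Z)
    {φ : ℝ → ℝ} (hφ : ContDiff ℝ (⊤ : ℕ∞) φ) (hs : HasCompactSupport φ) {t : ℝ} (ht : 0 ≤ t) : 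
    IntervalIntegrable (fun s => (1/2) * (∫ x, deriv (deriv φ) x * PC a (J (W (max s 0) x))) 
      + ∫ x, deriv φ x * PC b (J (W (max s 0) x))) volume 0 t ∧ 
    (∫ x, φ x * J (W (max t 0) x)) - ∫ x, φ x * J (w0 x) = 
      ∫ s in (0:ℝ)..t, ((1/2) * (∫ x, deriv (deriv φ) x * PC a (J (W (max s 0) x))) 
      + ∫ x, deriv φ x * PC b (J (W (max s 0) x))) := by
  have hφ' : ContDiff ℝ (⊤ : ℕ∞) (deriv φ) := (contDiff_infty_iff_deriv.1 hφ).2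
  have hJc : Continuous J := continuous_iff_continuousAt.2 fun u => (I.der u).continuousAt
  have cG : Continuous (fun q : ℝ × ℝ => J (W (max q.1 0) q.2)) := hJc.comp (cont_ext S.cW)
  have cE := cont_ext S.cE
  have cZ := cont_ext S.cZ
  have hne : ∀ w, a (clp (J w)) ≠ 0 := fun w => (I.hc.trans_le (I.lo _ (clp_mem _))).ne'
  have caG : Continuous (fun q : ℝ × ℝ => a (clp (J (W (max q.1 0) q.2)))) := (clp_comp_cont ha).comp cG
  have cbG : Continuous (fun q : ℝ × ℝ => b (clp (J (W (max q.1 0) q.2)))) := (clp_comp_cont hb).comp cG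
  have cQ : Continuous (fun q : ℝ × ℝ => b (clp (J (W (max q.1 0) q.2))) * (E (max q.1 0) q.2 / a (clp (J (W (max q.1 0) q.2))))) :=
    cbG.mul (cE.div caG fun q => hne _)
  have cGt : Continuous (fun q : ℝ × ℝ => GtOf a b J W E Z (max q.1 0) q.2) := 
    (continuous_const.mul cZ).sub cQ
  have memG : ∀ s x, J (W s x) ∈ Icc (0:ℝ) 1 := fun s x => (I.right _ ⟨S.h0 s x, S.hK s x⟩).1
  obtain ⟨Ma, hMa⟩ := PC_bd ha
  obtain ⟨Mb, hMb⟩ := PC_bd hb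
  obtain ⟨Bb, hBb0, hBb⟩ := c1_bd hb
  have hC : 0 ≤ C := (abs_nonneg _).trans (S.hE 0 0)
  have key := swap2 hφ hs (P := fun s x => PC a (J (W (max s 0) x))) (Q := fun s x => PC b (J (W (max s 0) x))) 
    (M := max Ma Mb) ((PC_cont ha).comp cG).measurable ((PC_cont hb).comp cG).measurable
    (fun s x => (hMa _ (memG _ x)).trans (le_max_left _ _)) (fun s x => (hMb _ (memG _ x)).trans (le_max_right _ _)) t
  refine ⟨key.1, ?_⟩
  have hφi : Integrable φ := hφ.continuous.integrable_of_hasCompactSupport hs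
  have bGt : ∀ s x, |GtOf a b J W E Z (max s 0) x| ≤ 1/2 * C + Bb * (C / c) := by
    intro s x
    unfold GtOf
    refine (abs_sub _ _).trans (add_le_add ?_ ?_)
    · exact abs_mul_le' (by norm_num) (S.hZ _ _)
    · refine abs_mul_le' (hBb _ (clp_mem _)) ?_
      rw [abs_div]
      refine div_le_div₀ hC (S.hE _ _) I.hc ?_
      exact (I.lo _ (clp_mem _)).trans (le_abs_self _)
  obtain ⟨-, -, e1⟩ := swap_int hφi (h := fun s x => GtOf a b J W E Z (max s 0) x) cGt.measurable bGt t
  have iG : ∀ s, Integrable (fun x => φ x * J (W (max s 0) x)) := fun s => by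
    have : Continuous (fun x => J (W (max s 0) x)) := cG.comp (by fun_prop : Continuous fun x : ℝ => (s, x))
    exact (hφ.continuous.mul this).integrable_of_hasCompactSupport hs.mul_right
  have e0 : ∀ x, φ x * J (w0 x) = φ x * J (W (max 0 0) x) := fun x => by rw [max_self, S.init]
  simp_rw [e0]
  rw [← integral_sub (iG t) (iG 0)]
  have e2 : ∀ x, φ x * J (W (max t 0) x) - φ x * J (W (max 0 0) x) = ∫ s in (0:ℝ)..t, φ x * GtOf a b J W E Z (max s 0) x := by
    intro x
    have hx : Continuous (fun s : ℝ => (s, x)) := by fun_prop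
    rw [intervalIntegral.integral_const_mul, intervalIntegral.integral_eq_sub_of_hasDerivAt_of_le ht 
      (f := fun s => J (W (max s 0) x)) (f' := fun s => GtOf a b J W E Z (max s 0) x) (cG.comp hx).continuousOn ?_ ((cGt.comp hx).intervalIntegrable _ _)]
    · ring
    · intro s hs
      have h := (G_dt I S x hs.1.le).hasDerivAt (Ici_mem_nhds hs.1)
      rw [max_eq_left hs.1.le]
      refine h.congr_of_eventuallyEq ?_
      filter_upwards [Ioi_mem_nhds hs.1] with r hr
      rw [max_eq_left (le_of_lt hr)]
  simp_rw [e2]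
  rw [e1]
  apply intervalIntegral.integral_congr
  intro s _
  simp only
  have hx : Continuous (fun x : ℝ => (s, x)) := by fun_prop
  set s' := max s 0 with hs'
  have cWx : Continuous (fun x => W s' x) := continuous_iff_continuousAt.2 fun x => (S.dx s' x).continuousAt
  have cEx : Continuous (fun x => E s' x) := cE.comp hx
  have cZx : Continuous (fun x => Z s' x) := cZ.comp hx
  have cQx := cQ.comp hx
  have e3 : ∀ x, PC a (J (W s' x)) = W s' x := fun x => by
    rw [← PC_eq a (memG s' x)]
    exact (I.right _ ⟨S.h0 s' x, S.hK s' x⟩).2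
  simp_rw [e3]
  have i1 : ∫ x, φ x * Z s' x = ∫ x, deriv (deriv φ) x * W s' x := by
    rw [ibp hφ hs (S.dxx s') cZx, ibp hφ' hs.deriv (S.dx s') cEx, neg_neg]
  have i2 : ∫ x, φ x * (b (clp (J (W s' x))) * (E s' x / a (clp (J (W s' x))))) = - ∫ x, deriv φ x * PC b (J (W s' x)) := 
    ibp hφ hs (g := fun x => PC b (J (W s' x))) (fun x => (PC_deriv hb _).comp x (G_dx I S s' x)) cQx
  have j1 : Integrable (fun x => φ x * Z s' x) := 
    (hφ.continuous.mul cZx).integrable_of_hasCompactSupport hs.mul_right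
  have j2 : Integrable (fun x => φ x * (b (clp (J (W s' x))) * (E s' x / a (clp (J (W s' x)))))) := 
    (hφ.continuous.mul cQx).integrable_of_hasCompactSupport hs.mul_right
  have e4 : ∀ x, φ x * GtOf a b J W E Z s' x = 1/2 * (φ x * Z s' x) - φ x * (b (clp (J (W s' x))) * (E s' x / a (clp (J (W s' x))))) := by
    intro x; unfold GtOf; ring
  simp_rw [e4]
  rw [integral_sub (j1.const_mul _) j2, integral_const_mul, i1, i2]
  ring

end

section
variable {a b J F0 : ℝ → ℝ} {W E Z F : ℝ → ℝ → ℝ} {c C : ℝ}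

theorem PC_lip (hb : ContinuousOn b (Icc 0 1)) : ∃ M, 0 ≤ M ∧ ∀ u v, |PC b u - PC b v| ≤ M * |u - v| := by
  obtain ⟨M, h0, h⟩ := c1_bd hb
  exact ⟨M, h0, fun u v => mvt_bound (PC_deriv hb) (fun u => h _ (clp_mem u)) v u⟩

theorem PC_ell (ha : ContinuousOn a (Icc 0 1)) (lo : ∀ u ∈ Icc (0:ℝ) 1, c ≤ a u) (u v : ℝ) : 
    c * ((u - v) * (u - v)) ≤ (u - v) * (PC a u - PC a v) := by
  have hmono : Monotone (fun u => PC a u - c * u) := by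
    apply monotone_of_hasDerivAt_nonneg (f' := fun u => a (clp u) - c * 1)
    · intro u; exact (PC_deriv ha u).sub ((hasDerivAt_id u).const_mul c)
    · intro u; have := lo _ (clp_mem u); simp; linarith
  rcases le_total u v with h | h
  · have := hmono h
    simp only at this
    nlinarith
  · have := hmono h
    simp only at this
    nlinarith

theorem uhyp (ha : ContinuousOn a (Icc 0 1)) (hb : ContinuousOn b (Icc 0 1)) (I : InvHyp a J c) 
    (h01 : ∀ x, F0 x ∈ Icc (0:ℝ) 1)
    (S : ClassSol (fun w => a (clp (J w))) (fun w => b (clp (J w))) (fun x => primitive a (F0 x)) (primitive a 1) C W E Z)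
    (hF : IsWeakSolution (primitive a) (primitive b) F0 F) (H : FHyp (fun s x => F (max s 0) x)) :
    ∃ M, UHyp (fun s x => F (max s 0) x - J (W (max s 0) x))
      (fun s x => PC a (F (max s 0) x) - PC a (J (W (max s 0) x)))
      (fun s x => PC b (F (max s 0) x) - PC b (J (W (max s 0) x))) c M := by
  obtain ⟨Ma, hMa0, hMa⟩ := PC_lip ha
  obtain ⟨Mb, hMb0, hMb⟩ := PC_lip hb
  have hJc : Continuous J := continuous_iff_continuousAt.2 fun u => (I.der u).continuousAt
  have cG : Continuous (fun q : ℝ × ℝ => J (W (max q.1 0) q.2)) := hJc.comp (cont_ext S.cW)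
  have memG : ∀ s x, J (W s x) ∈ Icc (0:ℝ) 1 := fun s x => (I.right _ ⟨S.h0 s x, S.hK s x⟩).1
  have cGx : ∀ s, Continuous (fun x => J (W (max s 0) x)) := fun s => 
    cG.comp (by fun_prop : Continuous fun x : ℝ => (s, x))
  have cGs : ∀ x, Continuous (fun s => J (W (max s 0) x)) := fun x => 
    cG.comp (by fun_prop : Continuous fun s : ℝ => (s, x))
  have mF : ∀ s : ℝ, Measurable (fun x => F (max s 0) x) := fun s => (H.mono s).measurable
  have pa := PC_cont ha
  have pb := PC_cont hb
  have bu : ∀ s x : ℝ, |F (max s 0) x - J (W (max s 0) x)| ≤ 1 := fun s x => by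
    have h1 := H.mem s x
    have h2 := memG (max s 0) x
    rw [abs_le]; constructor <;> linarith [h1.1, h1.2, h2.1, h2.2]
  have lp : ∀ s x : ℝ, |PC a (F (max s 0) x) - PC a (J (W (max s 0) x))| ≤ (Ma + Mb + 1) * |F (max s 0) x - J (W (max s 0) x)| := 
    fun s x => (hMa _ _).trans (mul_le_mul_of_nonneg_right (by linarith) (abs_nonneg _))
  have lq : ∀ s x : ℝ, |PC b (F (max s 0) x) - PC b (J (W (max s 0) x))| ≤ (Ma + Mb + 1) * |F (max s 0) x - J (W (max s 0) x)| := 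
    fun s x => (hMb _ _).trans (mul_le_mul_of_nonneg_right (by linarith) (abs_nonneg _))
  have hM : 0 < Ma + Mb + 1 := by linarith
  have l1 : ∀ {y z : ℝ}, |z| ≤ 1 → |y| ≤ (Ma + Mb + 1) * |z| → |y| ≤ Ma + Mb + 1 := fun hz hy => 
    hy.trans (mul_le_of_le_one_right hM.le hz)
  refine ⟨Ma + Mb + 1, I.hc, hM, fun s => (mF s).sub (cGx s).measurable, 
    fun s => (pa.measurable.comp (mF s)).sub (pa.comp (cGx s)).measurable,
    fun s => (pb.measurable.comp (mF s)).sub (pb.comp (cGx s)).measurable,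
    fun s x => (bu s x).trans (by linarith), fun s x => l1 (bu s x) (lp s x), fun s x => l1 (bu s x) (lq s x), 
    ?_, ?_, ?_, fun s x => PC_ell ha I.lo _ _, lp, lq, ?_⟩
  · intro s
    filter_upwards [H.ca s] with y hy
    exact hy.sub (cGs y).continuousAt
  · intro s
    filter_upwards [H.ca s] with y hy
    exact (pa.continuousAt.comp hy).sub (pa.comp (cGs y)).continuousAt
  · intro s
    filter_upwards [H.ca s] with y hy
    exact (pb.continuousAt.comp hy).sub (pb.comp (cGs y)).continuousAt
  · intro φ hφ hs t ht
    obtain ⟨iF, eF⟩ := identF ha hb hF H hφ hs ht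
    obtain ⟨iG, eG⟩ := identG ha hb I S hφ hs ht
    have hφ' : ContDiff ℝ (⊤ : ℕ∞) (deriv φ) := (contDiff_infty_iff_deriv.1 hφ).2
    have hφ'' : ContDiff ℝ (⊤ : ℕ∞) (deriv (deriv φ)) := (contDiff_infty_iff_deriv.1 hφ').2
    simp_rw [I.left _ (h01 _)] at eG
    have ii : ∀ {ψ : ℝ → ℝ} {p : ℝ → ℝ}, Continuous ψ → HasCompactSupport ψ → Continuous p → ∀ s : ℝ, 
        Integrable (fun x => ψ x * p (F (max s 0) x)) ∧ Integrable (fun x => ψ x * p (J (W (max s 0) x))) := by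
      intro ψ p h1 h2 hp s
      obtain ⟨Mp, -, hMp⟩ := c1_bd hp.continuousOn (f := p)
      have h3 := h1.integrable_of_hasCompactSupport h2 (μ := volume)
      exact ⟨h3.mul_bdd (c := Mp) (hp.measurable.comp (mF s)).aestronglyMeasurable (Eventually.of_forall fun x => hMp _ (H.mem s x)),
        h3.mul_bdd (c := Mp) (hp.measurable.comp (cGx s).measurable).aestronglyMeasurable (Eventually.of_forall fun x => hMp _ (memG _ x))⟩
    simp_rw [mul_sub]
    have k0 := ii (p := fun x => x) hφ.continuous hs continuous_id t
    rw [integral_sub k0.1 k0.2]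
    have : (∫ x, φ x * F (max t 0) x) - (∫ x, φ x * J (W (max t 0) x)) = 
      ((∫ x, φ x * F (max t 0) x) - ∫ x, φ x * F0 x) - ((∫ x, φ x * J (W (max t 0) x)) - ∫ x, φ x * F0 x) := by ring
    rw [this, eF, eG, ← intervalIntegral.integral_sub iF iG]
    apply intervalIntegral.integral_congr
    intro s _
    simp only
    have k1 := ii hφ''.continuous hs.deriv.deriv pa s
    have k2 := ii hφ'.continuous hs.deriv pb s
    rw [integral_sub k1.1 k1.2, integral_sub k2.1 k2.2]
    ring

theorem F_eq (ha : ContinuousOn a (Icc 0 1)) (hb : ContinuousOn b (Icc 0 1)) (I : InvHyp a J c) 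
    (h01 : ∀ x, F0 x ∈ Icc (0:ℝ) 1)
    (S : ClassSol (fun w => a (clp (J w))) (fun w => b (clp (J w))) (fun x => primitive a (F0 x)) (primitive a 1) C W E Z)
    (hF : IsWeakSolution (primitive a) (primitive b) F0 F) (H : FHyp (fun s x => F (max s 0) x)) 
    {t : ℝ} (ht : 0 ≤ t) (x : ℝ) : F t x = J (W t x) := by
  obtain ⟨M, U⟩ := uhyp ha hb I h01 S hF H
  have h := U.ae_zero ht
  simp only [max_eq_left ht] at h
  have hd : Dense {x | F t x - J (W t x) = 0} := Measure.dense_of_ae h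
  have hG : ContinuousAt (fun y => J (W t y)) x := (G_dx I S t x).continuousAt
  have hFr : ContinuousWithinAt (fun y => F t y) (Ici x) x := by
    have := H.rc t x
    simpa only [max_eq_left ht] using this
  have hc : Tendsto (fun y => F t y - J (W t y)) (𝓝[>] x) (𝓝 (F t x - J (W t x))) := 
    (hFr.mono Ioi_subset_Ici_self).sub hG.continuousWithinAt
  by_contra hne
  have hne' : F t x - J (W t x) ≠ 0 := sub_ne_zero.2 hne
  have hev := hc.eventually_ne hne'
  obtain ⟨u, hu, hu2⟩ := mem_nhdsGT_iff_exists_Ioo_subset.1 hev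
  obtain ⟨y, hy1, hy2⟩ := hd.exists_mem_open isOpen_Ioo (nonempty_Ioo.2 hu)
  exact hu2 hy2 hy1

end

theorem final
    (a b : ℝ → ℝ)
    (ha : ContinuousOn a (Set.Icc 0 1)) (hb : ContinuousOn b (Set.Icc 0 1))
    (ha0 : ∀ u ∈ Set.Icc (0:ℝ) 1, 0 ≤ a u)
    (hD3 : ∃ c > (0:ℝ), ∀ u ∈ Set.Icc (0:ℝ) 1, c ≤ a u)
    (hR2a : ContDiffOn ℝ 2 a (Set.Icc 0 1))
    (hR2b : ContDiffOn ℝ 1 b (Set.Icc 0 1))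
    (m : Measure ℝ) [IsProbabilityMeasure m]
    (hm3 : ContDiff ℝ 3 (cdfOf m))
    (hmbd : ∀ k : ℕ, k ≤ 3 → ∃ M : ℝ, ∀ x : ℝ, |iteratedDeriv k (cdfOf m) x| ≤ M)
    (F : ℝ → ℝ → ℝ)
    (hF : IsWeakSolution (primitive a) (primitive b) (cdfOf m) F) (hFmem : MemF F) :
    ∀ T : ℝ, 0 < T →
      ∃ Ft Fx Fxx : ℝ → ℝ → ℝ,
        (∀ t ∈ Set.Icc (0:ℝ) T, ∀ x : ℝ,
          HasDerivWithinAt (fun s => F s x) (Ft t x) (Set.Icc 0 T) t ∧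
          HasDerivAt (fun y => F t y) (Fx t x) x ∧
          HasDerivAt (fun y => Fx t y) (Fxx t x) x) ∧
        ContinuousOn (fun q : ℝ × ℝ => F q.1 q.2) (Set.Icc 0 T ×ˢ (Set.univ : Set ℝ)) ∧
        ContinuousOn (fun q : ℝ × ℝ => Ft q.1 q.2) (Set.Icc 0 T ×ˢ (Set.univ : Set ℝ)) ∧
        ContinuousOn (fun q : ℝ × ℝ => Fx q.1 q.2) (Set.Icc 0 T ×ˢ (Set.univ : Set ℝ)) ∧
        ContinuousOn (fun q : ℝ × ℝ => Fxx q.1 q.2) (Set.Icc 0 T ×ˢ (Set.univ : Set ℝ)) ∧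
        (∃ M : ℝ, ∀ t ∈ Set.Icc (0:ℝ) T, ∀ x : ℝ,
          |F t x| ≤ M ∧ |Ft t x| ≤ M ∧ |Fx t x| ≤ M ∧ |Fxx t x| ≤ M) ∧
        (∀ t ∈ Set.Icc (0:ℝ) T, ∀ x : ℝ,
          Ft t x = (1/2) * deriv (fun y => deriv (fun z => primitive a (F t z)) y) x
            - deriv (fun y => primitive b (F t y)) x) := by
  intro T hT
  obtain ⟨c, hc, lo⟩ := hD3
  obtain ⟨J, I⟩ := exists_inv ha hc lo
  obtain ⟨Ab, Bb, Λ, HC⟩ := coef_of_inv I hR2a hR2b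
  have h01 : ∀ x, cdfOf m x ∈ Icc (0:ℝ) 1 := fun x => by
    rw [cdfOf_eq]
    exact ⟨ProbabilityTheory.cdf_nonneg _ _, ProbabilityTheory.cdf_le_one _ _⟩
  obtain ⟨L0, hL0, hinit⟩ := init_data hR2a ha0 h01 hm3 hmbd
  have hw0 : Continuous (fun x => primitive a (cdfOf m x)) := by
    have : (fun x => primitive a (cdfOf m x)) = fun x => PC a (cdfOf m x) := by
      ext x; exact PC_eq a (h01 x)
    rw [this]
    exact (PC_cont ha).comp hm3.continuous
  have hK0 : 0 ≤ primitive a 1 := by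
    have := prim_mono01 ha ha0 (u := 0) (v := 1) (by simp) (by simp) zero_le_one
    simpa [primitive] using this
  obtain ⟨W, E, Z, C, K, hC, hK, L⟩ := exists_limit HC hL0 hK0 hw0 hinit
  have S := LimHyp.classSol hC hK L
  have hFJ : ∀ t, 0 ≤ t → ∀ x, F t x = J (W t x) := fun t ht x => 
    F_eq ha hb I h01 S hF (fhyp_of_memF hFmem) ht x
  clear L hinit
  have hJc : Continuous J := continuous_iff_continuousAt.2 fun u => (I.der u).continuousAt
  have memG : ∀ s x, J (W s x) ∈ Icc (0:ℝ) 1 := fun s x => (I.right _ ⟨S.h0 s x, S.hK s x⟩).1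
  have AG : ∀ s x, primitive a (J (W s x)) = W s x := fun s x => (I.right _ ⟨S.h0 s x, S.hK s x⟩).2
  have hsub : Icc (0:ℝ) T ×ˢ (univ : Set ℝ) ⊆ Ici 0 ×ˢ univ := prod_mono Icc_subset_Ici_self le_rfl
  have cW := S.cW.mono hsub
  have cE := S.cE.mono hsub
  have cZ := S.cZ.mono hsub
  have cG : ContinuousOn (fun q : ℝ × ℝ => J (W q.1 q.2)) (Icc (0:ℝ) T ×ˢ univ) := hJc.comp_continuousOn cW
  set p := derivWithin a (Icc 0 1) with hp
  have hu : UniqueDiffOn ℝ (Icc (0:ℝ) 1) := uniqueDiffOn_Icc one_pos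
  have hpc : ContinuousOn p (Icc 0 1) := (hR2a.derivWithin hu (m := 1) (by norm_num)).continuousOn
  have had : ∀ u ∈ Icc (0:ℝ) 1, HasDerivWithinAt a (p u) (Icc 0 1) u := fun u hu => 
    ((hR2a.differentiableOn (by norm_num)) u hu).hasDerivWithinAt
  have caG : ContinuousOn (fun q : ℝ × ℝ => a (clp (J (W q.1 q.2)))) (Icc (0:ℝ) T ×ˢ univ) := (clp_comp_cont ha).comp_continuousOn cG
  have cbG : ContinuousOn (fun q : ℝ × ℝ => b (clp (J (W q.1 q.2)))) (Icc (0:ℝ) T ×ˢ univ) := (clp_comp_cont hb).comp_continuousOn cG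
  have cpG : ContinuousOn (fun q : ℝ × ℝ => p (clp (J (W q.1 q.2)))) (Icc (0:ℝ) T ×ˢ univ) := (clp_comp_cont hpc).comp_continuousOn cG
  have hne : ∀ w, a (clp (J w)) ≠ 0 := fun w => (I.hc.trans_le (I.lo _ (clp_mem _))).ne'
  have cFx : ContinuousOn (fun q : ℝ × ℝ => E q.1 q.2 / a (clp (J (W q.1 q.2)))) (Icc (0:ℝ) T ×ˢ univ) := 
    cE.div caG fun q _ => hne _
  obtain ⟨Ma, hMa0, hMa⟩ := c1_bd ha
  obtain ⟨Mb, hMb0, hMb⟩ := c1_bd hb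
  obtain ⟨Mp, hMp0, hMp⟩ := c1_bd hpc
  have hdiv : ∀ {y M : ℝ} (w : ℝ), |y| ≤ M → |y / a (clp (J w))| ≤ M / c := by
    intro y M w hy
    rw [abs_div]
    exact div_le_div₀ ((abs_nonneg _).trans hy) hy hc ((lo _ (clp_mem _)).trans (le_abs_self _))
  refine ⟨GtOf a b J W E Z, fun t x => E t x / a (clp (J (W t x))), 
    fun t x => (Z t x - p (clp (J (W t x))) * (E t x / a (clp (J (W t x)))) * (E t x / a (clp (J (W t x))))) / a (clp (J (W t x))), 
    ?_, ?_, ?_, cFx, ?_, ?_, ?_⟩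
  · intro t ht x
    have ht0 := ht.1
    refine ⟨?_, ?_, ?_⟩
    · have h := (G_dt I S x ht0).mono (Icc_subset_Ici_self : Icc 0 T ⊆ Ici 0)
      exact h.congr (fun s hs => hFJ s hs.1 x) (hFJ t ht0 x)
    · have h := G_dx I S t x
      have e : (fun y => F t y) = fun y => J (W t y) := funext fun y => hFJ t ht0 y
      rw [e]; exact h
    · have h := G_dx I S t x
      have h2 : HasDerivAt (fun y => a (clp (J (W t y)))) (p (clp (J (W t x))) * (E t x / a (clp (J (W t x))))) x := by
        have e : (fun y => a (clp (J (W t y)))) = fun y => a (J (W t y)) := by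
          ext y; rw [clp_eq (memG t y)]
        rw [e, clp_eq (memG t x)]
        rw [clp_eq (memG t x)] at h
        exact (had _ (memG t x)).comp_hasDerivAt x h (Eventually.of_forall fun y => memG t y)
      refine ((S.dxx t x).div h2 (hne _)).congr_deriv ?_
      have := hne (W t x)
      field_simp
  · exact cG.congr fun q hq => hFJ _ hq.1.1 _
  · exact (continuousOn_const.mul cZ).sub (cbG.mul cFx)
  · exact (cZ.sub ((cpG.mul cFx).mul cFx)).div caG fun q _ => hne _
  · refine ⟨max (max 1 (1/2 * C + Mb * (C / c))) (max (C / c) ((C + Mp * (C/c) * (C/c)) / c)), fun t ht x => ⟨?_, ?_, ?_, ?_⟩⟩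
    · rw [hFJ t ht.1]
      have := memG t x
      refine (abs_le.2 ⟨by linarith [this.1], this.2⟩ : _ ≤ (1:ℝ)).trans ?_
      exact (le_max_left _ _).trans (le_max_left _ _)
    · refine le_trans ?_ ((le_max_right _ _).trans (le_max_left _ _))
      unfold GtOf
      refine (abs_sub _ _).trans (add_le_add ?_ ?_)
      · exact abs_mul_le' (by norm_num) (S.hZ _ _)
      · exact abs_mul_le' (hMb _ (clp_mem _)) (hdiv _ (S.hE _ _))
    · exact (hdiv _ (S.hE _ _)).trans ((le_max_left _ _).trans (le_max_right _ _))
    · refine le_trans (hdiv _ ?_) ((le_max_right _ _).trans (le_max_right _ _))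
      refine (abs_sub _ _).trans (add_le_add (S.hZ _ _) ?_)
      exact abs_mul_le' (abs_mul_le' (hMp _ (clp_mem _)) (hdiv _ (S.hE _ _))) (hdiv _ (S.hE _ _))
  · intro t ht x
    have e1 : (fun z => primitive a (F t z)) = W t := by
      ext z; rw [hFJ t ht.1, AG]
    have e2 : (fun y => deriv (W t) y) = E t := funext fun y => (S.dx t y).deriv
    have e3 : (fun y => primitive b (F t y)) = fun y => PC b (J (W t y)) := by
      ext z; rw [hFJ t ht.1, PC_eq b (memG t z)]
    rw [e1, e2, (S.dxx t x).deriv, e3]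
    have h : HasDerivAt (fun y => PC b (J (W t y))) _ x := (PC_deriv hb _).comp x (G_dx I S t x)
    rw [h.deriv]
    rfl


/-- Under (D3), (R2), a finite first moment of `m` and `H*m ∈ H^{3+β}(ℝ)`, the
probabilistic solution is `C^{1,2}` and bounded together with its derivatives on
every strip `[0,T] × ℝ`, and solves the Cauchy problem classically. -/
theorem classical_regularity_of_probabilistic_solution
    (a b : ℝ → ℝ)
    (ha : ContinuousOn a (Set.Icc 0 1)) (hb : ContinuousOn b (Set.Icc 0 1))
    (ha0 : ∀ u ∈ Set.Icc (0:ℝ) 1, 0 ≤ a u)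
    (hD3 : ∃ c > (0:ℝ), ∀ u ∈ Set.Icc (0:ℝ) 1, c ≤ a u)
    (β : NNReal) (hβ : 0 < β)
    (hR2a : ContDiffOn ℝ 2 a (Set.Icc 0 1))
    (hR2b : ContDiffOn ℝ 1 b (Set.Icc 0 1))
    (hR2hold : ∃ C : NNReal,
      HolderOnWith C β (iteratedDerivWithin 2 a (Set.Icc 0 1)) (Set.Icc 0 1) ∧
      HolderOnWith C β (derivWithin b (Set.Icc 0 1)) (Set.Icc 0 1))
    (m : Measure ℝ) [IsProbabilityMeasure m]
    (hm : Integrable (fun x => |x|) m)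
    (hm3 : ContDiff ℝ 3 (cdfOf m))
    (hmbd : ∀ k : ℕ, k ≤ 3 → ∃ M : ℝ, ∀ x : ℝ, |iteratedDeriv k (cdfOf m) x| ≤ M)
    (hmhold : ∃ C : NNReal, HolderWith C β (iteratedDeriv 3 (cdfOf m)))
    (F : ℝ → ℝ → ℝ)
    (hF : IsWeakSolution (primitive a) (primitive b) (cdfOf m) F) (hFmem : MemF F) :
    ∀ T : ℝ, 0 < T →
      ∃ Ft Fx Fxx : ℝ → ℝ → ℝ,
        (∀ t ∈ Set.Icc (0:ℝ) T, ∀ x : ℝ,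
          HasDerivWithinAt (fun s => F s x) (Ft t x) (Set.Icc 0 T) t ∧
          HasDerivAt (fun y => F t y) (Fx t x) x ∧
          HasDerivAt (fun y => Fx t y) (Fxx t x) x) ∧
        ContinuousOn (fun q : ℝ × ℝ => F q.1 q.2) (Set.Icc 0 T ×ˢ (Set.univ : Set ℝ)) ∧
        ContinuousOn (fun q : ℝ × ℝ => Ft q.1 q.2) (Set.Icc 0 T ×ˢ (Set.univ : Set ℝ)) ∧
        ContinuousOn (fun q : ℝ × ℝ => Fx q.1 q.2) (Set.Icc 0 T ×ˢ (Set.univ : Set ℝ)) ∧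
        ContinuousOn (fun q : ℝ × ℝ => Fxx q.1 q.2) (Set.Icc 0 T ×ˢ (Set.univ : Set ℝ)) ∧
        (∃ M : ℝ, ∀ t ∈ Set.Icc (0:ℝ) T, ∀ x : ℝ,
          |F t x| ≤ M ∧ |Ft t x| ≤ M ∧ |Fx t x| ≤ M ∧ |Fxx t x| ≤ M) ∧
        (∀ t ∈ Set.Icc (0:ℝ) T, ∀ x : ℝ,
          Ft t x = (1/2) * deriv (fun y => deriv (fun z => primitive a (F t z)) y) x
            - deriv (fun y => primitive b (F t y)) x) := by
  exact final a b ha hb ha0 hD3 hR2a hR2b m hm3 hmbd F hF hFmem
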